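/- Let K be an algebraically closed field and suppose each Cartesian power K^n carries a Noetherian topology τ_n such that the family (τ_n) is a Zariski geometry on K and every Zariski-closed subset of K^n is τ_n-closed. Then for every n, every τ_n-closed subset of K^n is Zariski-closed; that is, the topology τ_n coincides with the Zariski topology on K^n for every n. -/

import Mathlib

open Topology

/-- A subset of `K^n` is *Zariski-closed* (an affine algebraic set) if it is the common
zero set of a set of polynomials in `n` variables. -/
def ZariskiClosedSet (K : Type*) [Field K] {n : ℕ} (C : Set (Fin n → K)) : Prop :=
  ∃ S : Set (MvPolynomial (Fin n) K), C = {x | ∀ f ∈ S, MvPolynomial.eval x f = 0}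

/-- The Zariski topology on `K^n`: the topology whose closed sets are the affine
algebraic sets. -/
def zariskiTopology (K : Type*) [Field K] (n : ℕ) : TopologicalSpace (Fin n → K) :=
  TopologicalSpace.generateFrom {U | ZariskiClosedSet K Uᶜ}

/-- The dimension of a subset `S` of a topological space: the topological Krull
dimension of `S` with the subspace topology (the maximal length of a chain of
irreducible closed subsets). -/
noncomputable def setKrullDim {X : Type*} (t : TopologicalSpace X) (S : Set X) : WithBot ℕ∞ :=
  @topologicalKrullDim S (t.induced Subtype.val)

/-- `T` is an irreducible component of `S` (w.r.t. the topology `t`) if `T` is a maximal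
irreducible subset of `S`. -/
def IsIrredComponentOf {X : Type*} (t : TopologicalSpace X) (T S : Set X) : Prop :=
  Maximal (fun T => T ⊆ S ∧ @IsIrreducible X t T) T

/-- A *Zariski geometry* on a set `X`: a Noetherian topology on each Cartesian power
`X^n` satisfying axioms (Z0)-(Z3). -/
structure ZariskiGeometry (X : Type*) where
  τ : ∀ n : ℕ, TopologicalSpace (Fin n → X)
  noetherian : ∀ n, @TopologicalSpace.NoetherianSpace (Fin n → X) (τ n)
  /-- (Z0): every map `X^n → X^m` each of whose coordinates is a constant or a
  coordinate projection is continuous. -/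
  Z0_cont : ∀ (n m : ℕ) (g : Fin m → (Fin n ⊕ X)),
    Continuous[τ n, τ m] (fun x i => Sum.elim (fun j => x j) id (g i))
  /-- (Z0): the diagonals are closed. -/
  Z0_diag : ∀ (n : ℕ) (i j : Fin n), IsClosed[τ n] {x | x i = x j}
  /-- (Z1): for a (nonempty) closed `C ⊆ X^n` and a coordinate projection
  `π : X^n → X^k`, there is a proper closed subset `F` of `cl(π C)` with
  `cl(π C) \ F ⊆ π C`. -/
  Z1 : ∀ (n k : ℕ) (h : k ≤ n) (C : Set (Fin n → X)), IsClosed[τ n] C → C.Nonempty →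
    ∃ F : Set (Fin k → X), IsClosed[τ k] F ∧
      F ⊂ closure[τ k] ((fun x => x ∘ Fin.castLE h) '' C) ∧
      closure[τ k] ((fun x => x ∘ Fin.castLE h) '' C) \ F ⊆ (fun x => x ∘ Fin.castLE h) '' C
  /-- (Z2): `X` is irreducible. -/
  Z2_irred : @IrreducibleSpace (Fin 1 → X) (τ 1)
  /-- (Z2): uniform one-dimensionality. -/
  Z2 : ∀ (n : ℕ) (C : Set (Fin (n + 1) → X)), IsClosed[τ (n + 1)] C →
    ∃ m : ℕ, ∀ a : Fin n → X, {b : X | Fin.snoc a b ∈ C} = Set.univ ∨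
      ({b : X | Fin.snoc a b ∈ C}.Finite ∧ {b : X | Fin.snoc a b ∈ C}.ncard ≤ m)
  /-- (Z3) (Dimension theorem): every irreducible component of the intersection of a
  closed irreducible `U ⊆ X^n` with a diagonal has dimension `≥ dim U - 1`. -/
  Z3 : ∀ (n : ℕ) (U : Set (Fin n → X)) (i j : Fin n), IsClosed[τ n] U →
    @IsIrreducible _ (τ n) U →
    ∀ T : Set (Fin n → X), IsIrredComponentOf (τ n) T (U ∩ {x | x i = x j}) →
      setKrullDim (τ n) U ≤ setKrullDim (τ n) T + 1

/-!
It suffices to separate a point `p` from a closed irreducible set by a polynomial and, after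
homogenizing, the closed set may be taken to be a cone `T`, say of dimension `r`. A generic linear
projection `l : T → K ^ r` is finite; let `k` be the number of points of a generic fibre. For a
linear functional `d`, the norm `s (t, x) = ∏ (t - d q)`, with the product over the points `q` of
the fibre of `T` above `x`, extends to a morphism `K ^ (r + 1) → K` that is homogeneous of degree
`k`. If `d` separates `p` from the points of `T` with the same projection, then `s (d q, l q)`
vanishes for `q` in `T` and not for `q = p`. It remains to see that `s` is a polynomial.

If the restriction of `s` to a line differed from the polynomial `P` that interpolates it at `k + 1`
points, then `s - P` would have `k + 1` zeros. Homogeneity prevents zeros from escaping to infinity,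
so these can be followed in the linear system of the `λ s - Q`, with `Q` of degree at most `k`, to a
member with `λ = 0` and only `k` zeros, all simple. Two of the zeros collide, which makes the slope
of `s` infinite at the limit point. This has to be excluded for generic lines: the `p`-th root of
`x ^ (2 * p - 1) * y` in characteristic `p` is homogeneous of degree `2` and not a polynomial. For
the norm, a generic infinite slope would mean that `l` is ramified everywhere, which a generic
projection is not.
-/

namespace ZariskiGeometry

universe u

open TopologicalSpace

section Irreducible

variable {X Y : Type*} [TopologicalSpace X] [TopologicalSpace Y]

theorem subset_or_subset_of_isIrreducible {S A B : Set X} (hS : IsIrreducible S)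
    (hA : IsClosed A) (hB : IsClosed B) (h : S ⊆ A ∪ B) : S ⊆ A ∨ S ⊆ B :=
  isPreirreducible_iff_isClosed_union_isClosed.1 hS.2 A B hA hB h

theorem exists_subset_of_isIrreducible_of_subset_sUnion {S : Set X} (hS : IsIrreducible S)
    {s : Set (Set X)} (hs : s.Finite) (hclosed : ∀ T ∈ s, IsClosed T) (h : S ⊆ ⋃₀ s) :
    ∃ T ∈ s, S ⊆ T := by
  lift s to Finset (Set X) using hs
  exact isIrreducible_iff_sUnion_isClosed.1 hS s hclosed h

theorem exists_subset_of_isIrreducible_of_subset_iUnion {ι : Type*} [Finite ι] {S : Set X}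
    (hS : IsIrreducible S) {A : ι → Set X} (hA : ∀ i, IsClosed (A i)) (h : S ⊆ ⋃ i, A i) :
    ∃ i, S ⊆ A i := by
  obtain ⟨_, ⟨i, rfl⟩, hi⟩ := exists_subset_of_isIrreducible_of_subset_sUnion hS
    (Set.finite_range A) (Set.forall_mem_range.2 hA) h
  exact ⟨i, hi⟩

theorem subset_of_isIrreducible_of_forall_notMem {S F C : Set X} (hS : IsIrreducible S)
    (hF : IsClosed F) (hSF : ¬ S ⊆ F) (hC : IsClosed C) (h : ∀ x ∈ S, x ∉ F → x ∈ C) : S ⊆ C :=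
  (subset_or_subset_of_isIrreducible hS hF hC fun x hx =>
    (em (x ∈ F)).imp_right (h x hx)).resolve_left hSF

theorem not_subset_union_of_isIrreducible {S A B : Set X} (hS : IsIrreducible S)
    (hA : IsClosed A) (hB : IsClosed B) (hSA : ¬ S ⊆ A) (hSB : ¬ S ⊆ B) : ¬ S ⊆ A ∪ B :=
  fun h => (subset_or_subset_of_isIrreducible hS hA hB h).elim hSA hSB

theorem isIrreducible_preimage_of_isInducing {f : X → Y} (hf : IsInducing f) {S : Set Y}
    (hS : IsIrreducible S) (hSf : S ⊆ Set.range f) : IsIrreducible (f ⁻¹' S) := by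
  obtain ⟨y, hy⟩ := hS.nonempty
  obtain ⟨x, rfl⟩ := hSf hy
  refine ⟨⟨x, hy⟩, ?_⟩
  rintro U V hU hV ⟨a, haS, haU⟩ ⟨b, hbS, hbV⟩
  obtain ⟨U', hU', rfl⟩ := hf.isOpen_iff.1 hU
  obtain ⟨V', hV', rfl⟩ := hf.isOpen_iff.1 hV
  obtain ⟨c, hcS, hc⟩ := hS.2 U' V' hU' hV' ⟨f a, haS, haU⟩ ⟨f b, hbS, hbV⟩
  obtain ⟨d, rfl⟩ := hSf hcS
  exact ⟨d, hcS, hc⟩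

theorem eq_singleton_of_isIrreducible_of_finite [T1Space X] {S : Set X} (hS : IsIrreducible S)
    (hfin : S.Finite) : ∃ x, S = {x} := by
  have := hfin.to_subtype
  obtain ⟨⟨x, hx⟩, hSx⟩ := exists_subset_of_isIrreducible_of_subset_iUnion hS
    (A := fun x : S => {(x : X)}) (fun _ => isClosed_singleton) fun x hx => by simpa using hx
  exact ⟨x, hSx.antisymm (Set.singleton_subset_iff.2 hx)⟩

end Irreducible

section IrreducibleComponent

variable {X Y : Type*} [t : TopologicalSpace X] [t' : TopologicalSpace Y]

theorem isClosed_of_isIrredComponentOf {C T : Set X} (hC : IsClosed C)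
    (hT : IsIrredComponentOf t T C) : IsClosed T :=
  isClosed_of_closure_subset <|
    hT.2 ⟨closure_minimal hT.1.1 hC, hT.1.2.closure⟩ subset_closure

theorem exists_isIrredComponentOf_of_subset [NoetherianSpace X] {C S : Set X} (hC : IsClosed C)
    (hS : IsIrreducible S) (hSC : S ⊆ C) : ∃ T, IsIrredComponentOf t T C ∧ S ⊆ T := by
  obtain ⟨s, hs, hclosed, hirred, rfl⟩ :=
    NoetherianSpace.exists_finite_set_isClosed_irreducible hC
  have exists_superset {S' : Set X} (hS' : IsIrreducible S') (h : S' ⊆ ⋃₀ s) : ∃ T ∈ s, S' ⊆ T :=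
    exists_subset_of_isIrreducible_of_subset_sUnion hS' hs hclosed h
  obtain ⟨T, ⟨hTs, hST⟩, hTmax⟩ :=
    (hs.subset (Set.sep_subset s (S ⊆ ·))).exists_maximal (exists_superset hS hSC)
  refine ⟨T, ⟨⟨Set.subset_sUnion_of_mem hTs, hirred T hTs⟩, fun T' hT' hTT' => ?_⟩, hST⟩
  obtain ⟨T'', hT''s, hT'T''⟩ := exists_superset hT'.2 hT'.1
  exact hT'T''.trans (hTmax ⟨hT''s, hST.trans (hTT'.trans hT'T'')⟩ (hTT'.trans hT'T''))

theorem isIrredComponentOf_image_homeomorph (e : X ≃ₜ Y) {C T : Set X}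
    (hT : IsIrredComponentOf t T C) : IsIrredComponentOf t' (e '' T) (e '' C) := by
  refine ⟨⟨Set.image_mono hT.1.1, hT.1.2.image e e.continuous.continuousOn⟩, ?_⟩
  rintro S ⟨hSC, hS⟩ hTS
  have hS' : IsIrreducible (e ⁻¹' S) :=
    isIrreducible_preimage_of_isInducing e.isInducing hS (by simp)
  have hST := hT.2 ⟨fun x hx => by simpa using hSC hx, hS'⟩ (Set.image_subset_iff.1 hTS)
  simpa using Set.image_mono (f := e) hST

end IrreducibleComponent

section Dimension

variable {X Y : Type*} [t : TopologicalSpace X] [TopologicalSpace Y]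

/-- `C` is an irreducible closed set of dimension at least `n`: it ends a strictly increasing chain
of irreducible closed sets of length `n`. -/
def DimGE : ℕ → Set X → Prop
  | 0, C => IsClosed C ∧ IsIrreducible C
  | n + 1, C => IsClosed C ∧ IsIrreducible C ∧ ∃ C' ⊂ C, DimGE n C'

/-- `C` is an irreducible closed set of dimension exactly `n`. -/
def HasDim (n : ℕ) (C : Set X) : Prop := DimGE n C ∧ ¬ DimGE (n + 1) C

variable {n : ℕ} {C D : Set X}

theorem DimGE.isClosed (h : DimGE n C) : IsClosed C := by
  cases n <;> exact h.1

theorem DimGE.isIrreducible (h : DimGE n C) : IsIrreducible C := by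
  cases n
  · exact h.2
  · exact h.2.1

theorem HasDim.isClosed (h : HasDim n C) : IsClosed C := h.1.isClosed

theorem HasDim.isIrreducible (h : HasDim n C) : IsIrreducible C := h.1.isIrreducible

theorem DimGE.mono_set (h : DimGE n C) (hD : IsClosed D) (hD' : IsIrreducible D) (hCD : C ⊆ D) :
    DimGE n D := by
  cases n with
  | zero => exact ⟨hD, hD'⟩
  | succ n =>
    obtain ⟨_, _, C', hC'C, hC'⟩ := h
    exact ⟨hD, hD', C', hC'C.trans_subset hCD, hC'⟩

theorem DimGE.mono {m : ℕ} (h : DimGE n C) (hmn : m ≤ n) : DimGE m C := by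
  induction n, hmn using Nat.le_induction with
  | base => exact h
  | succ n _ ih =>
    obtain ⟨hC, hCirr, C', hC'C, hC'⟩ := h
    exact ih (hC'.mono_set hC hCirr hC'C.subset)

theorem HasDim.eq_of_subset (hD : HasDim n D) (hC : DimGE n C) (hCD : C ⊆ D) : C = D := by
  by_contra hne
  exact hD.2 ⟨hD.isClosed, hD.isIrreducible, C, hCD.ssubset_of_ne hne, hC⟩

theorem DimGE.image {f : X → Y} (hf : Continuous f) (hinj : Set.InjOn f C)
    (hclosed : ∀ C' ⊆ C, IsClosed C' → IsClosed (f '' C')) (h : DimGE n C) :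
    DimGE n (f '' C) := by
  induction n generalizing C with
  | zero => exact ⟨hclosed C subset_rfl h.1, h.2.image f hf.continuousOn⟩
  | succ n ih =>
    obtain ⟨hC, hCirr, C', hC'C, hC'⟩ := h
    refine ⟨hclosed C subset_rfl hC, hCirr.image f hf.continuousOn, f '' C', ?_,
      ih (hinj.mono hC'C.subset) (fun T hT => hclosed T (hT.trans hC'C.subset)) hC'⟩
    exact (hinj.image_ssubset_image_iff hC'C.subset subset_rfl).2 hC'C

theorem DimGE.preimage_of_isInducing {f : Y → X} (hf : IsInducing f) (hCf : C ⊆ Set.range f)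
    (h : DimGE n C) : DimGE n (f ⁻¹' C) := by
  have preimage_zero {T : Set X} (hT : IsClosed T) (hTirr : IsIrreducible T)
      (hTf : T ⊆ Set.range f) : DimGE 0 (f ⁻¹' T) :=
    ⟨hT.preimage hf.continuous, isIrreducible_preimage_of_isInducing hf hTirr hTf⟩
  induction n generalizing C with
  | zero => exact preimage_zero h.1 h.2 hCf
  | succ n ih =>
    obtain ⟨hC, hCirr, C', hC'C, hC'⟩ := h
    obtain ⟨hclosed, hirred⟩ := preimage_zero hC hCirr hCf
    refine ⟨hclosed, hirred, f ⁻¹' C', ?_, ih (hC'C.subset.trans hCf) hC'⟩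
    refine ⟨Set.preimage_mono hC'C.subset, fun hle => hC'C.2 fun x hx => ?_⟩
    obtain ⟨y, rfl⟩ := hCf hx
    exact hle hx

theorem exists_ltSeries_of_dimGE (h : DimGE n C) :
    ∃ l : LTSeries (IrreducibleCloseds X), l.length = n ∧ (l.last : Set X) = C := by
  induction n generalizing C with
  | zero => exact ⟨RelSeries.singleton _ ⟨C, h.2, h.1⟩, rfl, rfl⟩
  | succ n ih =>
    obtain ⟨hC, hCirr, C', hC'C, hC'⟩ := h
    obtain ⟨l, hl, hlast⟩ := ih hC'
    have hlt : l.last < ⟨C, hCirr, hC⟩ := by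
      rwa [← SetLike.coe_ssubset_coe, hlast]
    exact ⟨l.snoc _ hlt, by simp [hl], by simp⟩

theorem dimGE_of_ltSeries (l : LTSeries (IrreducibleCloseds X)) (i : Fin (l.length + 1)) :
    DimGE i (l i : Set X) := by
  induction i using Fin.induction with
  | zero => exact ⟨(l 0).isClosed, (l 0).isIrreducible⟩
  | succ i ih =>
    exact ⟨(l i.succ).isClosed, (l i.succ).isIrreducible, l i.castSucc,
      SetLike.coe_ssubset_coe.2 (l.step i), ih⟩

theorem dimGE_iff_le_setKrullDim (hC : IsClosed C) (hCirr : IsIrreducible C) :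
    DimGE n C ↔ (n : WithBot ℕ∞) ≤ setKrullDim t C := by
  rw [setKrullDim, topologicalKrullDim, Order.le_krullDim_iff]
  constructor
  · intro h
    obtain ⟨l, hl, -⟩ := exists_ltSeries_of_dimGE
      (h.preimage_of_isInducing (IsInducing.subtypeVal (Y := X) (t := C)) (by simp))
    exact ⟨l, hl⟩
  · rintro ⟨l, rfl⟩
    have hval := hC.isClosedEmbedding_subtypeVal
    exact ((dimGE_of_ltSeries l (Fin.last _)).image hval.continuous hval.injective.injOn
      fun T _ hT => hval.isClosedMap T hT).mono_set hC hCirr (by simp)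

theorem not_dimGE_one_singleton (x : X) : ¬ DimGE 1 ({x} : Set X) := by
  rintro ⟨_, _, C', hC'x, hC'⟩
  exact hC'.isIrreducible.nonempty.ne_empty (Set.ssubset_singleton_iff.1 hC'x)

variable [T1Space X]

theorem dimGE_one_of_ne (hC : IsClosed C) (hCirr : IsIrreducible C) {x y : X} (hx : x ∈ C)
    (hy : y ∈ C) (hxy : x ≠ y) : DimGE 1 C := by
  refine ⟨hC, hCirr, {x}, ⟨Set.singleton_subset_iff.2 hx, fun h => hxy.symm (h hy)⟩, ?_⟩
  exact ⟨isClosed_singleton, isIrreducible_singleton⟩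

theorem eq_singleton_of_not_dimGE_one (hC : IsClosed C) (hCirr : IsIrreducible C)
    (h : ¬ DimGE 1 C) {x : X} (hx : x ∈ C) : C = {x} := by
  refine Set.Subset.antisymm (fun y hy => ?_) (Set.singleton_subset_iff.2 hx)
  by_contra hne
  exact h (dimGE_one_of_ne hC hCirr hy hx hne)

theorem not_dimGE_one_of_finite (h : C.Finite) : ¬ DimGE 1 C := by
  intro hC
  obtain ⟨x, rfl⟩ := eq_singleton_of_isIrreducible_of_finite hC.isIrreducible h
  exact not_dimGE_one_singleton x hC

end Dimension

/-- The Zariski geometry under study, as an instance, so that all Cartesian powers of `K` become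
topological spaces. -/
class HasZariskiGeometry (K : Type u) where
  geometry : ZariskiGeometry K

/-- A type identified with a finite Cartesian power of `K`. -/
class CartesianPower (K : outParam (Type u)) (X : Type u) where
  dim : ℕ
  coord : X ≃ (Fin dim → K)

open HasZariskiGeometry CartesianPower

section CartesianPower

variable {K : Type u}

instance : CartesianPower K K where
  dim := 1
  coord := (Equiv.funUnique (Fin 1) K).symm

instance {X Y : Type u} [CartesianPower K X] [CartesianPower K Y] : CartesianPower K (X × Y) where
  dim := dim X + dim Y
  coord := (coord.prodCongr coord).trans (Fin.appendEquiv (dim X) (dim Y))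

noncomputable instance {κ : Type} [Fintype κ] {X : Type u} [CartesianPower K X] :
    CartesianPower K (κ → X) where
  dim := Fintype.card κ * dim X
  coord := (Equiv.piCongrRight fun _ => coord).trans <|
    (Equiv.curry κ (Fin (dim X)) K).symm.trans <|
      Equiv.arrowCongr
        (((Fintype.equivFin κ).prodCongr (Equiv.refl _)).trans finProdFinEquiv) (Equiv.refl K)

variable {X Y W : Type u} [CartesianPower K X] [CartesianPower K Y] [CartesianPower K W]
variable {κ : Type} [Fintype κ]

theorem coord_prod_castAdd (p : X × Y) (i : Fin (dim X)) :
    coord p (Fin.castAdd (dim Y) i) = coord p.1 i :=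
  Fin.append_left _ _ i

theorem coord_prod_natAdd (p : X × Y) (i : Fin (dim Y)) :
    coord p (Fin.natAdd (dim X) i) = coord p.2 i :=
  Fin.append_right _ _ i

theorem coord_comp_castLE (p : X × Y) :
    coord p ∘ Fin.castLE (Nat.le_add_right (dim X) (dim Y)) = coord p.1 :=
  funext fun i => coord_prod_castAdd p i

theorem coord_mk_eq_snoc (x : X) (b : K) :
    coord (x, b) = (Fin.snoc (coord x) b : Fin (dim X + 1) → K) :=
  Fin.append_right_eq_snoc (coord x) (fun _ : Fin 1 => b)

theorem coord_pi (p : κ → X) (i : κ) (j : Fin (dim X)) :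
    coord p (finProdFinEquiv (Fintype.equivFin κ i, j)) = coord (p i) j := by
  simp [coord, Equiv.arrowCongr]

/-- A map each of whose coordinates is a coordinate of the source or a constant; these are the maps
in axiom (Z0). -/
def IsCoordinateMap (f : X → Y) : Prop :=
  ∀ i, (∃ j, ∀ x, coord (f x) i = coord x j) ∨ ∃ c, ∀ x, coord (f x) i = c

namespace IsCoordinateMap

theorem id : IsCoordinateMap fun x : X => x :=
  fun i => .inl ⟨i, fun _ => rfl⟩

theorem const (c : Y) : IsCoordinateMap fun _ : X => c :=
  fun _ => .inr ⟨_, fun _ => rfl⟩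

theorem comp {f : X → Y} {g : Y → W} (hg : IsCoordinateMap g) (hf : IsCoordinateMap f) :
    IsCoordinateMap fun x => g (f x) := by
  intro i
  rcases hg i with ⟨j, hj⟩ | ⟨c, hc⟩
  · simpa only [hj] using hf j
  · exact .inr ⟨c, fun x => hc _⟩

theorem fst : IsCoordinateMap (Prod.fst : X × Y → X) :=
  fun i => .inl ⟨_, fun p => (coord_prod_castAdd p i).symm⟩

theorem snd : IsCoordinateMap (Prod.snd : X × Y → Y) :=
  fun i => .inl ⟨_, fun p => (coord_prod_natAdd p i).symm⟩

theorem prodMk {f : X → Y} {g : X → W} (hf : IsCoordinateMap f) (hg : IsCoordinateMap g) :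
    IsCoordinateMap fun x => (f x, g x) := by
  intro i
  induction i using Fin.addCases with
  | left i => simpa only [coord_prod_castAdd] using hf i
  | right i => simpa only [coord_prod_natAdd] using hg i

theorem apply (i : κ) : IsCoordinateMap fun p : κ → X => p i :=
  fun j => .inl ⟨_, fun p => (coord_pi p i j).symm⟩

theorem pi {f : X → κ → Y} (hf : ∀ i, IsCoordinateMap fun x => f x i) : IsCoordinateMap f := by
  intro l
  obtain ⟨⟨i', j⟩, rfl⟩ := finProdFinEquiv.surjective l
  obtain ⟨i, rfl⟩ := (Fintype.equivFin κ).surjective i'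
  simpa only [coord_pi] using hf i j

end IsCoordinateMap

end CartesianPower

section Morphism

variable {K : Type u} [HasZariskiGeometry K]
variable {X Y W V : Type u} [CartesianPower K X] [CartesianPower K Y] [CartesianPower K W]
  [CartesianPower K V]
variable {κ : Type} [Fintype κ]

/-- The topology of the Zariski geometry on a Cartesian power; on products and function spaces it
takes precedence over the product topology, which is coarser. -/
scoped instance (priority := 2000) powerTopology : TopologicalSpace X :=
  ((geometry (K := K)).τ (dim X)).induced coord

theorem isInducing_coord :
    @IsInducing X (Fin (dim X) → K) powerTopology (geometry.τ (dim X)) coord :=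
  @IsInducing.mk _ _ (_) (_) _ rfl

/-- `coord` as a homeomorphism onto the standard power. -/
noncomputable def coordHomeomorph :
    @Homeomorph X (Fin (dim X) → K) powerTopology (geometry.τ (dim X)) :=
  letI := (geometry (K := K)).τ (dim X)
  Equiv.toHomeomorphOfIsInducing coord isInducing_coord

instance : NoetherianSpace X :=
  let _ := (geometry (K := K)).τ (dim X)
  have := (geometry (K := K)).noetherian (dim X)
  (isInducing_coord (X := X)).noetherianSpace

theorem IsCoordinateMap.continuous {f : X → Y} (hf : IsCoordinateMap f) : Continuous f := by
  let _ := (geometry (K := K)).τ (dim X)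
  let _ := (geometry (K := K)).τ (dim Y)
  have exists_source (i : Fin (dim Y)) : ∃ g : Fin (dim X) ⊕ K,
      ∀ x, coord (f x) i = Sum.elim (fun j => coord x j) _root_.id g := by
    rcases hf i with ⟨j, hj⟩ | ⟨c, hc⟩
    · exact ⟨.inl j, hj⟩
    · exact ⟨.inr c, hc⟩
  choose g hg using exists_source
  have hcont := (geometry.Z0_cont (dim X) (dim Y) g).comp (isInducing_coord (X := X)).continuous
  refine (isInducing_coord (X := Y)).continuous_iff.2 (hcont.congr fun x => ?_)
  exact funext fun i => (hg i x).symm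

/-- A map that stays continuous after taking its product with the identity of an arbitrary power;
in contrast to mere continuity, this is stable under products. -/
@[fun_prop]
def IsMorphism (f : X → Y) : Prop :=
  ∀ (V : Type u) [CartesianPower K V], Continuous fun p : V × X => (p.1, f p.2)

theorem IsCoordinateMap.isMorphism {f : X → Y} (hf : IsCoordinateMap f) : IsMorphism f :=
  fun _ _ => (IsCoordinateMap.fst.prodMk (hf.comp .snd)).continuous

namespace IsMorphism

theorem continuous {f : X → Y} (hf : IsMorphism f) : Continuous f :=
  IsCoordinateMap.snd.continuous.comp
    ((hf X).comp (IsCoordinateMap.id.prodMk .id).continuous)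

@[fun_prop]
theorem id : IsMorphism fun x : X => x := IsCoordinateMap.id.isMorphism

@[fun_prop]
theorem const (c : Y) : IsMorphism fun _ : X => c := (IsCoordinateMap.const c).isMorphism

@[fun_prop]
theorem comp {g : Y → W} {f : X → Y} (hg : IsMorphism g) (hf : IsMorphism f) :
    IsMorphism fun x => g (f x) :=
  fun V _ => (hg V).comp (hf V)

@[fun_prop]
theorem fst {f : X → Y × W} (hf : IsMorphism f) : IsMorphism fun x => (f x).1 :=
  IsCoordinateMap.fst.isMorphism.comp hf

@[fun_prop]
theorem snd {f : X → Y × W} (hf : IsMorphism f) : IsMorphism fun x => (f x).2 :=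
  IsCoordinateMap.snd.isMorphism.comp hf

@[fun_prop]
theorem prodMk {f : X → Y} {g : X → W} (hf : IsMorphism f) (hg : IsMorphism g) :
    IsMorphism fun x => (f x, g x) := by
  intro V _
  have hdup : IsCoordinateMap fun p : V × X => ((p.1, p.2), p.2) :=
    .prodMk (.prodMk .fst .snd) .snd
  have hswap : IsCoordinateMap fun p : (V × X) × Y => ((p.1.1, p.2), p.1.2) :=
    .prodMk (.prodMk (.comp .fst .fst) .snd) (.comp .snd .fst)
  have hassoc : IsCoordinateMap fun p : (V × Y) × W => (p.1.1, p.1.2, p.2) :=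
    .prodMk (.comp .fst .fst) (.prodMk (.comp .snd .fst) .snd)
  exact hassoc.continuous.comp <| (hg (V × Y)).comp <| hswap.continuous.comp <|
    (hf (V × X)).comp hdup.continuous

@[fun_prop]
theorem apply (i : κ) : IsMorphism fun p : κ → X => p i := (IsCoordinateMap.apply i).isMorphism

@[fun_prop]
theorem optionElim {ι : Type*} {f : X → Y} {g : X → ι → Y} (hf : IsMorphism f)
    (hg : ∀ i, IsMorphism fun x => g x i) (o : Option ι) :
    IsMorphism fun x => o.elim (f x) (g x) := by
  cases o with
  | none => exact hf
  | some i => exact hg i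

@[fun_prop]
theorem pi {f : X → κ → Y} (hf : ∀ i, IsMorphism fun x => f x i) : IsMorphism f := by
  classical
  rcases isEmpty_or_nonempty X with hX | ⟨⟨x₀⟩⟩
  · exact fun V _ => continuous_of_discreteTopology
  suffices h : ∀ s : Finset κ, IsMorphism fun x i => if i ∈ s then f x i else f x₀ i by
    simpa using h Finset.univ
  intro s
  induction s using Finset.induction_on with
  | empty => simpa using const (f x₀)
  | insert a s _ ih =>
    have hupdate : IsCoordinateMap fun p : (κ → Y) × Y => Function.update p.1 a p.2 := by
      refine .pi fun i => ?_
      by_cases h : i = a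
      · simpa only [h, Function.update_self] using IsCoordinateMap.snd
      · simpa only [Function.update_of_ne h] using (IsCoordinateMap.apply i).comp .fst
    convert hupdate.isMorphism.comp (ih.prodMk (hf a)) using 3 with x i
    by_cases h : i = a <;> simp [h]

end IsMorphism

theorem isClosed_setOf_mem {f : X → Y} {C : Set Y} (hC : IsClosed C) (hf : IsMorphism f) :
    IsClosed {x | f x ∈ C} :=
  hC.preimage hf.continuous

theorem isClosed_setOf_coord_eq (i j : Fin (dim X)) : IsClosed {x : X | coord x i = coord x j} :=
  let _ := (geometry (K := K)).τ (dim X)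
  (geometry.Z0_diag (dim X) i j).preimage (isInducing_coord (X := X)).continuous

theorem isClosed_diagonal : IsClosed (Set.diagonal X) := by
  have hdiag : Set.diagonal X = {p : X × X |
      ∀ i, coord p (Fin.castAdd _ i) = coord p (Fin.natAdd _ i)} := by
    ext p
    simp only [coord_prod_castAdd, coord_prod_natAdd, Set.mem_ofPred_eq, ← funext_iff,
      Equiv.apply_eq_iff_eq, Set.mem_diagonal_iff]
  rw [hdiag, Set.ofPred_forall]
  exact isClosed_iInter fun i => isClosed_setOf_coord_eq (X := X × X) _ _

theorem isClosed_setOf_eq {f g : X → Y} (hf : IsMorphism f) (hg : IsMorphism g) :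
    IsClosed {x | f x = g x} :=
  isClosed_setOf_mem isClosed_diagonal (hf.prodMk hg)

instance : T1Space X := ⟨fun c => isClosed_setOf_eq .id (.const c)⟩

end Morphism

section GeometryProperties

variable {K : Type u} [HasZariskiGeometry K]
variable {X Y : Type u} [CartesianPower K X] [CartesianPower K Y]

theorem isIrreducible_univ_base : IsIrreducible (Set.univ : Set K) := by
  let _ := (geometry (K := K)).τ (dim K)
  have hirr : IsIrreducible (Set.univ : Set (Fin (dim K) → K)) :=
    (@irreducibleSpace_def _ (_)).1 geometry.Z2_irred
  simpa using isIrreducible_preimage_of_isInducing (isInducing_coord (X := K)) hirr (by simp)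

theorem exists_isClosed_closure_fst_image_diff_subset {C : Set (X × Y)} (hC : IsClosed C)
    (hne : C.Nonempty) : ∃ F : Set X, IsClosed F ∧ ¬ closure (Prod.fst '' C) ⊆ F ∧
      ∀ x ∈ closure (Prod.fst '' C), x ∉ F → ∃ y, (x, y) ∈ C := by
  let _ := (geometry (K := K)).τ (dim X)
  let _ := (geometry (K := K)).τ (dim (X × Y))
  let e : X ≃ₜ (Fin (dim X) → K) := coordHomeomorph
  let e' : X × Y ≃ₜ (Fin (dim (X × Y)) → K) := coordHomeomorph
  obtain ⟨F, hF, hproper, hsub⟩ := geometry.Z1 _ _ (Nat.le_add_right (dim X) (dim Y)) (e' '' C)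
    (e'.isClosedMap C hC) (hne.image _)
  have himage : (fun y => y ∘ Fin.castLE (Nat.le_add_right (dim X) (dim Y))) '' (e' '' C) =
      e '' (Prod.fst '' C) := by
    simp only [Set.image_image]
    exact Set.image_congr fun p _ => coord_comp_castLE p
  rw [himage, ← e.image_closure] at hproper hsub
  refine ⟨e ⁻¹' F, hF.preimage e.continuous, ?_, fun x hx hxF => ?_⟩
  · exact fun h => hproper.2 (Set.image_subset_iff.2 h)
  · obtain ⟨_, ⟨⟨x, y⟩, hC, rfl⟩, hxy⟩ := hsub ⟨Set.mem_image_of_mem e hx, hxF⟩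
    exact ⟨y, e.injective hxy ▸ hC⟩

theorem exists_ncard_fibre_le {C : Set (X × K)} (hC : IsClosed C) : ∃ m : ℕ, ∀ a : X,
    (∀ b, (a, b) ∈ C) ∨ ({b : K | (a, b) ∈ C}.Finite ∧ {b : K | (a, b) ∈ C}.ncard ≤ m) := by
  let _ := (geometry (K := K)).τ (dim (X × K))
  let e : X × K ≃ₜ (Fin (dim (X × K)) → K) := coordHomeomorph
  obtain ⟨m, hm⟩ := geometry.Z2 (dim X) (e '' C) (e.isClosedMap C hC)
  refine ⟨m, fun a => ?_⟩
  have hfibre : {b : K | (Fin.snoc (coord a) b : Fin (dim X + 1) → K) ∈ e '' C} =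
      {b | (a, b) ∈ C} := by
    ext b
    simp only [Set.mem_ofPred_eq, ← coord_mk_eq_snoc]
    exact e.injective.mem_set_image
  simpa only [hfibre, Set.eq_univ_iff_forall, Set.mem_ofPred_eq] using hm (coord a)

theorem DimGE.of_isIrredComponentOf_inter_coord_eq {n : ℕ} {U T : Set X} (hU : DimGE (n + 1) U)
    (i j : Fin (dim X))
    (hT : IsIrredComponentOf powerTopology T (U ∩ {x | coord x i = coord x j})) :
    DimGE n T := by
  let _ := (geometry (K := K)).τ (dim X)
  let e : X ≃ₜ (Fin (dim X) → K) := coordHomeomorph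
  have hTclosed : IsClosed T :=
    isClosed_of_isIrredComponentOf (hU.isClosed.inter (isClosed_setOf_coord_eq i j)) hT
  have himage : e '' (U ∩ {x | coord x i = coord x j}) = e '' U ∩ {y | y i = y j} := by
    ext y
    obtain ⟨x, rfl⟩ := e.surjective y
    simp [e, coordHomeomorph]
  have hdim {m : ℕ} {S : Set X} (hS : DimGE m S) : DimGE m (e '' S) :=
    hS.image e.continuous e.injective.injOn fun C _ hC => e.isClosedMap C hC
  have hle := geometry.Z3 _ _ i j (hdim hU).isClosed (hdim hU).isIrreducible (e '' T)
    (himage ▸ isIrredComponentOf_image_homeomorph e hT)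
  have heT : DimGE 0 (e '' T) := hdim ⟨hTclosed, hT.1.2⟩
  have hn : (n : WithBot ℕ∞) + 1 ≤ setKrullDim (geometry.τ (dim X)) (e '' T) + 1 :=
    le_trans (by exact_mod_cast
      (dimGE_iff_le_setKrullDim (hdim hU).isClosed (hdim hU).isIrreducible).1 (hdim hU)) hle
  have heTn : DimGE n (e '' T) := (dimGE_iff_le_setKrullDim heT.isClosed heT.isIrreducible).2
    (ENat.WithBot.add_le_add_natCast_right_iff.1 hn)
  simpa using heTn.preimage_of_isInducing e.isInducing (by simp)

end GeometryProperties

section Cutting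

variable {K : Type u} [HasZariskiGeometry K]
variable {X Y : Type u} [CartesianPower K X] [CartesianPower K Y]

theorem isMorphism_coord (i : Fin (dim X)) : IsMorphism fun x : X => coord x i :=
  IsCoordinateMap.isMorphism fun _ => .inl ⟨i, fun _ => rfl⟩

theorem isClosed_image_of_leftInverse {f : X → Y} {π : Y → X} (hf : IsMorphism f)
    (hπ : IsMorphism π) (hπf : Function.LeftInverse π f) {S : Set X} (hS : IsClosed S) :
    IsClosed (f '' S) := by
  have himage : f '' S = {y | π y ∈ S} ∩ {y | f (π y) = y} := by
    ext y
    refine ⟨?_, fun ⟨hy, hfy⟩ => ⟨π y, hy, hfy⟩⟩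
    rintro ⟨x, hx, rfl⟩
    exact ⟨(congrArg (· ∈ S) (hπf x)).mpr hx, congrArg f (hπf x)⟩
  rw [himage]
  exact (isClosed_setOf_mem hS hπ).inter (isClosed_setOf_eq (hf.comp hπ) .id)

theorem DimGE.image_of_leftInverse {f : X → Y} {π : Y → X} (hf : IsMorphism f)
    (hπ : IsMorphism π) (hπf : Function.LeftInverse π f) {S : Set X} {n : ℕ} (hS : DimGE n S) :
    DimGE n (f '' S) :=
  hS.image hf.continuous hπf.injective.injOn fun _ _ => isClosed_image_of_leftInverse hf hπ hπf

theorem exists_isClosed_closure_image_diff_subset {S : Set X} (hS : IsClosed S)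
    (hne : S.Nonempty) {f : X → Y} (hf : IsMorphism f) :
    ∃ F : Set Y, IsClosed F ∧ ¬ closure (f '' S) ⊆ F ∧
      ∀ y ∈ closure (f '' S), y ∉ F → ∃ x ∈ S, f x = y := by
  obtain ⟨F, hF, hproper, hlift⟩ :=
    exists_isClosed_closure_fst_image_diff_subset
      (isClosed_image_of_leftInverse (f := fun x => (f x, x)) (by fun_prop) (.snd .id)
        (fun _ => rfl) hS) (hne.image _)
  have hfst : Prod.fst '' ((fun x => (f x, x)) '' S) = f '' S := Set.image_image _ _ _
  rw [hfst] at hproper hlift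
  refine ⟨F, hF, hproper, fun y hy hyF => ?_⟩
  obtain ⟨_, x, hx, hxy⟩ := hlift y hy hyF
  exact ⟨x, hx, congrArg Prod.fst hxy⟩

theorem exists_dimGE_subset_eqOn_base {f g : X → K} (hf : IsMorphism f) (hg : IsMorphism g)
    {U : Set X} {n : ℕ} (hU : DimGE (n + 1) U) {p : X} (hp : p ∈ U) (hfg : f p = g p) :
    ∃ T, DimGE n T ∧ p ∈ T ∧ T ⊆ U ∧ Set.EqOn f g T := by
  let γ : X → (K × K) × X := fun x => ((f x, g x), x)
  have hγ : IsMorphism γ := by fun_prop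
  have hγU : DimGE (n + 1) (γ '' U) := hU.image_of_leftInverse hγ (.snd .id) fun _ => rfl
  let i : Fin (dim ((K × K) × X)) := Fin.castAdd (dim X) (Fin.castAdd (dim K) 0)
  let j : Fin (dim ((K × K) × X)) := Fin.castAdd (dim X) (Fin.natAdd (dim K) 0)
  have hi (q : (K × K) × X) : coord q i = q.1.1 := by
    rw [coord_prod_castAdd, coord_prod_castAdd]; rfl
  have hj (q : (K × K) × X) : coord q j = q.1.2 := by
    rw [coord_prod_castAdd, coord_prod_natAdd]; rfl
  obtain ⟨T, hT, hpT⟩ := exists_isIrredComponentOf_of_subset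
    (hγU.isClosed.inter (isClosed_setOf_coord_eq i j)) (isIrreducible_singleton (x := γ p))
    (Set.singleton_subset_iff.2 ⟨⟨p, hp, rfl⟩, by simp only [Set.mem_ofPred_eq, hi, hj]; exact hfg⟩)
  have hTn : DimGE n T := hγU.of_isIrredComponentOf_inter_coord_eq i j hT
  have hTγ {q : (K × K) × X} (hq : q ∈ T) : γ q.2 = q := by
    obtain ⟨⟨x, -, rfl⟩, -⟩ := hT.1.1 hq
    rfl
  have himage {C : Set ((K × K) × X)} (hC : C ⊆ T) : Prod.snd '' C = γ ⁻¹' C := by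
    ext x
    exact ⟨fun ⟨q, hq, hqx⟩ => hqx ▸ (hTγ (hC hq)).symm ▸ hq, fun hx => ⟨_, hx, rfl⟩⟩
  refine ⟨Prod.snd '' T, hTn.image (IsMorphism.snd .id).continuous
    (fun q hq q' hq' h => by rw [← hTγ hq, ← hTγ hq', h])
    (fun C hCT hC => himage hCT ▸ hC.preimage hγ.continuous),
    ⟨γ p, hpT rfl, rfl⟩, ?_, ?_⟩
  · rintro _ ⟨q, hq, rfl⟩
    obtain ⟨⟨x, hx, rfl⟩, -⟩ := hT.1.1 hq
    exact hx
  · rintro _ ⟨q, hq, rfl⟩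
    obtain ⟨⟨x, -, rfl⟩, hxij⟩ := hT.1.1 hq
    simpa only [Set.mem_ofPred_eq, hi, hj] using hxij

theorem exists_dimGE_subset_eqOn {f g : X → Y} (hf : IsMorphism f) (hg : IsMorphism g)
    {U : Set X} {n : ℕ} (hU : DimGE (n + dim Y) U) {p : X} (hp : p ∈ U) (hfg : f p = g p) :
    ∃ T, DimGE n T ∧ p ∈ T ∧ T ⊆ U ∧ Set.EqOn f g T := by
  have cut_coords (s : Finset (Fin (dim Y))) (n : ℕ) (hU : DimGE (n + s.card) U) :
      ∃ T, DimGE n T ∧ p ∈ T ∧ T ⊆ U ∧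
        ∀ i ∈ s, Set.EqOn (fun x => coord (f x) i) (fun x => coord (g x) i) T := by
    induction s using Finset.induction_on generalizing n with
    | empty => exact ⟨U, hU, hp, subset_rfl, by simp⟩
    | insert i s hi ih =>
      rw [Finset.card_insert_of_notMem hi] at hU
      obtain ⟨T, hT, hpT, hTU, hTs⟩ := ih (n + 1) (hU.mono (by omega))
      obtain ⟨T', hT', hpT', hT'T, hT'i⟩ := exists_dimGE_subset_eqOn_base
        ((isMorphism_coord i).comp hf) ((isMorphism_coord i).comp hg) hT hpT (by rw [hfg])
      exact ⟨T', hT', hpT', hT'T.trans hTU,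
        Finset.forall_mem_insert _ _ _ |>.2 ⟨hT'i, fun k hk => (hTs k hk).mono hT'T⟩⟩
  obtain ⟨T, hT, hpT, hTU, heq⟩ := cut_coords Finset.univ n (by simpa using hU)
  exact ⟨T, hT, hpT, hTU, fun x hx =>
    (coord : Y ≃ _).injective (funext fun i => heq i (Finset.mem_univ i) hx)⟩

theorem not_dimGE_dim_add_one {U : Set X} : ¬ DimGE (dim X + 1) U := by
  intro hU
  obtain ⟨p, hp⟩ := hU.isIrreducible.nonempty
  obtain ⟨T, hT, -, -, heq⟩ :=
    exists_dimGE_subset_eqOn (n := 1) .id (.const p) (add_comm 1 _ ▸ hU) hp rfl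
  exact not_dimGE_one_of_finite ((Set.finite_singleton p).subset heq) hT

theorem exists_hasDim {U : Set X} (hU : IsClosed U) (hUirr : IsIrreducible U) :
    ∃ r, HasDim r U := by
  by_contra! hnot
  have hall (n : ℕ) : DimGE n U := by
    induction n with
    | zero => exact ⟨hU, hUirr⟩
    | succ n ih => exact not_not.1 fun h => hnot n ⟨ih, h⟩
  exact not_dimGE_dim_add_one (hall _)

end Cutting

section Product

variable {K : Type u} [HasZariskiGeometry K]
variable {X Y : Type u} [CartesianPower K X] [CartesianPower K Y]

theorem isClosed_prod {A : Set X} {B : Set Y} (hA : IsClosed A) (hB : IsClosed B) :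
    IsClosed (A ×ˢ B) :=
  (isClosed_setOf_mem hA (.fst .id)).inter (isClosed_setOf_mem hB (.snd .id))

theorem isIrreducible_prod {A : Set X} {B : Set Y} (hA : IsIrreducible A)
    (hB : IsIrreducible B) : IsIrreducible (A ×ˢ B) := by
  refine ⟨hA.nonempty.prod hB.nonempty,
    isPreirreducible_iff_isClosed_union_isClosed.2 fun C D hC hD hCD => ?_⟩
  have hclosed {E : Set (X × Y)} (hE : IsClosed E) : IsClosed {a : X | ∀ b ∈ B, (a, b) ∈ E} := by
    simp only [Set.ofPred_forall]
    exact isClosed_iInter fun b => isClosed_iInter fun _ => isClosed_setOf_mem hE (by fun_prop)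
  have hsub : A ⊆ {a | ∀ b ∈ B, (a, b) ∈ C} ∪ {a | ∀ b ∈ B, (a, b) ∈ D} := fun a ha => by
    have hslice : IsIrreducible ((fun b => (a, b)) '' B) :=
      hB.image _ (IsMorphism.prodMk (.const a) .id).continuous.continuousOn
    have hsliceCD : (fun b => (a, b)) '' B ⊆ C ∪ D :=
      Set.image_subset_iff.2 fun b hb => hCD ⟨ha, hb⟩
    exact (subset_or_subset_of_isIrreducible hslice hC hD hsliceCD).imp
      Set.image_subset_iff.1 Set.image_subset_iff.1
  exact (subset_or_subset_of_isIrreducible hA (hclosed hC) (hclosed hD) hsub).imp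
    (fun h p hp => h hp.1 p.2 hp.2) fun h p hp => h hp.1 p.2 hp.2

theorem DimGE.prod {A : Set X} {B : Set Y} {m n : ℕ} (hA : DimGE m A) (hB : DimGE n B) :
    DimGE (m + n) (A ×ˢ B) := by
  induction n generalizing B with
  | zero =>
    induction m generalizing A with
    | zero => exact ⟨isClosed_prod hA.1 hB.1, isIrreducible_prod hA.2 hB.2⟩
    | succ m ih =>
      obtain ⟨hAcl, hAirr, A', hA'A, hA'⟩ := hA
      rw [add_right_comm]
      refine ⟨isClosed_prod hAcl hB.1, isIrreducible_prod hAirr hB.2, A' ×ˢ B, ?_, ih hA'⟩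
      exact ⟨Set.prod_mono hA'A.subset subset_rfl,
        mt (Set.prod_subset_prod_iff_left hB.2.nonempty).1 hA'A.2⟩
  | succ n ih =>
    obtain ⟨hBcl, hBirr, B', hB'B, hB'⟩ := hB
    refine ⟨isClosed_prod hA.isClosed hBcl, isIrreducible_prod hA.isIrreducible hBirr,
      A ×ˢ B', ?_, ih hB'⟩
    exact ⟨Set.prod_mono subset_rfl hB'B.subset,
      mt (Set.prod_subset_prod_iff_right hA.isIrreducible.nonempty).1 hB'B.2⟩

theorem DimGE.image_equiv {n : ℕ} {C : Set X} (h : DimGE n C) (e : X ≃ Y) (he : IsMorphism e)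
    (he' : IsMorphism e.symm) : DimGE n (e '' C) :=
  h.image he.continuous e.injective.injOn
    fun C' _ hC' => e.image_eq_preimage_symm C' ▸ hC'.preimage he'.continuous

theorem DimGE.pi_fin {r : ℕ} {C : Set X} (hC : DimGE r C) (n : ℕ) :
    DimGE (n * r) {w : Fin n → X | ∀ i, w i ∈ C} := by
  induction n with
  | zero =>
    have hsingleton : {w : Fin 0 → X | ∀ i, w i ∈ C} = {default} :=
      Set.eq_singleton_iff_unique_mem.2 ⟨fun i => i.elim0, fun w _ => Subsingleton.elim w _⟩
    rw [zero_mul, hsingleton]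
    exact ⟨isClosed_singleton, isIrreducible_singleton⟩
  | succ n ih =>
    have himage := (hC.prod ih).image_equiv (Fin.consEquiv fun _ => X)
      (.pi fun i => ?_) ((IsMorphism.apply 0).prodMk (.pi fun i => .apply i.succ))
    · rw [Equiv.image_eq_preimage_symm] at himage
      convert himage using 1
      · ring
      · ext w
        exact Fin.forall_fin_succ
    · cases i using Fin.cases with
      | zero => exact .fst .id
      | succ i => exact (IsMorphism.apply i).comp (.snd .id)

variable [Nontrivial K]

theorem dimGE_univ_base : DimGE 1 (Set.univ : Set K) := by
  obtain ⟨x, y, hxy⟩ := exists_pair_ne K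
  exact dimGE_one_of_ne isClosed_univ isIrreducible_univ_base trivial trivial hxy

theorem dimGE_univ : DimGE (dim X) (Set.univ : Set X) := by
  have hpower : DimGE (dim X) (Set.univ : Set (Fin (dim X) → K)) := by
    simpa using dimGE_univ_base.pi_fin (dim X)
  have himage := hpower.image_equiv (coord : X ≃ _).symm ?_ (.pi isMorphism_coord)
  · rwa [Set.image_univ_of_surjective (Equiv.surjective _)] at himage
  · refine IsCoordinateMap.isMorphism fun i => ?_
    simp only [Equiv.apply_symm_apply]
    exact IsCoordinateMap.apply (X := K) i 0

theorem hasDim_univ : HasDim (dim X) (Set.univ : Set X) :=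
  ⟨dimGE_univ, not_dimGE_dim_add_one⟩

theorem isIrreducible_univ : IsIrreducible (Set.univ : Set X) :=
  dimGE_univ.isIrreducible

theorem DimGE.eq_univ {C : Set X} (hC : DimGE (dim X) C) : C = Set.univ :=
  hasDim_univ.eq_of_subset hC (Set.subset_univ C)

end Product

section Coordinates

variable {K : Type u} {Y : Type u} [CartesianPower K Y]

theorem exists_coord_ne {x y : Y} (hxy : x ≠ y) : ∃ i, coord x i ≠ coord y i :=
  Function.ne_iff.1 ((coord : Y ≃ _).injective.ne hxy)

theorem finite_of_forall_finite_coord_image {S : Set Y}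
    (hS : ∀ j, ((fun y => coord y j) '' S).Finite) : S.Finite := by
  refine Set.Finite.of_finite_image ((Set.Finite.pi hS).subset ?_) (coord : Y ≃ _).injective.injOn
  rintro _ ⟨y, hy, rfl⟩ j -
  exact ⟨y, hy, rfl⟩

/-- The projection of a Cartesian power onto a set `I` of its coordinates. -/
def coordProj (I : Finset (Fin (dim Y))) (y : Y) : I → K := fun i => coord y i

end Coordinates

section Image

variable {K : Type u} [HasZariskiGeometry K]
variable {X Y : Type u} [CartesianPower K X] [CartesianPower K Y]

theorem exists_isIrreducible_closure_image_eq {S : Set X} (hS : IsClosed S) {f : X → Y}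
    {T F : Set Y} (hT : IsClosed T) (hTirr : IsIrreducible T) (hF : IsClosed F) (hTF : ¬ T ⊆ F)
    (hlift : ∀ y ∈ T, y ∉ F → ∃ x ∈ S, f x = y) (hST : Set.MapsTo f S T) :
    ∃ S' ⊆ S, IsClosed S' ∧ IsIrreducible S' ∧ closure (f '' S') = T := by
  obtain ⟨s, hs, hclosed, hirred, rfl⟩ :=
    NoetherianSpace.exists_finite_set_isClosed_irreducible hS
  have hcover : T ⊆ ⋃₀ ((fun S' => closure (f '' S')) '' s) := by
    refine subset_of_isIrreducible_of_forall_notMem hTirr hF hTF ?_ fun y hy hyF => ?_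
    · rw [Set.sUnion_image]
      exact hs.isClosed_biUnion fun _ _ => isClosed_closure
    · obtain ⟨x, ⟨S', hS', hx⟩, rfl⟩ := hlift y hy hyF
      exact ⟨_, ⟨S', hS', rfl⟩, subset_closure ⟨x, hx, rfl⟩⟩
  obtain ⟨_, ⟨S', hS', rfl⟩, hTS'⟩ := exists_subset_of_isIrreducible_of_subset_sUnion hTirr
    (hs.image _) (Set.forall_mem_image.2 fun _ _ => isClosed_closure) hcover
  have hS's : S' ⊆ ⋃₀ s := Set.subset_sUnion_of_mem hS'
  exact ⟨S', hS's, hclosed S' hS', hirred S' hS',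
    (closure_minimal (hST.mono_left hS's).image_subset hT).antisymm hTS'⟩

theorem DimGE.of_closure_image {S : Set X} (hS : IsClosed S) (hSirr : IsIrreducible S)
    {f : X → Y} (hf : IsMorphism f) {n : ℕ} (h : DimGE n (closure (f '' S))) : DimGE n S := by
  induction n generalizing S with
  | zero => exact ⟨hS, hSirr⟩
  | succ n ih =>
    obtain ⟨F, hF, hproper, hlift⟩ :=
      exists_isClosed_closure_image_diff_subset hS hSirr.nonempty hf
    obtain ⟨b, hb, hbF⟩ := Set.not_subset.1 hproper
    obtain ⟨c, hc, hcb⟩ : ∃ c ∈ closure (f '' S), c ≠ b := by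
      by_contra! hsub
      exact not_dimGE_one_of_finite ((Set.finite_singleton b).subset hsub) (h.mono (by omega))
    obtain ⟨i, hi⟩ := exists_coord_ne hcb
    obtain ⟨T, hT, hbT, hTS, hTi⟩ :=
      exists_dimGE_subset_eqOn_base (isMorphism_coord i) (.const (coord b i)) h hb rfl
    obtain ⟨S', hS'sub, hS', hS'irr, hS'T⟩ := exists_isIrreducible_closure_image_eq
      (hS.inter (hT.isClosed.preimage hf.continuous)) hT.isClosed hT.isIrreducible hF
      (fun hTF => hbF (hTF hbT))
      (fun y hy hyF => by
        obtain ⟨x, hx, rfl⟩ := hlift y (hTS hy) hyF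
        exact ⟨x, ⟨hx, hy⟩, rfl⟩)
      fun x hx => hx.2
    refine ⟨hS, hSirr, S', ⟨hS'sub.trans Set.inter_subset_left, fun hSS' => hi ?_⟩,
      ih hS' hS'irr (hS'T ▸ hT)⟩
    exact hTi (hS'T ▸ closure_mono (Set.image_mono hSS') hc)

end Image

section CoordinateProjection

variable {K : Type u} [HasZariskiGeometry K] {Y : Type u} [CartesianPower K Y]

theorem isMorphism_coordProj (I : Finset (Fin (dim Y))) : IsMorphism (coordProj (Y := Y) I) :=
  .pi fun i => isMorphism_coord i.1

theorem closure_coordProj_insert_image_eq_univ {I : Finset (Fin (dim Y))} {j : Fin (dim Y)}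
    {A : Set Y} (hA : closure ((fun y => (coordProj I y, coord y j)) '' A) = Set.univ) :
    closure (coordProj (insert j I) '' A) = Set.univ := by
  let θ : (I → K) × K → {i // i ∈ insert j I} → K :=
    fun p i => if hi : i.1 ∈ I then p.1 ⟨i, hi⟩ else p.2
  have hθ : IsMorphism θ := .pi fun i => by
    by_cases hi : i.1 ∈ I
    · simpa only [θ, hi, dite_true] using (IsMorphism.apply _).comp (.fst .id)
    · simpa only [θ, hi, dite_false] using IsMorphism.snd .id
  have eq_of_notMem (i : {i // i ∈ insert j I}) (hi : i.1 ∉ I) : i.1 = j :=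
    (Finset.mem_insert.1 i.2).resolve_right hi
  have hθproj (y : Y) : θ (coordProj I y, coord y j) = coordProj (insert j I) y := by
    ext i
    by_cases hi : i.1 ∈ I
    · simp [θ, hi, coordProj]
    · simp [θ, coordProj, eq_of_notMem i hi]
  have hθsurj : Function.Surjective θ := fun q => by
    refine ⟨(fun i => q ⟨i, Finset.mem_insert_of_mem i.2⟩, q ⟨j, Finset.mem_insert_self j I⟩), ?_⟩
    ext i
    by_cases hi : i.1 ∈ I
    · simp [θ, hi]
    · simp only [θ, hi, dite_false]
      exact congrArg q (Subtype.ext (eq_of_notMem i hi).symm)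
  rw [← Set.univ_subset_iff, ← Set.image_univ_of_surjective hθsurj, ← hA]
  refine (image_closure_subset_closure_image hθ.continuous).trans (closure_mono ?_)
  rw [Set.image_image]
  exact (Set.image_congr fun y _ => hθproj y).subset

theorem exists_isClosed_finite_coord_image {I : Finset (Fin (dim Y))} {j : Fin (dim Y)}
    {A : Set Y} (hA : closure ((fun y => (coordProj I y, coord y j)) '' A) ≠ Set.univ) :
    ∃ G : Set (I → K), IsClosed G ∧ G ≠ Set.univ ∧
      ∀ a ∉ G, ((fun y => coord y j) '' {y ∈ A | coordProj I y = a}).Finite := by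
  set C := closure ((fun y => (coordProj I y, coord y j)) '' A)
  refine ⟨{a | ∀ b, (a, b) ∈ C}, ?_, fun hall => hA ?_, fun a ha => ?_⟩
  · simp only [Set.ofPred_forall]
    exact isClosed_iInter fun b => isClosed_setOf_mem isClosed_closure (by fun_prop)
  · exact Set.eq_univ_of_forall fun p => Set.eq_univ_iff_forall.1 hall p.1 p.2
  · obtain ⟨m, hm⟩ := exists_ncard_fibre_le (isClosed_closure : IsClosed C)
    refine ((hm a).resolve_left ha).1.subset ?_
    rintro _ ⟨y, ⟨hy, rfl⟩, rfl⟩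
    exact subset_closure ⟨y, hy, rfl⟩

theorem exists_coordProj_dominant_finite_fibres [Nontrivial K] {A : Set Y} (hA : A.Nonempty) :
    ∃ I : Finset (Fin (dim Y)), closure (coordProj I '' A) = Set.univ ∧
      ∃ G : Set (I → K), IsClosed G ∧ G ≠ Set.univ ∧
        ∀ a ∉ G, {y ∈ A | coordProj I y = a}.Finite := by
  have hempty : closure (coordProj (∅ : Finset (Fin (dim Y))) '' A) = Set.univ := by
    rw [Subsingleton.eq_univ_of_nonempty (hA.image _), closure_univ]
  obtain ⟨I, hI, hImax⟩ := (Set.toFinite {I : Finset (Fin (dim Y)) |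
    closure (coordProj I '' A) = Set.univ}).exists_maximal ⟨∅, hempty⟩
  have exists_bad (j : Fin (dim Y)) : ∃ G : Set (I → K), IsClosed G ∧ G ≠ Set.univ ∧
      ∀ a ∉ G, ((fun y => coord y j) '' {y ∈ A | coordProj I y = a}).Finite := by
    by_cases hj : j ∈ I
    · refine ⟨∅, isClosed_empty, Set.empty_ne_univ, fun a _ => ?_⟩
      refine (Set.finite_singleton (a ⟨j, hj⟩)).subset ?_
      rintro _ ⟨y, ⟨-, rfl⟩, rfl⟩
      rfl
    · exact exists_isClosed_finite_coord_image fun h =>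
        hj (hImax (closure_coordProj_insert_image_eq_univ h) (Finset.subset_insert j I)
          (Finset.mem_insert_self j I))
  choose G hG hGne hGfin using exists_bad
  refine ⟨I, hI, ⋃ j, G j, isClosed_iUnion_of_finite hG, fun hcover => ?_, fun a ha => ?_⟩
  · obtain ⟨j, hj⟩ :=
      exists_subset_of_isIrreducible_of_subset_iUnion isIrreducible_univ hG hcover.symm.subset
    exact hGne j (Set.univ_subset_iff.1 hj)
  · exact finite_of_forall_finite_coord_image fun j =>
      hGfin j a fun h => ha (Set.mem_iUnion_of_mem j h)

end CoordinateProjection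

section FiniteFibres

variable {K : Type u} [HasZariskiGeometry K] [Nontrivial K]
variable {X Y W V : Type u} [CartesianPower K X] [CartesianPower K Y] [CartesianPower K W]
  [CartesianPower K V]
variable {n : ℕ}

theorem DimGE.closure_image_of_finite_fibres {S : Set X} {f : X → Y} (hf : IsMorphism f)
    (hS : DimGE n S) (hfin : ∀ y, {x ∈ S | f x = y}.Finite) : DimGE n (closure (f '' S)) := by
  obtain ⟨I, hI, G, hG, hGne, hGfin⟩ :=
    exists_coordProj_dominant_finite_fibres (hS.isIrreducible.nonempty.image f)
  rw [Set.image_image] at hI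
  have hIf : IsMorphism fun x => coordProj I (f x) := (isMorphism_coordProj I).comp hf
  have hdimI : dim (I → K) = I.card := by
    rw [show dim (I → K) = Fintype.card I * 1 from rfl, mul_one, Fintype.card_coe]
  have hn : n ≤ I.card := by
    obtain ⟨F, hF, hproper, hlift⟩ :=
      exists_isClosed_closure_image_diff_subset hS.isClosed hS.isIrreducible.nonempty hIf
    rw [hI] at hproper hlift
    obtain ⟨a, -, ha⟩ := Set.not_subset.1 (not_subset_union_of_isIrreducible isIrreducible_univ
      hF hG hproper (mt Set.univ_subset_iff.1 hGne))
    obtain ⟨p, hp, hpa⟩ := hlift a trivial (mt Or.inl ha)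
    by_contra! hlt
    obtain ⟨T, hT, -, hTS, heq⟩ := exists_dimGE_subset_eqOn (n := 1) hIf (.const a)
      (hS.mono (by omega)) hp hpa
    refine not_dimGE_one_of_finite (((hGfin a (mt Or.inr ha)).biUnion fun y _ => hfin y).subset
      fun x hx => ?_) hT
    exact Set.mem_biUnion ⟨⟨x, hTS hx, rfl⟩, heq hx⟩ ⟨hTS hx, rfl⟩
  refine DimGE.mono (n := I.card) (.of_closure_image isClosed_closure
    (hS.isIrreducible.image f hf.continuous.continuousOn).closure (isMorphism_coordProj I) ?_) hn
  rw [closure_image_closure (isMorphism_coordProj I).continuous, Set.image_image, hI, ← hdimI]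
  exact dimGE_univ

theorem DimGE.closure_image_of_injOn {S : Set X} {f : X → Y} (hf : IsMorphism f)
    (hS : DimGE n S) (hinj : Set.InjOn f S) : DimGE n (closure (f '' S)) :=
  hS.closure_image_of_finite_fibres hf fun _ =>
    Set.Subsingleton.finite fun _ hx _ hx' => hinj hx.1 hx'.1 (hx.2.trans hx'.2.symm)

theorem subset_of_dimGE_of_injOn {R T₁ T₂ : Set X} {φ : X → Y} (hφ : IsMorphism φ)
    (hinj : Set.InjOn φ R) (hT₁ : DimGE (dim Y) T₁) (hT₂ : DimGE (dim Y) T₂) (hT₁R : T₁ ⊆ R)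
    (hT₂R : T₂ ⊆ R) : T₁ ⊆ T₂ := by
  have dominant {T : Set X} (hT : DimGE (dim Y) T) (hTR : T ⊆ R) : closure (φ '' T) = Set.univ :=
    (hT.closure_image_of_injOn hφ (hinj.mono hTR)).eq_univ
  obtain ⟨F, hF, hproper, hlift⟩ :=
    exists_isClosed_closure_image_diff_subset hT₂.isClosed hT₂.isIrreducible.nonempty hφ
  rw [dominant hT₂ hT₂R] at hproper hlift
  refine subset_of_isIrreducible_of_forall_notMem hT₁.isIrreducible (hF.preimage hφ.continuous)
    (fun hT₁F => hproper ?_) hT₂.isClosed fun x hx hxF => ?_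
  · rw [← dominant hT₁ hT₁R]
    exact closure_minimal (Set.image_subset_iff.2 hT₁F) hF
  · obtain ⟨x', hx', hφx⟩ := hlift (φ x) trivial hxF
    exact hinj (hT₂R hx') (hT₁R hx) hφx ▸ hx'

theorem mapsTo_of_dimGE_of_injOn {R R₁ : Set X} {φ : X → Y} (hφ : IsMorphism φ)
    (hinj : Set.InjOn φ R) (hR : IsClosed R) (hR₁R : R₁ ⊆ R) (hR₁ : DimGE (dim Y) R₁) {T : Set W}
    (hT : DimGE (dim Y) T) {ψ : W → X} (hψ : IsMorphism ψ) (hψinj : Set.InjOn ψ T)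
    (hψR : Set.MapsTo ψ T R) : Set.MapsTo ψ T R₁ := fun x hx =>
  subset_of_dimGE_of_injOn hφ hinj (hT.closure_image_of_injOn hψ hψinj) hR₁
    (closure_minimal hψR.image_subset hR) hR₁R (subset_closure ⟨x, hx, rfl⟩)

theorem exists_dimGE_subset_of_surjOn {R : Set X} {φ : X → Y} (hφ : IsMorphism φ)
    (hR : IsClosed R) (hsurj : Set.SurjOn φ R Set.univ) :
    ∃ R₁ ⊆ R, DimGE (dim Y) R₁ ∧ closure (φ '' R₁) = Set.univ := by
  obtain ⟨R₁, hR₁R, hR₁, hR₁irr, hclosure⟩ := exists_isIrreducible_closure_image_eq hR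
    isClosed_univ (isIrreducible_univ (X := Y)) isClosed_empty
    (fun h => (isIrreducible_univ (X := Y)).nonempty.ne_empty (Set.subset_empty_iff.1 h))
    (fun _ hy _ => hsurj hy) (Set.mapsTo_univ φ R)
  exact ⟨R₁, hR₁R, .of_closure_image hR₁ hR₁irr hφ (hclosure ▸ dimGE_univ), hclosure⟩

theorem exists_isIrreducible_lift_through {A : Set X} (hA : DimGE (dim Y) A) {l : X → Y}
    (hl : IsMorphism l) (hfin : ∀ y, {x ∈ A | l x = y}.Finite) {D : Set W} (hD : IsClosed D)
    (hDirr : IsIrreducible D) {g : W → Y} (hg : IsMorphism g) {a : X} (ha : a ∈ A) {d : W}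
    (hd : d ∈ D) (had : l a = g d) :
    ∃ S ⊆ A ×ˢ D, IsIrreducible S ∧ (a, d) ∈ S ∧ (∀ q ∈ S, l q.1 = g q.2) ∧
      closure (Prod.snd '' S) = D := by
  obtain ⟨r, hr⟩ := exists_hasDim hD hDirr
  obtain ⟨S, hS, hadS, hSAD, heq⟩ := exists_dimGE_subset_eqOn (f := fun q : X × W => l q.1)
    (g := fun q => g q.2) (by fun_prop) (by fun_prop) (add_comm (dim Y) r ▸ hA.prod hr.1)
    (p := (a, d)) (Set.mk_mem_prod ha hd) had
  have hSfin (w : W) : {q ∈ S | q.2 = w}.Finite := by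
    refine ((hfin (g w)).image fun x => (x, w)).subset ?_
    rintro ⟨x, w⟩ ⟨hq, rfl⟩
    exact ⟨x, ⟨(hSAD hq).1, heq hq⟩, rfl⟩
  refine ⟨S, hSAD, hS.isIrreducible, hadS, heq,
    hr.eq_of_subset (hS.closure_image_of_finite_fibres (.snd .id) hSfin) (closure_minimal ?_ hD)⟩
  exact Set.image_subset_iff.2 fun q hq => (hSAD hq).2

theorem closure_image_subset_of_comp_eqOn {A : Set X} (hA : DimGE (dim Y) A) {l : X → Y}
    (hl : IsMorphism l) (hsurj : Set.SurjOn l A Set.univ) (hfin : ∀ y, {x ∈ A | l x = y}.Finite)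
    {E : X → V} (hE : IsMorphism E) {s : Y → V} (hs : Set.EqOn (s ∘ l) E A) {C : Set (W × V)}
    (hC : IsClosed C) {T : Set (X × W)} (hT : IsClosed T) (hTirr : IsIrreducible T)
    (hTAC : ∀ q ∈ T, q.1 ∈ A ∧ (q.2, E q.1) ∈ C) :
    closure ((fun q => (q.2, l q.1)) '' T) ⊆ {p | (p.1, s p.2) ∈ C} := by
  rintro ⟨w, y⟩ hwy
  obtain ⟨a, ha, rfl⟩ := hsurj (Set.mem_univ y)
  have hπ : IsMorphism fun q : X × W => (q.2, l q.1) := by fun_prop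
  obtain ⟨S, hSub, hSirr, haS, hlS, hSD⟩ := exists_isIrreducible_lift_through hA hl hfin
    isClosed_closure (hTirr.image _ hπ.continuous.continuousOn).closure
    (.snd .id) ha hwy rfl
  obtain ⟨F, hF, hproper, hlift⟩ :=
    exists_isClosed_closure_image_diff_subset hT hTirr.nonempty hπ
  have hSC : S ⊆ {q : X × (W × Y) | (q.2.1, E q.1) ∈ C} := by
    refine subset_of_isIrreducible_of_forall_notMem hSirr
      (hF.preimage (IsMorphism.snd .id).continuous) (fun hSF => hproper ?_)
      (isClosed_setOf_mem hC (by fun_prop)) fun q hq hqF => ?_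
    · rw [← hSD]
      exact closure_minimal (Set.image_subset_iff.2 hSF) hF
    · obtain ⟨t, ht, htq⟩ := hlift q.2 (hSub hq).2 hqF
      obtain ⟨htA, htC⟩ := hTAC t ht
      have hE_eq : E q.1 = E t.1 := by
        rw [← hs (hSub hq).1, ← hs htA, Function.comp_apply, hlS q hq, ← htq]
        rfl
      change (q.2.1, E q.1) ∈ C
      rwa [hE_eq, ← htq]
  have hsE : s (l a) = E a := hs ha
  simpa only [Set.mem_ofPred_eq, hsE] using hSC haS

theorem isMorphism_of_comp_eqOn {A : Set X} (hA : DimGE (dim Y) A) {l : X → Y}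
    (hl : IsMorphism l) (hsurj : Set.SurjOn l A Set.univ) (hfin : ∀ y, {x ∈ A | l x = y}.Finite)
    {E : X → V} (hE : IsMorphism E) {s : Y → V} (hs : Set.EqOn (s ∘ l) E A) : IsMorphism s := by
  intro W _
  refine continuous_iff_isClosed.2 fun C hC => ?_
  obtain ⟨c, hc, hclosed, hirred, hcG⟩ := NoetherianSpace.exists_finite_set_isClosed_irreducible <|
    (isClosed_setOf_mem hA.isClosed (.fst .id)).inter
      (isClosed_setOf_mem (f := fun q : X × W => (q.2, E q.1)) hC (by fun_prop))
  have hpreimage : (fun p : W × Y => (p.1, s p.2)) ⁻¹' C =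
      ⋃ T ∈ c, closure ((fun q => (q.2, l q.1)) '' T) := by
    refine Set.Subset.antisymm ?_ (Set.iUnion₂_subset fun T hT => ?_)
    · rintro ⟨w, y⟩ hwy
      obtain ⟨x, hx, rfl⟩ := hsurj (Set.mem_univ y)
      have hsE : s (l x) = E x := hs hx
      obtain ⟨T, hT, hxT⟩ : (x, w) ∈ ⋃₀ c := hcG ▸ ⟨hx, by simpa [hsE] using hwy⟩
      exact Set.mem_biUnion hT (subset_closure ⟨_, hxT, rfl⟩)
    · exact closure_image_subset_of_comp_eqOn hA hl hsurj hfin hE hs hC (hclosed T hT)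
        (hirred T hT) fun q hq => hcG.symm.subset (Set.mem_sUnion_of_mem hq hT)
  rw [hpreimage]
  exact hc.isClosed_biUnion fun _ _ => isClosed_closure

end FiniteFibres

theorem injOn_fst_graph {α β : Type*} (m : α → β) : Set.InjOn Prod.fst {q : α × β | m q.1 = q.2} :=
  fun _ hq _ hq' h => Prod.ext h (hq.symm.trans (congrArg m h |>.trans hq'))

theorem mem_of_closure_image_eq_univ {α Y : Type*} [TopologicalSpace Y] {S : Set α}
    {f : α → Y} (hS : closure (f '' S) = Set.univ) {C : Set Y} (hC : IsClosed C)
    (hfC : Set.MapsTo f S C) (y : Y) : y ∈ C :=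
  closure_minimal hfC.image_subset hC (hS.symm ▸ Set.mem_univ y)

section MainGraph

variable {K : Type u} [HasZariskiGeometry K]
variable {Y W V : Type u} [CartesianPower K Y] [CartesianPower K W] [CartesianPower K V]

/-- `R` is an irreducible closed part of the graph of `m` of the full dimension `dim Y`. A function
whose graph is closed has exactly one, and is a morphism as soon as `R` is the whole graph. -/
structure IsMainGraph (m : Y → K) (R : Set (Y × K)) : Prop where
  subset : R ⊆ {q | m q.1 = q.2}
  dimGE : DimGE (dim Y) R

namespace IsMainGraph

variable {m : Y → K} {R : Set (Y × K)}

theorem injOn_fst (hR : IsMainGraph m R) : Set.InjOn Prod.fst R :=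
  (injOn_fst_graph m).mono hR.subset

variable [Nontrivial K]

theorem exists_of_isClosed (hm : IsClosed {q : Y × K | m q.1 = q.2}) : ∃ R, IsMainGraph m R := by
  obtain ⟨R, hR, hdim, -⟩ := exists_dimGE_subset_of_surjOn (IsMorphism.fst .id) hm
    fun y _ => ⟨(y, m y), rfl, rfl⟩
  exact ⟨R, hR, hdim⟩

theorem mem_of_isMorphism (hR : IsMainGraph m R) (hm : IsClosed {q : Y × K | m q.1 = q.2})
    {T : Set W} (hT : DimGE (dim Y) T) {ψ : W → Y} {e : W → K} (hψ : IsMorphism ψ)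
    (he : IsMorphism e) (hinj : Set.InjOn ψ T) (heq : ∀ x ∈ T, m (ψ x) = e x) {x : W}
    (hx : x ∈ T) : (ψ x, e x) ∈ R :=
  mapsTo_of_dimGE_of_injOn (IsMorphism.fst .id) (injOn_fst_graph m) hm hR.subset hR.dimGE hT
    (hψ.prodMk he) (fun _ ha _ hb h => hinj ha hb (congrArg Prod.fst h)) heq hx

theorem closure_image_fst (hR : IsMainGraph m R) : closure (Prod.fst '' R) = Set.univ :=
  (hR.dimGE.closure_image_of_injOn (.fst .id) hR.injOn_fst).eq_univ

theorem mem_of_isClosed (hR : IsMainGraph m R) {C : Set Y} (hC : IsClosed C)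
    (h : ∀ q ∈ R, q.1 ∈ C) (y : Y) : y ∈ C :=
  mem_of_closure_image_eq_univ hR.closure_image_fst hC h y

theorem isMorphism (hR : IsMainGraph m R) (hmem : ∀ y, (y, m y) ∈ R) : IsMorphism m :=
  isMorphism_of_comp_eqOn hR.dimGE (.fst .id) (fun y _ => ⟨_, hmem y, rfl⟩)
    (fun _ => Set.Subsingleton.finite fun _ hq _ hq' =>
      hR.injOn_fst hq.1 hq'.1 (hq.2.trans hq'.2.symm))
    (.snd .id) hR.subset

theorem exists_isClosed_forall_notMem_mem {m : V × K → K} {R : Set ((V × K) × K)}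
    (hR : IsMainGraph m R) {v : V} {z₀ k₀ : K} (h : ((v, z₀), k₀) ∈ R) :
    ∃ F : Set K, IsClosed F ∧ F ≠ Set.univ ∧ ∀ z ∉ F, ((v, z), m (v, z)) ∈ R := by
  obtain ⟨T, hT, -, hTR, hTv⟩ := exists_dimGE_subset_eqOn (n := 1)
    (f := fun q : (V × K) × K => q.1.1) (g := fun _ => v) (by fun_prop) (by fun_prop)
    (add_comm (dim V) 1 ▸ hR.dimGE) h rfl
  have hinj : Set.InjOn (fun q : (V × K) × K => q.1.2) T := fun q hq q' hq' hz =>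
    hR.injOn_fst (hTR hq) (hTR hq') (Prod.ext ((hTv hq).trans (hTv hq').symm) hz)
  have hz : IsMorphism fun q : (V × K) × K => q.1.2 := by fun_prop
  obtain ⟨F, hF, hproper, hlift⟩ :=
    exists_isClosed_closure_image_diff_subset hT.isClosed hT.isIrreducible.nonempty hz
  rw [(hT.closure_image_of_injOn hz hinj : DimGE (dim K) _).eq_univ] at hproper hlift
  refine ⟨F, hF, fun h => hproper h.symm.subset, fun z hzF => ?_⟩
  obtain ⟨⟨⟨v', z'⟩, k⟩, hq, rfl⟩ := hlift z trivial hzF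
  obtain rfl : v' = v := hTv hq
  have hk : m (v', z') = k := hR.subset (hTR hq)
  exact (congrArg (Prod.mk (v', z')) hk).symm ▸ hTR hq

end IsMainGraph

theorem exists_notMem_notMem [Nontrivial K] {F G : Set Y} (hF : IsClosed F) (hG : IsClosed G)
    (hFne : F ≠ Set.univ) (hGne : G ≠ Set.univ) : ∃ y, y ∉ F ∧ y ∉ G := by
  obtain ⟨y, -, hy⟩ := Set.not_subset.1 (not_subset_union_of_isIrreducible
    isIrreducible_univ hF hG (mt Set.univ_subset_iff.1 hFne) (mt Set.univ_subset_iff.1 hGne))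
  exact ⟨y, mt Or.inl hy, mt Or.inr hy⟩

end MainGraph

section Polynomial

variable {K : Type u} [Field K] {X : Type u} [CartesianPower K X]

theorem IsCoordinateMap.exists_eval_eq {f : X → K} (hf : IsCoordinateMap f) :
    ∃ P : MvPolynomial (Fin (dim X)) K, ∀ x, MvPolynomial.eval (coord x) P = f x := by
  rcases hf 0 with ⟨j, hj⟩ | ⟨c, hc⟩
  · exact ⟨.X j, fun x => (MvPolynomial.eval_X j).trans (hj x).symm⟩
  · exact ⟨.C c, fun x => (MvPolynomial.eval_C c).trans (hc x).symm⟩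

end Polynomial

/-- Every Zariski-closed subset of a power of `K` is closed in the Zariski geometry. -/
class RefinesZariski (K : Type u) [Field K] [HasZariskiGeometry K] : Prop where
  isClosed_of_zariskiClosedSet (n : ℕ) (C : Set (Fin n → K)) :
    ZariskiClosedSet K C → IsClosed[(geometry (K := K)).τ n] C

section FieldOperations

variable {K : Type u} [Field K] [HasZariskiGeometry K] [RefinesZariski K]
variable {X : Type u} [CartesianPower K X]

theorem isClosed_setOf_eval_eq (P Q : MvPolynomial (Fin (dim X)) K) :
    IsClosed {x : X | MvPolynomial.eval (coord x) P = MvPolynomial.eval (coord x) Q} := by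
  let _ := (geometry (K := K)).τ (dim X)
  have hzero : IsClosed {y : Fin (dim X) → K | MvPolynomial.eval y (P - Q) = 0} :=
    RefinesZariski.isClosed_of_zariskiClosedSet _ _ ⟨{P - Q}, by simp⟩
  simpa [sub_eq_zero] using hzero.preimage (isInducing_coord (X := X)).continuous

theorem isClosed_graph_add_sub :
    IsClosed {q : ((K × K) × K) × K | q.1.1.1 + q.1.1.2 - q.1.2 = q.2} := by
  obtain ⟨P₁, h₁⟩ := (IsCoordinateMap.fst.comp (.comp .fst .fst) :
    IsCoordinateMap fun q : ((K × K) × K) × K => q.1.1.1).exists_eval_eq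
  obtain ⟨P₂, h₂⟩ := (IsCoordinateMap.snd.comp (.comp .fst .fst) :
    IsCoordinateMap fun q : ((K × K) × K) × K => q.1.1.2).exists_eval_eq
  obtain ⟨P₃, h₃⟩ := (IsCoordinateMap.snd.comp .fst :
    IsCoordinateMap fun q : ((K × K) × K) × K => q.1.2).exists_eval_eq
  obtain ⟨P₄, h₄⟩ := (IsCoordinateMap.snd :
    IsCoordinateMap fun q : ((K × K) × K) × K => q.2).exists_eval_eq
  simpa [h₁, h₂, h₃, h₄] using isClosed_setOf_eval_eq (P₁ + P₂ - P₃) P₄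

theorem isClosed_graph_add : IsClosed {q : (K × K) × K | q.1.1 + q.1.2 = q.2} := by
  simpa using isClosed_setOf_mem isClosed_graph_add_sub
    (f := fun q : (K × K) × K => (((q.1, (0 : K)), q.2) : ((K × K) × K) × K)) (by fun_prop)

theorem isClosed_graph_mul : IsClosed {q : (K × K) × K | q.1.1 * q.1.2 = q.2} := by
  obtain ⟨P₁, h₁⟩ := (IsCoordinateMap.fst.comp .fst :
    IsCoordinateMap fun q : (K × K) × K => q.1.1).exists_eval_eq
  obtain ⟨P₂, h₂⟩ := (IsCoordinateMap.snd.comp .fst :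
    IsCoordinateMap fun q : (K × K) × K => q.1.2).exists_eval_eq
  obtain ⟨P₃, h₃⟩ := (IsCoordinateMap.snd :
    IsCoordinateMap fun q : (K × K) × K => q.2).exists_eval_eq
  simpa [h₁, h₂, h₃] using isClosed_setOf_eval_eq (P₁ * P₂) P₃

section Addition

variable {R : Set (((K × K) × K) × K)}

theorem mem_mainGraph_add_sub_fst
    (hR : IsMainGraph (fun y : (K × K) × K => y.1.1 + y.1.2 - y.2) R) (v : K × K) :
    ((v, v.1), v.2) ∈ R := by
  obtain ⟨G, hG⟩ := IsMainGraph.exists_of_isClosed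
    (m := fun p : K × K => p.1 + p.2) isClosed_graph_add
  have hmem (q : (K × K) × K) (hq : q ∈ G) : ((q.1, q.1.1), q.1.2) ∈ R := by
    obtain ⟨T, hT, hqT, hTG, hTsum⟩ := exists_dimGE_subset_eqOn_base (n := 3)
      (f := fun t : ((K × K) × K) × ((K × K) × K) => t.1.2) (g := fun t => t.2.2)
      (by fun_prop) (by fun_prop) (hG.dimGE.prod hG.dimGE) (p := (q, q)) ⟨hq, hq⟩ rfl
    have hsum {t} (ht : t ∈ T) : t.1.1.1 + t.1.1.2 - t.2.1.1 = t.2.1.2 := by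
      have h₁ : t.1.1.1 + t.1.1.2 = t.1.2 := hG.subset (hTG ht).1
      have h₂ : t.2.1.1 + t.2.1.2 = t.2.2 := hG.subset (hTG ht).2
      have h₃ : t.1.2 = t.2.2 := hTsum ht
      rw [h₁, h₃, ← h₂, add_sub_cancel_left]
    refine hR.mem_of_isMorphism isClosed_graph_add_sub hT (ψ := fun t => (t.1.1, t.2.1.1))
      (e := fun t => t.2.1.2) (by fun_prop) (by fun_prop) (fun t ht t' ht' h => ?_)
      (fun t ht => hsum ht) hqT
    obtain ⟨h₁, h₂⟩ := Prod.ext_iff.1 h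
    simp only at h₁ h₂
    have h₃ : t.2.1.2 = t'.2.1.2 := by rw [← hsum ht, ← hsum ht', h₁, h₂]
    exact Prod.ext (hG.injOn_fst (hTG ht).1 (hTG ht').1 h₁)
      (hG.injOn_fst (hTG ht).2 (hTG ht').2 (Prod.ext h₂ h₃))
  exact hG.mem_of_isClosed (C := {v | ((v, v.1), v.2) ∈ R})
    (isClosed_setOf_mem hR.dimGE.isClosed (by fun_prop)) hmem v

theorem mem_mainGraph_add_sub
    (hR : IsMainGraph (fun y : (K × K) × K => y.1.1 + y.1.2 - y.2) R) (y : (K × K) × K) :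
    (y, y.1.1 + y.1.2 - y.2) ∈ R := by
  obtain ⟨⟨a, b⟩, c⟩ := y
  obtain ⟨F, hF, hFne, hFmem⟩ :=
    hR.exists_isClosed_forall_notMem_mem (mem_mainGraph_add_sub_fst hR (a, b))
  obtain ⟨F', hF', hF'ne, hF'mem⟩ :=
    hR.exists_isClosed_forall_notMem_mem (mem_mainGraph_add_sub_fst hR (c, a + b - c))
  obtain ⟨z, hz, hz'⟩ := exists_notMem_notMem hF hF' hFne hF'ne
  obtain ⟨T, hT, hzT, hTR, hTz⟩ := exists_dimGE_subset_eqOn (n := 3)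
    (f := fun t : (((K × K) × K) × K) × (((K × K) × K) × K) => ((t.1.1.2, t.2.1.2), t.1.2))
    (g := fun t => ((z, z), t.2.2)) (by fun_prop) (by fun_prop) (hR.dimGE.prod hR.dimGE)
    (p := ((((a, b), z), a + b - z), (((c, a + b - c), z), a + b - z)))
    ⟨hFmem z hz, by simpa using hF'mem z hz'⟩ rfl
  have hcut {t} (ht : t ∈ T) : (t.1.1.2 = z ∧ t.2.1.2 = z) ∧ t.1.2 = t.2.2 := by
    simpa using hTz ht
  have hsum {t} (ht : t ∈ T) : t.1.1.1.1 + t.1.1.1.2 - t.2.1.1.1 = t.2.1.1.2 := by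
    have h₁ : t.1.1.1.1 + t.1.1.1.2 - t.1.1.2 = t.1.2 := hR.subset (hTR ht).1
    have h₂ : t.2.1.1.1 + t.2.1.1.2 - t.2.1.2 = t.2.2 := hR.subset (hTR ht).2
    rw [(hcut ht).1.1] at h₁
    rw [(hcut ht).1.2, ← (hcut ht).2] at h₂
    linear_combination h₁ - h₂
  refine hR.mem_of_isMorphism isClosed_graph_add_sub hT
    (ψ := fun t : (((K × K) × K) × K) × (((K × K) × K) × K) => (t.1.1.1, t.2.1.1.1))
    (e := fun t => t.2.1.1.2) (by fun_prop) (by fun_prop) (fun t ht t' ht' h => ?_)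
    (fun t ht => hsum ht) hzT
  obtain ⟨h₁, h₂⟩ := Prod.ext_iff.1 h
  simp only at h₁ h₂
  have h₃ : t.2.1.1.2 = t'.2.1.1.2 := by rw [← hsum ht, ← hsum ht', h₁, h₂]
  exact Prod.ext
    (hR.injOn_fst (hTR ht).1 (hTR ht').1
      (Prod.ext h₁ ((hcut ht).1.1.trans (hcut ht').1.1.symm)))
    (hR.injOn_fst (hTR ht).2 (hTR ht').2
      (Prod.ext (Prod.ext h₂ h₃) ((hcut ht).1.2.trans (hcut ht').1.2.symm)))

theorem isMorphism_add_sub : IsMorphism fun y : (K × K) × K => y.1.1 + y.1.2 - y.2 := by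
  obtain ⟨R, hR⟩ := IsMainGraph.exists_of_isClosed
    (m := fun y : (K × K) × K => y.1.1 + y.1.2 - y.2) isClosed_graph_add_sub
  exact hR.isMorphism (mem_mainGraph_add_sub hR)

end Addition

@[fun_prop]
theorem IsMorphism.add {f g : X → K} (hf : IsMorphism f) (hg : IsMorphism g) :
    IsMorphism fun x => f x + g x := by
  simpa using isMorphism_add_sub.comp ((hf.prodMk hg).prodMk (.const (0 : K)))

@[fun_prop]
theorem IsMorphism.sub {f g : X → K} (hf : IsMorphism f) (hg : IsMorphism g) :
    IsMorphism fun x => f x - g x := by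
  simpa using isMorphism_add_sub.comp ((hf.prodMk (.const (0 : K))).prodMk hg)

@[fun_prop]
theorem IsMorphism.neg {f : X → K} (hf : IsMorphism f) : IsMorphism fun x => -f x := by
  simpa using (IsMorphism.const (0 : K)).sub hf

section Multiplication

variable {G : Set ((K × K) × K)}

theorem mem_mainGraph_mul_sub (hG : IsMainGraph (fun p : K × K => p.1 * p.2) G) {x y y' : K}
    (hy : ((x, y), x * y) ∈ G) (hy' : ((x, y'), x * y') ∈ G) :
    ((x, y - y'), x * (y - y')) ∈ G := by
  obtain ⟨T, hT, hxT, hTG, hTcut⟩ := exists_dimGE_subset_eqOn (n := 2)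
    (f := fun t : ((K × K) × K) × ((K × K) × K) => (t.1.1.1, t.2.1.2))
    (g := fun t => (t.2.1.1, y')) (by fun_prop) (by fun_prop) (hG.dimGE.prod hG.dimGE)
    (p := (((x, y), x * y), ((x, y'), x * y'))) ⟨hy, hy'⟩ rfl
  have hcut {t} (ht : t ∈ T) : t.1.1.1 = t.2.1.1 ∧ t.2.1.2 = y' := by simpa using hTcut ht
  have hmem := hG.mem_of_isMorphism isClosed_graph_mul hT
    (ψ := fun t : ((K × K) × K) × ((K × K) × K) => (t.1.1.1, t.1.1.2 - y'))
    (e := fun t => t.1.2 - t.2.2) (by fun_prop) (by fun_prop) (fun t ht t' ht' h => ?_)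
    (fun t ht => ?_) hxT
  · simpa [mul_sub] using hmem
  · obtain ⟨h₁, h₂⟩ : t.1.1.1 = t'.1.1.1 ∧ t.1.1.2 = t'.1.1.2 := by simpa using h
    have h₃ : t.2.1.1 = t'.2.1.1 := by rw [← (hcut ht).1, ← (hcut ht').1, h₁]
    exact Prod.ext (hG.injOn_fst (hTG ht).1 (hTG ht').1 (Prod.ext h₁ h₂))
      (hG.injOn_fst (hTG ht).2 (hTG ht').2
        (Prod.ext h₃ ((hcut ht).2.trans (hcut ht').2.symm)))
  · have h₁ : t.1.1.1 * t.1.1.2 = t.1.2 := hG.subset (hTG ht).1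
    have h₂ : t.2.1.1 * t.2.1.2 = t.2.2 := hG.subset (hTG ht).2
    change t.1.1.1 * (t.1.1.2 - y') = t.1.2 - t.2.2
    rw [← h₁, ← h₂, ← (hcut ht).1, (hcut ht).2, mul_sub]

theorem mem_mainGraph_mul_zero (hG : IsMainGraph (fun p : K × K => p.1 * p.2) G) (x : K) :
    ((x, 0), 0) ∈ G := by
  refine hG.mem_of_isClosed (C := {v | ((v.1, 0), 0) ∈ G})
    (isClosed_setOf_mem hG.dimGE.isClosed (by fun_prop)) (fun q hq => ?_) (x, 0)
  have hq' : ((q.1.1, q.1.2), q.1.1 * q.1.2) ∈ G := (hG.subset hq : q.1.1 * q.1.2 = q.2) ▸ hq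
  simpa using mem_mainGraph_mul_sub hG hq' hq'

theorem mem_mainGraph_mul (hG : IsMainGraph (fun p : K × K => p.1 * p.2) G) (p : K × K) :
    (p, p.1 * p.2) ∈ G := by
  obtain ⟨a, b⟩ := p
  obtain ⟨F, hF, hFne, hFmem⟩ :=
    hG.exists_isClosed_forall_notMem_mem (mem_mainGraph_mul_zero hG a)
  obtain ⟨y, hy, hyb⟩ := exists_notMem_notMem hF
    (isClosed_setOf_mem hF (f := fun y => y - b) (by fun_prop)) hFne fun h => by
      obtain ⟨z, hz⟩ := (Set.ne_univ_iff_exists_notMem F).1 hFne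
      have hzb : z + b ∈ {y | y - b ∈ F} := h ▸ Set.mem_univ _
      exact hz (by simpa using hzb)
  simpa using mem_mainGraph_mul_sub hG (hFmem y hy) (hFmem (y - b) hyb)

theorem isMorphism_mul : IsMorphism fun p : K × K => p.1 * p.2 := by
  obtain ⟨G, hG⟩ := IsMainGraph.exists_of_isClosed
    (m := fun p : K × K => p.1 * p.2) isClosed_graph_mul
  exact hG.isMorphism (mem_mainGraph_mul hG)

end Multiplication

@[fun_prop]
theorem IsMorphism.mul {f g : X → K} (hf : IsMorphism f) (hg : IsMorphism g) :
    IsMorphism fun x => f x * g x :=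
  isMorphism_mul.comp (hf.prodMk hg)

@[fun_prop]
theorem IsMorphism.pow {f : X → K} (hf : IsMorphism f) (n : ℕ) :
    IsMorphism fun x => f x ^ n := by
  induction n with
  | zero => simpa using IsMorphism.const (1 : K)
  | succ n ih => simpa only [pow_succ] using ih.mul hf

@[fun_prop]
theorem IsMorphism.sum {ι : Type*} (s : Finset ι) {f : ι → X → K} (hf : ∀ i, IsMorphism (f i)) :
    IsMorphism fun x => ∑ i ∈ s, f i x := by
  classical
  induction s using Finset.induction_on with
  | empty => simpa using IsMorphism.const (0 : K)
  | insert a s ha ih => simpa only [Finset.sum_insert ha] using (hf a).add ih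

@[fun_prop]
theorem IsMorphism.prod {ι : Type*} (s : Finset ι) {f : ι → X → K} (hf : ∀ i, IsMorphism (f i)) :
    IsMorphism fun x => ∏ i ∈ s, f i x := by
  classical
  induction s using Finset.induction_on with
  | empty => simpa using IsMorphism.const (1 : K)
  | insert a s ha ih => simpa only [Finset.prod_insert ha] using (hf a).mul ih

end FieldOperations

section FiniteImage

variable {X Y : Type*} [TopologicalSpace X] [TopologicalSpace Y]

theorem eq_of_isIrreducible_of_mapsTo_finite [T1Space Y] {S : Set X} (hS : IsIrreducible S)
    {f : X → Y} (hf : Continuous f) {A : Set Y} (hA : A.Finite) (hfA : Set.MapsTo f S A) {x y : X}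
    (hx : x ∈ S) (hy : y ∈ S) : f x = f y := by
  obtain ⟨c, hc⟩ := eq_singleton_of_isIrreducible_of_finite (hS.image f hf.continuousOn)
    (hA.subset hfA.image_subset)
  have heq {z : X} (hz : z ∈ S) : f z = c := hc.subset (Set.mem_image_of_mem f hz)
  exact (heq hx).trans (heq hy).symm

theorem finite_of_forall_not_dimGE_one [T1Space X] [NoetherianSpace X] {B : Set X}
    (hB : IsClosed B) (h : ∀ T ⊆ B, ¬ DimGE 1 T) : B.Finite := by
  obtain ⟨s, hs, hclosed, hirr, rfl⟩ := NoetherianSpace.exists_finite_set_isClosed_irreducible hB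
  refine hs.sUnion fun T hT => ?_
  obtain ⟨x, hx⟩ := (hirr T hT).nonempty
  rw [eq_singleton_of_not_dimGE_one (hclosed T hT) (hirr T hT)
    (h T (Set.subset_sUnion_of_mem hT)) hx]
  exact Set.finite_singleton x

theorem exists_isIrreducible_subset_closure_image [NoetherianSpace X] {S : Set X}
    (hS : IsClosed S) {f : X → Y} {T : Set Y} (hT : IsIrreducible T) (h : T ⊆ closure (f '' S)) :
    ∃ S' ⊆ S, IsClosed S' ∧ IsIrreducible S' ∧ T ⊆ closure (f '' S') := by
  obtain ⟨s, hs, hclosed, hirr, rfl⟩ := NoetherianSpace.exists_finite_set_isClosed_irreducible hS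
  have := hs.to_subtype
  rw [Set.image_sUnion, Set.sUnion_image, Set.biUnion_eq_iUnion, closure_iUnion_of_finite] at h
  obtain ⟨⟨S', hS'⟩, hTS'⟩ :=
    exists_subset_of_isIrreducible_of_subset_iUnion hT (fun _ => isClosed_closure) h
  exact ⟨S', Set.subset_sUnion_of_mem hS', hclosed S' hS', hirr S' hS', hTS'⟩

theorem exists_isIrreducible_superset_of_subset_closure_diff [NoetherianSpace X] {N F T : Set X}
    (hN : IsClosed N) (hT : IsIrreducible T) (h : T ⊆ closure (N \ F)) :
    ∃ A ⊆ N, IsClosed A ∧ IsIrreducible A ∧ T ⊆ A ∧ ¬ A ⊆ F := by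
  obtain ⟨s, hs, hclosed, hirr, rfl⟩ := NoetherianSpace.exists_finite_set_isClosed_irreducible hN
  have hfin : {A ∈ s | ¬ A ⊆ F}.Finite := hs.subset (Set.sep_subset _ _)
  have hcover : closure (⋃₀ s \ F) ⊆ ⋃₀ {A ∈ s | ¬ A ⊆ F} := by
    refine closure_minimal ?_
      (Set.sUnion_eq_biUnion ▸ hfin.isClosed_biUnion fun A hA => hclosed A hA.1)
    rintro x ⟨⟨A, hA, hxA⟩, hxF⟩
    exact ⟨A, ⟨hA, fun hAF => hxF (hAF hxA)⟩, hxA⟩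
  obtain ⟨A, ⟨hA, hAF⟩, hTA⟩ := exists_subset_of_isIrreducible_of_subset_sUnion hT hfin
    (fun A hA => hclosed A hA.1) (h.trans hcover)
  exact ⟨A, Set.subset_sUnion_of_mem hA, hclosed A hA, hirr A hA, hTA, hAF⟩

end FiniteImage

section FibreDimension

@[simp]
theorem dim_base {K : Type u} : dim K = 1 := rfl

@[simp]
theorem dim_prod {K X Y : Type u} [CartesianPower K X] [CartesianPower K Y] :
    dim (X × Y) = dim X + dim Y := rfl

@[simp]
theorem dim_pi {K X : Type u} [CartesianPower K X] {κ : Type} [Fintype κ] :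
    dim (κ → X) = Fintype.card κ * dim X := rfl

variable {K : Type u} [HasZariskiGeometry K]
variable {X Y : Type u} [CartesianPower K X] [CartesianPower K Y]

theorem not_dimGE_of_fibre_subset_singleton {U : Set X} {f : X → Y} (hf : IsMorphism f) {p : X}
    (hp : p ∈ U)
    (h : ∀ T ⊆ U, IsClosed T → IsIrreducible T → p ∈ T → (∀ x ∈ T, f x = f p) → T ⊆ {p}) :
    ¬ DimGE (dim Y + 1) U := by
  intro hU
  obtain ⟨T, hT, hpT, hTU, hTf⟩ := exists_dimGE_subset_eqOn (n := 1) hf (.const (f p))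
    (add_comm (dim Y) 1 ▸ hU) hp rfl
  exact not_dimGE_one_of_finite
    ((Set.finite_singleton p).subset (h T hTU hT.isClosed hT.isIrreducible hpT hTf)) hT

theorem mem_of_isIrredComponentOf_of_action {C T : Set X}
    (hT : IsIrredComponentOf powerTopology T C) {A : K → X → X}
    (hA : IsMorphism fun q : K × X => A q.1 q.2) {c₀ : K} (hc₀ : ∀ x, A c₀ x = x)
    (hAC : ∀ c, ∀ x ∈ C, A c x ∈ C) (c : K) {x : X} (hx : x ∈ T) : A c x ∈ T := by
  let orbit : Set X := (fun q : K × X => A q.1 q.2) '' (Set.univ ×ˢ T)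
  have hirr : IsIrreducible orbit :=
    (isIrreducible_prod isIrreducible_univ_base hT.1.2).image _ hA.continuous.continuousOn
  have hsub : orbit ⊆ C := by
    rintro _ ⟨⟨c, x⟩, ⟨-, hx⟩, rfl⟩
    exact hAC c x (hT.1.1 hx)
  exact hT.2 ⟨hsub, hirr⟩ (fun x hx => ⟨(c₀, x), ⟨trivial, hx⟩, hc₀ x⟩)
    ⟨(c, x), ⟨trivial, hx⟩, rfl⟩

variable [Nontrivial K]

theorem infinite_base : Infinite K :=
  Set.infinite_univ_iff.1 fun h => not_dimGE_one_of_finite h dimGE_univ_base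

theorem finite_of_isClosed_of_ne_univ {F : Set K} (hF : IsClosed F) (h : F ≠ Set.univ) :
    F.Finite :=
  finite_of_forall_not_dimGE_one hF fun T hT hd =>
    h (Set.univ_subset_iff.1 ((hd : DimGE (dim K) T).eq_univ ▸ hT))

theorem closure_image_ne_univ_of_ssubset {A S : Set X} (hA : HasDim (dim Y) A) (hS : IsClosed S)
    (hSA : S ⊂ A) {f : X → Y} (hf : IsMorphism f) : closure (f '' S) ≠ Set.univ := by
  intro h
  obtain ⟨S', hS'S, hS', hS'irr, hS'univ⟩ :=
    exists_isIrreducible_subset_closure_image hS (isIrreducible_univ (X := Y)) h.ge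
  have hdim : DimGE (dim Y) S' :=
    .of_closure_image hS' hS'irr hf (Set.univ_subset_iff.1 hS'univ ▸ dimGE_univ)
  exact hSA.not_subset (hA.eq_of_subset hdim (hS'S.trans hSA.subset) ▸ hS'S)

theorem exists_forall_notMem {ι : Type*} [Finite ι] {F : ι → Set X} (hF : ∀ i, IsClosed (F i))
    (hne : ∀ i, F i ≠ Set.univ) : ∃ x, ∀ i, x ∉ F i := by
  by_contra! h
  obtain ⟨i, hi⟩ := exists_subset_of_isIrreducible_of_subset_iUnion isIrreducible_univ hF
    fun x _ => Set.mem_iUnion.2 (h x)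
  exact hne i (Set.univ_subset_iff.1 hi)

theorem mem_of_isClosed_of_forall_ne {C : Set X} (hC : IsClosed C) {f g : X → Y}
    (hf : IsMorphism f) (hg : IsMorphism g) {p : X} (hp : f p ≠ g p)
    (h : ∀ x, f x ≠ g x → x ∈ C) (x : X) : x ∈ C :=
  subset_of_isIrreducible_of_forall_notMem isIrreducible_univ (isClosed_setOf_eq hf hg)
    (fun h' => hp (h' (Set.mem_univ p))) hC (fun x _ hx => h x hx) (Set.mem_univ x)

end FibreDimension

section LinearAlgebra

variable {K : Type u} [Field K] [HasZariskiGeometry K] [RefinesZariski K]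
variable {X Y : Type u} [CartesianPower K X] [CartesianPower K Y] {κ : Type} [Fintype κ]

@[fun_prop]
theorem IsMorphism.pi_add {f g : X → κ → K} (hf : IsMorphism f) (hg : IsMorphism g) :
    IsMorphism fun x => f x + g x :=
  .pi fun i => by simp only [Pi.add_apply]; fun_prop

@[fun_prop]
theorem IsMorphism.pi_sub {f g : X → κ → K} (hf : IsMorphism f) (hg : IsMorphism g) :
    IsMorphism fun x => f x - g x :=
  .pi fun i => by simp only [Pi.sub_apply]; fun_prop

@[fun_prop]
theorem IsMorphism.pi_smul {f : X → K} {g : X → κ → K} (hf : IsMorphism f) (hg : IsMorphism g) :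
    IsMorphism fun x => f x • g x :=
  .pi fun i => by simp only [Pi.smul_apply, smul_eq_mul]; fun_prop

theorem IsMorphism.dual (φ : Module.Dual K (κ → K)) {f : X → κ → K} (hf : IsMorphism f) :
    IsMorphism fun x => φ (f x) := by
  classical
  have hsum : (fun x => φ (f x)) = fun x => ∑ i, f x i * φ fun j => if i = j then 1 else 0 :=
    funext fun x => LinearMap.pi_apply_eq_sum_univ φ (f x)
  rw [hsum]
  fun_prop

theorem exists_isMorphism_hyperplane_section {B : Set X} (hB : IsClosed B) {r : ℕ}
    (h : ∀ T ⊆ B, ¬ DimGE (r + 2) T) (b : X) :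
    ∃ g : X → K, IsMorphism g ∧ g b = 0 ∧ ∀ T ⊆ B ∩ {x | g x = 0}, ¬ DimGE (r + 1) T := by
  have := infinite_base (K := K)
  obtain ⟨s, hs, hclosed, hirr, rfl⟩ := NoetherianSpace.exists_finite_set_isClosed_irreducible hB
  have := (hs.subset (Set.sep_subset s fun T => ∃ t ∈ T, t ≠ b)).to_subtype
  choose t ht htb using fun T : {T ∈ s | ∃ t ∈ T, t ≠ b} => T.2.2
  obtain ⟨φ, hφ⟩ := Module.exists_dual_forall_apply_ne_zero (K := K)
    (fun T => coord (t T) - coord b)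
    fun T => sub_ne_zero.2 ((coord : X ≃ _).injective.ne (htb T))
  refine ⟨fun x => φ (coord x - coord b), .dual φ ((IsMorphism.pi isMorphism_coord).pi_sub
    (.const (coord b))), by simp, fun T hT hdim => ?_⟩
  obtain ⟨S, hS, hTS⟩ := exists_subset_of_isIrreducible_of_subset_sUnion hdim.isIrreducible hs
    hclosed (hT.trans Set.inter_subset_left)
  by_cases hSb : ∃ t ∈ S, t ≠ b
  · refine h S (Set.subset_sUnion_of_mem hS)
      ⟨hclosed S hS, hirr S hS, T, ⟨hTS, fun hST => ?_⟩, hdim⟩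
    exact hφ ⟨S, hS, hSb⟩ (hT (hST (ht ⟨S, hS, hSb⟩))).2
  · push Not at hSb
    exact not_dimGE_one_of_finite ((Set.finite_singleton b).subset fun x hx => hSb x (hTS hx))
      (hdim.mono (Nat.le_add_left 1 r))

theorem exists_isMorphism_finite_fibre {B : Set X} (hB : IsClosed B) {r : ℕ}
    (h : ∀ T ⊆ B, ¬ DimGE (r + 1) T) (b : X) :
    ∃ g : X → (Fin r → K), IsMorphism g ∧ g b = 0 ∧ {x ∈ B | g x = 0}.Finite := by
  induction r generalizing B with
  | zero => exact ⟨fun _ => 0, .const 0, rfl,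
      (finite_of_forall_not_dimGE_one hB h).subset (Set.sep_subset _ _)⟩
  | succ r ih =>
    obtain ⟨g₀, hg₀, hg₀b, hsection⟩ := exists_isMorphism_hyperplane_section hB h b
    obtain ⟨g, hg, hgb, hfin⟩ := ih (hB.inter (isClosed_setOf_eq hg₀ (.const 0))) hsection
    refine ⟨fun x => Matrix.vecCons (g₀ x) (g x), .pi fun i => ?_, ?_, hfin.subset ?_⟩
    · cases i using Fin.cases with
      | zero => simpa using hg₀
      | succ i => simpa using (IsMorphism.apply i).comp hg
    · exact Matrix.cons_eq_zero_iff.2 ⟨hg₀b, hgb⟩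
    · rintro x ⟨hx, hgx⟩
      obtain ⟨h₀, h₁⟩ := Matrix.cons_eq_zero_iff.1 hgx
      exact ⟨⟨hx, h₀⟩, h₁⟩

theorem DimGE.closure_image_of_finite_fibre {S : Set X} {f : X → Y} (hf : IsMorphism f) {n : ℕ}
    (hS : DimGE n S) {p : X} (hp : p ∈ S) (hfin : {x ∈ S | f x = f p}.Finite) :
    DimGE n (closure (f '' S)) := by
  obtain ⟨r, hr⟩ := exists_hasDim isClosed_closure
    (hS.isIrreducible.image f hf.continuous.continuousOn).closure
  refine hr.1.mono (not_lt.1 fun hrn => ?_)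
  obtain ⟨g, hg, hgp, hgfin⟩ := exists_isMorphism_finite_fibre isClosed_closure
    (fun T hT hd => hr.2 (hd.mono_set hr.isClosed hr.isIrreducible hT)) (f p)
  obtain ⟨T, hT, hpT, hTS, hTg⟩ := exists_dimGE_subset_eqOn (n := 1) (hg.comp hf) (.const 0)
    (hS.mono (by simpa [add_comm 1] using hrn)) hp hgp
  refine not_dimGE_one_of_finite (hfin.subset fun x hx => ⟨hTS hx, ?_⟩) hT
  exact eq_of_isIrreducible_of_mapsTo_finite hT.isIrreducible hf.continuous hgfin
    (fun x hx => ⟨subset_closure ⟨x, hTS hx, rfl⟩, hTg hx⟩) hx hpT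

end LinearAlgebra

section PlaneCone

variable {K : Type u} [Field K] [HasZariskiGeometry K]

theorem finite_setOf_mk_one_mem {C : Set (K × K)} (hC : IsClosed C)
    (hcone : ∀ (c : K), ∀ v ∈ C, (c * v.1, c * v.2) ∈ C) (hne : C ≠ Set.univ) :
    {μ : K | (μ, 1) ∈ C}.Finite := by
  refine finite_of_isClosed_of_ne_univ (isClosed_setOf_mem hC (by fun_prop)) fun h =>
    hne (Set.eq_univ_of_forall (mem_of_isClosed_of_forall_ne hC (f := Prod.snd)
      (g := fun _ => (0 : K)) (by fun_prop) (by fun_prop) (p := (0, 1)) one_ne_zero ?_))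
  rintro ⟨μ, ν⟩ hν
  simpa [mul_div_cancel₀ _ hν] using hcone ν _ (h.symm.subset (Set.mem_univ (μ / ν)))

theorem finite_setOf_one_mk_mem {C : Set (K × K)} (hC : IsClosed C)
    (hcone : ∀ (c : K), ∀ v ∈ C, (c * v.1, c * v.2) ∈ C) (hne : C ≠ Set.univ) :
    {ν : K | (1, ν) ∈ C}.Finite :=
  finite_setOf_mk_one_mem (C := Prod.swap ⁻¹' C)
    (isClosed_setOf_mem hC (f := Prod.swap) (.prodMk (.snd .id) (.fst .id)))
    (fun c v hv => hcone c v.swap hv)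
    fun h => hne (Set.preimage_injective.2 Prod.swap_surjective h)

end PlaneCone

section Slope

variable {K : Type u} [Field K] [HasZariskiGeometry K] {κ : Type} [Fintype κ]
variable {s : (κ → K) → K} {e x : κ → K} {δ μ ν : K}

/-- The closure of the cone over the difference quotients of `s` in the direction `e`. A point
`(x, δ, μ, ν)` with `δ ≠ 0` lies in it iff `[μ : ν] = [δ : s (x + δ • e) - s x]` or `μ = ν = 0`, and
over `δ = 0` the ratios `[μ : ν]` are the limiting slopes of `s` at `x`. -/
def slopeVariety (s : (κ → K) → K) (e : κ → K) : Set ((κ → K) × K × K × K) :=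
  closure (Set.range fun q : (κ → K) × K × K =>
    (q.1, q.2.1, q.2.2 * q.2.1, q.2.2 * (s (q.1 + q.2.1 • e) - s q.1)))

/-- The points at which every ratio is a limiting slope of `s` in the direction `e`. -/
def indeterminateSlopes (s : (κ → K) → K) (e : κ → K) : Set (κ → K) :=
  {x | ∀ μ ν, (x, 0, μ, ν) ∈ slopeVariety s e}

theorem isClosed_slopeVariety : IsClosed (slopeVariety s e) :=
  isClosed_closure

theorem mem_slopeVariety_of_ne_zero (hδ : δ ≠ 0) (h : ν * δ = μ * (s (x + δ • e) - s x)) :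
    (x, δ, μ, ν) ∈ slopeVariety s e := by
  refine subset_closure ⟨(x, δ, μ / δ), ?_⟩
  simp only [Prod.mk.injEq, true_and]
  exact ⟨div_mul_cancel₀ μ hδ, by rw [div_mul_eq_mul_div, ← h, mul_div_cancel_right₀ ν hδ]⟩

theorem zero_mem_slopeVariety (x : κ → K) (δ : K) : (x, δ, 0, 0) ∈ slopeVariety s e :=
  subset_closure ⟨(x, δ, 0), by simp⟩

theorem isClosed_indeterminateSlopes : IsClosed (indeterminateSlopes s e) := by
  simp only [indeterminateSlopes, Set.ofPred_forall]
  exact isClosed_iInter fun μ => isClosed_iInter fun ν =>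
    isClosed_setOf_mem isClosed_slopeVariety (f := fun x => (x, 0, μ, ν)) (by fun_prop)

variable [RefinesZariski K]

theorem isIrreducible_slopeVariety (hs : IsMorphism s) : IsIrreducible (slopeVariety s e) := by
  rw [slopeVariety, ← Set.image_univ]
  refine (isIrreducible_univ.image _ (IsMorphism.continuous ?_).continuousOn).closure
  fun_prop

theorem eq_of_mem_slopeVariety (hs : IsMorphism s) (h : (x, δ, μ, ν) ∈ slopeVariety s e) :
    ν * δ = μ * (s (x + δ • e) - s x) := by
  have hclosed : IsClosed {q : (κ → K) × K × K × K |
      q.2.2.2 * q.2.1 = q.2.2.1 * (s (q.1 + q.2.1 • e) - s q.1)} :=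
    isClosed_setOf_eq (by fun_prop) (by fun_prop)
  refine closure_minimal ?_ hclosed h
  rintro _ ⟨q, rfl⟩
  simp only [Set.mem_ofPred_eq]
  ring

theorem smul_mem_slopeVariety (c : K) (h : (x, δ, μ, ν) ∈ slopeVariety s e) :
    (x, δ, c * μ, c * ν) ∈ slopeVariety s e := by
  have hclosed : IsClosed {q : (κ → K) × K × K × K |
      (q.1, q.2.1, c * q.2.2.1, c * q.2.2.2) ∈ slopeVariety s e} :=
    isClosed_setOf_mem isClosed_slopeVariety (by fun_prop)
  refine closure_minimal ?_ hclosed h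
  rintro _ ⟨q, rfl⟩
  exact subset_closure ⟨(q.1, q.2.1, c * q.2.2), by simp only [mul_assoc]⟩

theorem dimGE_slopeVariety (hs : IsMorphism s) :
    DimGE (dim (κ → K) + 2) (slopeVariety s e) := by
  refine .of_closure_image isClosed_slopeVariety (isIrreducible_slopeVariety hs)
    (f := fun q => (q.1, q.2.1, q.2.2.1)) (by fun_prop) ?_
  rw [Set.eq_univ_of_forall (mem_of_isClosed_of_forall_ne isClosed_closure (f := fun q => q.2.1)
    (g := fun _ => (0 : K)) (by fun_prop) (by fun_prop) (p := (0, 1, 0)) one_ne_zero ?_)]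
  · exact dimGE_univ
  · rintro ⟨x, δ, μ⟩ hδ
    exact subset_closure ⟨(x, δ, μ, μ * (s (x + δ • e) - s x) / δ),
      mem_slopeVariety_of_ne_zero hδ (div_mul_cancel₀ _ hδ), rfl⟩

theorem hasDim_slopeVariety (hs : IsMorphism s) : HasDim (dim (κ → K) + 2) (slopeVariety s e) := by
  refine ⟨dimGE_slopeVariety hs, fun h => ?_⟩
  have huniv := (h : DimGE (dim ((κ → K) × K × K × K)) _).eq_univ
  simpa using eq_of_mem_slopeVariety hs (huniv.symm.subset (Set.mem_univ ((0 : κ → K), 1, 0, 1)))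

theorem indeterminateSlopes_ne_univ (hs : IsMorphism s) :
    indeterminateSlopes s e ≠ Set.univ := by
  intro h
  obtain ⟨T, hT, -, -, hT0⟩ := exists_dimGE_subset_eqOn (n := dim (κ → K) + 2)
    (f := fun q : (κ → K) × K × K × K => q.2.1) (g := fun _ => (0 : K)) (by fun_prop)
    (by fun_prop) (dimGE_univ (X := (κ → K) × K × K × K)) (p := (0, 0, 0, 0)) trivial rfl
  have hTslope : T ⊆ slopeVariety s e := by
    rintro ⟨x, δ, μ, ν⟩ hq
    obtain rfl : δ = 0 := hT0 hq
    exact h.symm.subset (Set.mem_univ x) μ ν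
  have hone : ((0 : κ → K), 1, 0, 0) ∈ T :=
    (hasDim_slopeVariety hs).eq_of_subset hT hTslope ▸ zero_mem_slopeVariety 0 1
  exact one_ne_zero (α := K) (hT0 hone)

theorem finite_setOf_mem_slopeVariety (hx : x ∉ indeterminateSlopes s e) :
    {μ | (x, 0, μ, 1) ∈ slopeVariety s e}.Finite ∧
      {ν | (x, 0, 1, ν) ∈ slopeVariety s e}.Finite := by
  let C : Set (K × K) := {v | (x, 0, v.1, v.2) ∈ slopeVariety s e}
  have hC : IsClosed C := isClosed_setOf_mem isClosed_slopeVariety (by fun_prop)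
  have hcone (c : K) (v) (hv : v ∈ C) : (c * v.1, c * v.2) ∈ C := smul_mem_slopeVariety c hv
  have hne : C ≠ Set.univ := fun h => hx fun μ ν => h.symm.subset (Set.mem_univ (μ, ν))
  exact ⟨finite_setOf_mk_one_mem hC hcone hne, finite_setOf_one_mk_mem hC hcone hne⟩

theorem exists_isIrreducible_slope_pairs (hs : IsMorphism s) (hx : x ∉ indeterminateSlopes s e)
    (hμ : (x, 0, μ, 1) ∈ slopeVariety s e) (hν : (x, 0, 1, ν) ∈ slopeVariety s e) :
    ∃ P ⊆ slopeVariety s e ×ˢ slopeVariety s e, IsIrreducible P ∧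
      ((x, 0, μ, 1), (x, 0, 1, ν)) ∈ P ∧ (∀ q ∈ P, q.1.1 = q.2.1 ∧ q.1.2.1 = q.2.2.1) ∧
      ¬ P ⊆ {q | q.1.2.1 = 0} := by
  obtain ⟨P, hP, hxP, hPslope, hPeq⟩ := exists_dimGE_subset_eqOn (n := dim (κ → K) + 3)
    (f := fun q : ((κ → K) × K × K × K) × (κ → K) × K × K × K => (q.1.1, q.1.2.1))
    (g := fun q => (q.2.1, q.2.2.1)) (by fun_prop) (by fun_prop)
    (((dimGE_slopeVariety hs).prod (dimGE_slopeVariety hs)).mono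
      (by simp only [dim_prod, dim_base]; lia)) (p := ((x, 0, μ, 1), (x, 0, 1, ν))) ⟨hμ, hν⟩ rfl
  have hbase (q) (hq : q ∈ P) : q.1.1 = q.2.1 ∧ q.1.2.1 = q.2.2.1 := by simpa using hPeq hq
  let coords (q : ((κ → K) × K × K × K) × (κ → K) × K × K × K) : (κ → K) × K × K × K :=
    (q.1.1, q.1.2.1, q.1.2.2.2, q.2.2.2.1)
  have hfin : {q ∈ P | coords q = coords ((x, 0, μ, 1), (x, 0, 1, ν))}.Finite := by
    obtain ⟨hfin, hfin'⟩ := finite_setOf_mem_slopeVariety hx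
    refine ((hfin.prod hfin').image fun ab => ((x, 0, ab.1, 1), (x, 0, 1, ab.2))).subset ?_
    rintro ⟨⟨y, δ, μ', ν'⟩, y', δ', μ'', ν''⟩ ⟨hq, hcoords⟩
    obtain ⟨rfl, rfl⟩ : y = y' ∧ δ = δ' := hbase _ hq
    simp only [coords, Prod.mk.injEq] at hcoords
    obtain ⟨rfl, rfl, rfl, rfl⟩ := hcoords
    exact ⟨(μ', ν''), hPslope hq, rfl⟩
  have hdense : closure (coords '' P) = Set.univ :=
    (hP.closure_image_of_finite_fibre (by fun_prop) hxP hfin).eq_univ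
  refine ⟨P, hPslope, hP.isIrreducible, hxP, hbase, fun h => ?_⟩
  exact one_ne_zero (mem_of_closure_image_eq_univ hdense (C := {q | q.2.1 = 0})
    (isClosed_setOf_eq (by fun_prop) (by fun_prop)) h (0, 1, 0, 0))

-- Off `δ = 0` the slope is unique, and the pairs of slopes over a common base point that
-- specialise to the given pair are generically off `δ = 0`.
theorem mul_eq_one_of_mem_slopeVariety (hs : IsMorphism s) (hx : x ∉ indeterminateSlopes s e)
    (hμ : (x, 0, μ, 1) ∈ slopeVariety s e) (hν : (x, 0, 1, ν) ∈ slopeVariety s e) :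
    μ * ν = 1 := by
  obtain ⟨P, hPslope, hPirr, hxP, hbase, hP0⟩ := exists_isIrreducible_slope_pairs hs hx hμ hν
  have hcross : P ⊆ {q | q.1.2.2.1 * q.2.2.2.2 = q.1.2.2.2 * q.2.2.2.1} := by
    refine subset_of_isIrreducible_of_forall_notMem hPirr
      (isClosed_setOf_eq (by fun_prop) (by fun_prop)) hP0
      (isClosed_setOf_eq (by fun_prop) (by fun_prop)) ?_
    rintro ⟨⟨y, δ, μ', ν'⟩, y', δ', μ'', ν''⟩ hq hδ
    obtain ⟨rfl, rfl⟩ : y = y' ∧ δ = δ' := hbase _ hq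
    have h₁ := eq_of_mem_slopeVariety hs (hPslope hq).1
    have h₂ := eq_of_mem_slopeVariety hs (hPslope hq).2
    refine mul_right_cancel₀ hδ ?_
    linear_combination μ' * h₂ - μ'' * h₁
  simpa using hcross hxP

end Slope

section BinaryForm

variable {R : Type*} [CommRing R] {N : ℕ}

/-- The binary form of degree `N` whose coefficient at `t ^ i * u ^ (N - i)` is `Q i`, evaluated at
`v = (t, u)`. -/
def binaryForm (Q : Fin (N + 1) → R) (v : R × R) : R :=
  ∑ i, Q i * (v.1 ^ (i : ℕ) * v.2 ^ (N - i))

/-- The quotient of `binaryForm Q (t, u) - binaryForm Q (t', u)` by `t - t'`, as a polynomial. -/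
def dividedDifference (Q : Fin (N + 1) → R) (t t' u : R) : R :=
  ∑ i, Q i * (u ^ (N - i) * ∑ m ∈ Finset.range i, t ^ m * t' ^ ((i : ℕ) - 1 - m))

theorem binaryForm_mul (Q : Fin (N + 1) → R) (c : R) (v : R × R) :
    binaryForm Q (c * v.1, c * v.2) = c ^ N * binaryForm Q v := by
  simp only [binaryForm, Finset.mul_sum]
  refine Finset.sum_congr rfl fun i _ => ?_
  have hN : c ^ N = c ^ (i : ℕ) * c ^ (N - i) := by rw [← pow_add]; congr 1; lia
  rw [hN, mul_pow, mul_pow]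
  ring

theorem dividedDifference_mul_sub (Q : Fin (N + 1) → R) (t t' u : R) :
    dividedDifference Q t t' u * (t - t') = binaryForm Q (t, u) - binaryForm Q (t', u) := by
  simp only [dividedDifference, binaryForm, Finset.sum_mul, ← Finset.sum_sub_distrib]
  refine Finset.sum_congr rfl fun i _ => ?_
  rw [mul_assoc, mul_assoc, geom_sum₂_mul]
  ring

theorem binaryForm_toFn {P : Polynomial R} (hP : P.natDegree ≤ N) (t : R) :
    binaryForm (P.toFn (N + 1)) (t, 1) = P.eval t := by
  rw [Polynomial.eval_eq_sum_range' (Nat.lt_succ_of_le hP),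
    ← Fin.sum_univ_eq_sum_range (fun i => P.coeff i * t ^ i)]
  simp [binaryForm, Polynomial.toFn]

theorem dividedDifference_toFn_self {P : Polynomial R} (hP : P.natDegree ≤ N) (t : R) :
    dividedDifference (P.toFn (N + 1)) t t 1 = P.derivative.eval t := by
  rw [Polynomial.derivative_eval, P.sum_over_range' (by simp) (N + 1) (Nat.lt_succ_of_le hP),
    ← Fin.sum_univ_eq_sum_range (fun i => P.coeff i * i * t ^ (i - 1))]
  simp [dividedDifference, Polynomial.toFn, geom_sum₂_self, mul_assoc]

end BinaryForm

section BinaryFormOfPolynomial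

variable {K : Type u} [Field K] {N : ℕ}

theorem binaryForm_toFn_nodal (τ : Fin N → K) (v : K × K) :
    binaryForm ((Lagrange.nodal Finset.univ τ).toFn (N + 1)) v = ∏ i, (v.1 - τ i * v.2) := by
  have hdeg : (Lagrange.nodal Finset.univ τ).natDegree = N := by simp [Lagrange.natDegree_nodal]
  obtain ⟨t, u⟩ := v
  rcases eq_or_ne u 0 with rfl | hu
  · have hlead : (Lagrange.nodal Finset.univ τ).coeff N = 1 := by
      simpa [hdeg] using (Lagrange.nodal_monic (s := Finset.univ) (v := τ)).coeff_natDegree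
    simp [binaryForm, Fin.sum_univ_castSucc, Polynomial.toFn, hlead,
      Finset.sum_eq_zero, Nat.sub_ne_zero_of_lt]
  · have hscale := binaryForm_mul ((Lagrange.nodal Finset.univ τ).toFn (N + 1)) u (t / u, 1)
    rw [binaryForm_toFn hdeg.le, Lagrange.eval_nodal, mul_one, mul_div_cancel₀ _ hu] at hscale
    calc binaryForm ((Lagrange.nodal Finset.univ τ).toFn (N + 1)) (t, u)
      _ = ∏ i, u * (t / u - τ i) := by simpa [Finset.prod_mul_distrib] using hscale
      _ = ∏ i, (t - τ i * u) := Finset.prod_congr rfl fun i _ => by field_simp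

theorem dividedDifference_toFn_nodal_ne_zero {τ : Fin N → K} (hτ : Function.Injective τ)
    (i : Fin N) :
    dividedDifference ((Lagrange.nodal Finset.univ τ).toFn (N + 1)) (τ i) (τ i) 1 ≠ 0 := by
  rw [dividedDifference_toFn_self (by simp [Lagrange.natDegree_nodal]),
    Lagrange.eval_nodal_derivative_eval_node_eq (Finset.mem_univ i), Lagrange.eval_nodal,
    Finset.prod_ne_zero_iff]
  exact fun j hj => sub_ne_zero.2 fun h => Finset.ne_of_mem_erase hj (hτ h).symm

end BinaryFormOfPolynomial

section BinaryFormMorphism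

variable {K : Type u} [Field K] [HasZariskiGeometry K] [RefinesZariski K]
variable {X : Type u} [CartesianPower K X] {N : ℕ}

@[fun_prop]
theorem IsMorphism.binaryForm {Q : X → Fin (N + 1) → K} {v : X → K × K} (hQ : IsMorphism Q)
    (hv : IsMorphism v) : IsMorphism fun x => binaryForm (Q x) (v x) := by
  unfold ZariskiGeometry.binaryForm
  fun_prop

@[fun_prop]
theorem IsMorphism.dividedDifference {Q : X → Fin (N + 1) → K} {t t' u : X → K}
    (hQ : IsMorphism Q) (ht : IsMorphism t) (ht' : IsMorphism t') (hu : IsMorphism u) :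
    IsMorphism fun x => dividedDifference (Q x) (t x) (t' x) (u x) := by
  unfold ZariskiGeometry.dividedDifference
  fun_prop

end BinaryFormMorphism

section Pencil

variable {K : Type u} [Field K] {N : ℕ}

/-- The members `l * h - Q` of the linear system spanned by a function `h` and the binary forms `Q`
of degree `N`, each together with `N + 1` of its zeros. -/
def pencilIncidence (N : ℕ) (h : K × K → K) :
    Set (K × (Fin (N + 1) → K) × (Fin (N + 1) → K × K)) :=
  {z | ∀ j, z.1 * h (z.2.2 j) = binaryForm z.2.1 (z.2.2 j)}

variable [HasZariskiGeometry K] [RefinesZariski K] {h : K × K → K}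
variable {Y : Set (K × (Fin (N + 1) → K) × (Fin (N + 1) → K × K))}

theorem isClosed_pencilIncidence (hh : IsMorphism h) : IsClosed (pencilIncidence N h) := by
  simp only [pencilIncidence, Set.ofPred_forall]
  exact isClosed_iInter fun j => isClosed_setOf_eq (by fun_prop) (by fun_prop)

theorem exists_isIrredComponentOf_pencilIncidence (hh : IsMorphism h) {z}
    (hz : z ∈ pencilIncidence N h) :
    ∃ Y, IsIrredComponentOf powerTopology Y (pencilIncidence N h) ∧ z ∈ Y ∧
      DimGE (2 * N + 3) Y := by
  obtain ⟨T, hT, hzT, -, hTeq⟩ := exists_dimGE_subset_eqOn (n := 2 * N + 3)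
    (f := fun z : K × (Fin (N + 1) → K) × (Fin (N + 1) → K × K) => fun j => z.1 * h (z.2.2 j))
    (g := fun z j => binaryForm z.2.1 (z.2.2 j)) (by fun_prop) (by fun_prop)
    (dimGE_univ.mono (by simp only [dim_prod, dim_base, dim_pi, Fintype.card_fin]; lia))
    (Set.mem_univ z) (funext hz)
  obtain ⟨Y, hY, hTY⟩ := exists_isIrredComponentOf_of_subset (isClosed_pencilIncidence hh)
    hT.isIrreducible fun w hw => congrFun (hTeq hw)
  exact ⟨Y, hY, hTY hzT, hT.mono_set (isClosed_of_isIrredComponentOf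
    (isClosed_pencilIncidence hh) hY) hY.1.2 hTY⟩

theorem closure_image_pencilIncidence_eq_univ (hY : DimGE (2 * N + 3) Y)
    (hYh : Y ⊆ pencilIncidence N h) {Q : Fin (N + 1) → K} {t : Fin (N + 1) → K}
    (hfin : {t | h (t, 1) = binaryForm Q (t, 1)}.Finite) (hp : (1, Q, fun j => (t j, 1)) ∈ Y) :
    closure ((fun z => (z.1, z.2.1, fun j => (z.2.2 j).2)) '' Y) = Set.univ := by
  refine ((hY.closure_image_of_finite_fibre (by fun_prop) hp ?_).mono
    (by simp only [dim_prod, dim_base, dim_pi, Fintype.card_fin]; lia)).eq_univ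
  refine ((Set.Finite.pi' fun _ => hfin).image
    fun w => ((1 : K), Q, fun j => (w j, (1 : K)))).subset ?_
  rintro ⟨l, Q', v⟩ ⟨hz, heq⟩
  simp only [Prod.mk.injEq] at heq
  obtain ⟨rfl, rfl, hu⟩ := heq
  have hv (j) : v j = ((v j).1, 1) := Prod.ext rfl (congrFun hu j)
  refine ⟨fun j => (v j).1, fun j => ?_, by simp only [← hv]⟩
  have hzero := hYh hz j
  simp only [one_mul] at hzero
  rwa [Set.mem_ofPred_eq, ← hv]

theorem mk_zero_mem_of_isIrredComponentOf_pencilIncidence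
    (hhom : ∀ c t u, h (c * t, c * u) = c ^ N * h (t, u))
    (hY : IsIrredComponentOf powerTopology Y (pencilIncidence N h)) (hYcl : IsClosed Y)
    (hdense : closure ((fun z => (z.1, z.2.1, fun j => (z.2.2 j).2)) '' Y) = Set.univ)
    (l : K) (Q : Fin (N + 1) → K) : (l, Q, 0) ∈ Y := by
  have hscale {z} (hz : z ∈ Y) := mem_of_isIrredComponentOf_of_action hY
    (A := fun c z => (z.1, z.2.1, fun j => (c * (z.2.2 j).1, c * (z.2.2 j).2))) (by fun_prop)
    (c₀ := 1) (by simp) (fun c z hz j => by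
      simp only [hhom, binaryForm_mul, ← hz j]
      ring) 0 hz
  refine mem_of_closure_image_eq_univ hdense (C := {q | (q.1, q.2.1, 0) ∈ Y})
    (isClosed_setOf_mem hYcl (by fun_prop)) (fun z hz => ?_) (l, Q, 0)
  simp only [zero_mul] at hscale
  exact hscale hz

theorem exists_mk_nodal_mem_of_mk_zero_mem (hY : DimGE (2 * N + 3) Y)
    (hYh : Y ⊆ pencilIncidence N h) (τ : Fin N → K)
    (hzero : (0, (Lagrange.nodal Finset.univ τ).toFn (N + 1), 0) ∈ Y) :
    ∃ c : Fin (N + 1) → Fin N,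
      (0, (Lagrange.nodal Finset.univ τ).toFn (N + 1), fun j => (τ (c j), 1)) ∈ Y := by
  set Q := (Lagrange.nodal Finset.univ τ).toFn (N + 1)
  obtain ⟨T, hT, -, hTY, hTeq⟩ := exists_dimGE_subset_eqOn (n := N + 1)
    (f := fun z : K × (Fin (N + 1) → K) × (Fin (N + 1) → K × K) => (z.1, z.2.1))
    (g := fun _ => (0, Q)) (by fun_prop) (by fun_prop)
    (hY.mono (by simp only [dim_prod, dim_base, dim_pi, Fintype.card_fin]; lia)) hzero rfl
  obtain ⟨c, hc⟩ : ∃ c : Fin (N + 1) → Fin N,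
      T ⊆ {z | ∀ j, (z.2.2 j).1 = τ (c j) * (z.2.2 j).2} := by
    refine exists_subset_of_isIrreducible_of_subset_iUnion hT.isIrreducible (fun c => ?_) ?_
    · simp only [Set.ofPred_forall]
      exact isClosed_iInter fun j => isClosed_setOf_eq (by fun_prop) (by fun_prop)
    · rintro ⟨l, Q', v⟩ hz
      obtain ⟨rfl, rfl⟩ : l = 0 ∧ Q' = Q := by simpa using hTeq hz
      have hroot (j) : ∃ i, (v j).1 = τ i * (v j).2 := by
        have hprod : 0 * h (v j) = ∏ i, ((v j).1 - τ i * (v j).2) :=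
          (hYh (hTY hz) j).trans (binaryForm_toFn_nodal τ (v j))
        obtain ⟨i, -, hi⟩ := Finset.prod_eq_zero_iff.1 (hprod.symm.trans (zero_mul _))
        exact ⟨i, sub_eq_zero.1 hi⟩
      choose c hc using hroot
      exact Set.mem_iUnion.2 ⟨c, hc⟩
  have hTpar {z} (hz : z ∈ T) : z = (0, Q, fun j => (τ (c j) * (z.2.2 j).2, (z.2.2 j).2)) := by
    obtain ⟨hl, hQ'⟩ : z.1 = 0 ∧ z.2.1 = Q := by simpa using hTeq hz
    exact Prod.ext hl (Prod.ext hQ' (funext fun j => Prod.ext (hc hz j) rfl))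
  have hdense : closure ((fun z j => (z.2.2 j).2) '' T) = Set.univ := by
    refine ((hT.closure_image_of_injOn (by fun_prop) fun z hz z' hz' heq => ?_).mono
      (by simp only [dim_base, dim_pi, Fintype.card_fin]; lia)).eq_univ
    rw [hTpar hz, hTpar hz']
    simp only [funext_iff] at heq
    simp only [heq]
  have hmem := mem_of_closure_image_eq_univ hdense
    (C := {u : Fin (N + 1) → K | (0, Q, fun j => (τ (c j) * u j, u j)) ∈ Y})
    (isClosed_setOf_mem hY.isClosed (by fun_prop))
    (fun z hz => Set.mem_ofPred_eq ▸ hTpar hz ▸ hTY hz) 1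
  exact ⟨c, by simpa using hmem⟩

theorem exists_isIrreducible_subset_pencilIncidence (hh : IsMorphism h)
    (hhom : ∀ c t u, h (c * t, c * u) = c ^ N * h (t, u)) {Q : Fin (N + 1) → K}
    {t : Fin (N + 1) → K} (hfin : {x | h (x, 1) = binaryForm Q (x, 1)}.Finite)
    (hp : (1, Q, fun j => (t j, 1)) ∈ pencilIncidence N h) (τ : Fin N → K) :
    ∃ Y ⊆ pencilIncidence N h, IsIrreducible Y ∧ (1, Q, fun j => (t j, 1)) ∈ Y ∧
      ∃ c : Fin (N + 1) → Fin N,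
        (0, (Lagrange.nodal Finset.univ τ).toFn (N + 1), fun j => (τ (c j), 1)) ∈ Y := by
  obtain ⟨Y, hY, hpY, hYdim⟩ := exists_isIrredComponentOf_pencilIncidence hh hp
  have hdense := closure_image_pencilIncidence_eq_univ hYdim hY.1.1 hfin hpY
  exact ⟨Y, hY.1.1, hY.1.2, hpY, exists_mk_nodal_mem_of_mk_zero_mem hYdim hY.1.1 τ
    (mk_zero_mem_of_isIrredComponentOf_pencilIncidence hhom hY hYdim.isClosed hdense 0 _)⟩

end Pencil

section DegreeCounting

variable {K : Type u} [Field K] [HasZariskiGeometry K]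
variable {κ : Type} [Fintype κ] {s : (κ → K) → K} {N : ℕ} {a e : κ → K}

theorem mem_slopeVariety_of_mul_eq_binaryForm (hom : ∀ (c : K) y, s (c • y) = c ^ N * s y)
    {l : K} {Q : Fin (N + 1) → K} {v w : K × K}
    (hv : l * s (v.2 • a + v.1 • e) = binaryForm Q v)
    (hw : l * s (w.2 • a + w.1 • e) = binaryForm Q w) (hvw : v.1 * w.2 ≠ w.1 * v.2) :
    ((v.2 * w.2) • a + (w.1 * v.2) • e, v.1 * w.2 - w.1 * v.2, l,
      dividedDifference Q (v.1 * w.2) (w.1 * v.2) (v.2 * w.2)) ∈ slopeVariety s e := by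
  refine mem_slopeVariety_of_ne_zero (sub_ne_zero.2 hvw) ?_
  have hv' : l * s ((v.2 * w.2) • a + (v.1 * w.2) • e) =
      binaryForm Q (v.1 * w.2, v.2 * w.2) := by
    rw [mul_comm v.2, mul_comm v.1, binaryForm_mul, ← hv, mul_smul, mul_smul, ← smul_add, hom]
    ring
  have hw' : l * s ((v.2 * w.2) • a + (w.1 * v.2) • e) =
      binaryForm Q (w.1 * v.2, v.2 * w.2) := by
    rw [mul_comm w.1, binaryForm_mul, ← hw, mul_smul, mul_smul, ← smul_add, hom]
    ring
  rw [dividedDifference_mul_sub, ← hv', ← hw', add_assoc, ← add_smul, add_sub_cancel]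
  ring

variable [RefinesZariski K]

theorem mem_slopeVariety_of_subset_pencilIncidence (hom : ∀ (c : K) y, s (c • y) = c ^ N * s y)
    {Y : Set (K × (Fin (N + 1) → K) × (Fin (N + 1) → K × K))} (hY : IsIrreducible Y)
    (hYs : Y ⊆ pencilIncidence N fun v => s (v.2 • a + v.1 • e)) {i j : Fin (N + 1)} {p}
    (hp : p ∈ Y) (hij : (p.2.2 i).1 * (p.2.2 j).2 ≠ (p.2.2 j).1 * (p.2.2 i).2) :
    Y ⊆ {z | (((z.2.2 i).2 * (z.2.2 j).2) • a + ((z.2.2 j).1 * (z.2.2 i).2) • e,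
      (z.2.2 i).1 * (z.2.2 j).2 - (z.2.2 j).1 * (z.2.2 i).2, z.1,
      dividedDifference z.2.1 ((z.2.2 i).1 * (z.2.2 j).2) ((z.2.2 j).1 * (z.2.2 i).2)
        ((z.2.2 i).2 * (z.2.2 j).2)) ∈ slopeVariety s e} :=
  subset_of_isIrreducible_of_forall_notMem hY
    (F := {z : K × _ × (Fin (N + 1) → K × K) |
      (z.2.2 i).1 * (z.2.2 j).2 = (z.2.2 j).1 * (z.2.2 i).2})
    (isClosed_setOf_eq (by fun_prop) (by fun_prop)) (fun h => hij (h hp))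
    (isClosed_setOf_mem isClosed_slopeVariety (by fun_prop))
    fun _ hz hne => mem_slopeVariety_of_mul_eq_binaryForm hom (hYs hz i) (hYs hz j) hne

theorem exists_injective_forall_notMem {B : Set (κ → K)} (hB : IsClosed B) (ha : a ∉ B)
    (e : κ → K) (N : ℕ) : ∃ τ : Fin N → K, Function.Injective τ ∧ ∀ i, a + τ i • e ∉ B := by
  have := infinite_base (K := K)
  have hfin : {t : K | a + t • e ∈ B}.Finite :=
    finite_of_isClosed_of_ne_univ (isClosed_setOf_mem hB (by fun_prop)) fun h =>
      ha (by simpa using h.symm.subset (Set.mem_univ 0))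
  have τ := hfin.infinite_compl.natEmbedding
  exact ⟨fun i => τ i, Subtype.val_injective.comp (τ.injective.comp Fin.val_injective),
    fun i => (τ i).2⟩

-- If `s` differed from the interpolating polynomial `P`, then `N + 1` of the zeros of `l * s - Q`
-- could be followed from `(l, Q) = (1, P)` to `l = 0` and a `Q` with only `N` zeros, all simple.
-- Two of them collide there, and the slope of `s` along the pair tends to infinity.
theorem eval_interpolate_eq_of_notMem (hs : IsMorphism s)
    (hom : ∀ (c : K) y, s (c • y) = c ^ N * s y) {B : Set (κ → K)} (hB : IsClosed B)
    (hslope : ∀ a ∉ B, (a, 0, 0, 1) ∉ slopeVariety s e) {t : Fin (N + 1) → K}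
    (ht : Function.Injective t) (ha : a ∉ B) (t₀ : K) :
    (Lagrange.interpolate Finset.univ t fun j => s (a + t j • e)).eval t₀ = s (a + t₀ • e) := by
  set P := Lagrange.interpolate Finset.univ t fun j => s (a + t j • e) with hP
  have hPdeg : P.natDegree ≤ N := Polynomial.natDegree_le_of_degree_le <| by
    simpa only [Finset.card_univ, Fintype.card_fin, Nat.add_sub_cancel] using
      Lagrange.degree_interpolate_le (s := Finset.univ) (v := t) (fun j => s (a + t j • e)) ht.injOn
  have hP₁ (x : K) : binaryForm (P.toFn (N + 1)) (x, 1) = P.eval x := binaryForm_toFn hPdeg x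
  let h (v : K × K) : K := s (v.2 • a + v.1 • e)
  have hh : IsMorphism h := by fun_prop
  have hhom (c x u) : h (c * x, c * u) = c ^ N * h (x, u) := by
    simp only [h, mul_smul, ← smul_add, hom]
  have hp : (1, P.toFn (N + 1), fun j => (t j, 1)) ∈ pencilIncidence N h := fun j => by
    simp only [h, hP₁, one_mul, one_smul]
    rw [hP, Lagrange.eval_interpolate_at_node _ ht.injOn (Finset.mem_univ j)]
  by_contra hne
  have hfin : {x | h (x, 1) = binaryForm (P.toFn (N + 1)) (x, 1)}.Finite :=
    finite_of_isClosed_of_ne_univ (isClosed_setOf_eq (by fun_prop) (by fun_prop)) fun huniv =>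
      hne (by simpa [h, hP₁] using (huniv.symm.subset (Set.mem_univ t₀)).symm)
  obtain ⟨τ, hτ, hτB⟩ := exists_injective_forall_notMem hB ha e N
  obtain ⟨Y, hYs, hY, hpY, c, hc⟩ := exists_isIrreducible_subset_pencilIncidence hh hhom hfin hp τ
  obtain ⟨i, j, hij, hcij⟩ := Fintype.exists_ne_map_eq_of_card_lt c (by simp)
  have hcollide := mem_slopeVariety_of_subset_pencilIncidence hom hY hYs hpY
    (by simpa using ht.ne hij) hc
  simp only [Set.mem_ofPred_eq, mul_one, one_smul, hcij, sub_self] at hcollide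
  have hvert := smul_mem_slopeVariety
    (dividedDifference ((Lagrange.nodal Finset.univ τ).toFn (N + 1)) (τ (c j)) (τ (c j)) 1)⁻¹
    hcollide
  rw [mul_zero, inv_mul_cancel₀ (dividedDifference_toFn_nodal_ne_zero hτ (c j))] at hvert
  exact hslope _ (hτB (c j)) hvert

theorem apply_add_smul_eq_sum_basis (hs : IsMorphism s)
    (hom : ∀ (c : K) y, s (c • y) = c ^ N * s y) {B : Set (κ → K)} (hB : IsClosed B)
    (hBne : B ≠ Set.univ) (hslope : ∀ a ∉ B, (a, 0, 0, 1) ∉ slopeVariety s e)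
    {t : Fin (N + 1) → K} (ht : Function.Injective t) (a : κ → K) (t₀ : K) :
    s (a + t₀ • e) = ∑ j, (Lagrange.basis Finset.univ t j).eval t₀ * s (a + t j • e) := by
  refine subset_of_isIrreducible_of_forall_notMem isIrreducible_univ hB
    (fun h => hBne (Set.eq_univ_of_univ_subset h))
    (C := {a | s (a + t₀ • e) = ∑ j, (Lagrange.basis Finset.univ t j).eval t₀ * s (a + t j • e)})
    (isClosed_setOf_eq (by fun_prop) (by fun_prop)) (fun a _ ha => ?_) (Set.mem_univ a)
  rw [Set.mem_ofPred_eq, ← eval_interpolate_eq_of_notMem hs hom hB hslope ht ha t₀,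
    Lagrange.interpolate_apply, Polynomial.eval_finsetSum]
  simp [mul_comm]

end DegreeCounting

section SeparatelyPolynomial

variable {K κ ι : Type*} [Field K]

theorem eval_aeval (y : κ → K) (P : MvPolynomial κ K) (B : Polynomial K) :
    MvPolynomial.eval y (Polynomial.aeval P B) = B.eval (MvPolynomial.eval y P) := by
  simpa [MvPolynomial.coe_aeval_eq_eval] using
    (Polynomial.aeval_algHom_apply (MvPolynomial.aeval y) P B).symm

theorem exists_eval_eq_of_forall_eq_sum [Finite κ] [DecidableEq κ] [Fintype ι]
    {f : (κ → K) → K} {t : ι → K} {B : ι → Polynomial K}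
    (h : ∀ i y, f y = ∑ j, (B j).eval (y i) * f (Function.update y i (t j))) :
    ∃ P : MvPolynomial κ K, ∀ y, MvPolynomial.eval y P = f y := by
  have := Fintype.ofFinite κ
  suffices key : ∀ (A : Finset κ) (w : κ → K), ∃ P : MvPolynomial κ K,
      ∀ y, MvPolynomial.eval y P = f (A.piecewise y w) by
    simpa using key Finset.univ 0
  intro A
  induction A using Finset.induction_on with
  | empty => exact fun w => ⟨MvPolynomial.C (f w), by simp⟩
  | insert a A ha ih =>
    intro w
    choose P hP using fun j => ih (Function.update w a (t j))
    refine ⟨∑ j, Polynomial.aeval (MvPolynomial.X a) (B j) * P j, fun y => ?_⟩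
    rw [h a, map_sum]
    refine Finset.sum_congr rfl fun j _ => ?_
    have hupdate : A.piecewise y (Function.update w a (t j)) =
        Function.update ((insert a A).piecewise y w) a (t j) := by
      ext i
      rcases eq_or_ne i a with rfl | hi <;> by_cases hiA : i ∈ A <;> simp_all [Finset.piecewise]
    rw [map_mul, eval_aeval, hP, hupdate, MvPolynomial.eval_X]
    simp

end SeparatelyPolynomial

section GenericProjection

open Matrix

theorem eq_of_mulVec_eq {R ι : Type*} [Ring R] [IsDomain R] [Fintype ι] {r : ℕ}
    {l l' : Fin r → ι → R} {v : ι → R} {j : ι} (hj : v j ≠ 0) (h : of l *ᵥ v = of l' *ᵥ v)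
    (hl : ∀ a j', j' ≠ j → l a j' = l' a j') : l = l' := by
  classical
  have hcol (a j') : l a j' = l' a j' ∨ j' = j := or_iff_not_imp_right.2 (hl a j')
  ext a j'
  refine (hcol a j').elim id ?_
  rintro rfl
  have hrow : ∑ i, (l a i - l' a i) * v i = 0 := by
    have hsum : ∑ i, l a i * v i = ∑ i, l' a i * v i := congrFun h a
    simp only [sub_mul, Finset.sum_sub_distrib, hsum, sub_self]
  rw [Finset.sum_eq_single_of_mem j' (Finset.mem_univ _) fun i _ hi => by
    rw [hl a i hi, sub_self, zero_mul]] at hrow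
  exact sub_eq_zero.1 ((mul_eq_zero.1 hrow).resolve_right hj)

variable {K : Type u} [Field K] [HasZariskiGeometry K]
variable {X Y : Type u} [CartesianPower K X] [CartesianPower K Y] {ι : Type} [Fintype ι] {r : ℕ}

-- Near `p`, a point `(x, l)` of `S` is determined by `g x` and all columns of `l` but one.
theorem not_dimGE_of_mulVec_eq {A : Set X} {g : X → Y} (hg : IsMorphism g) {v : X → ι → K}
    {w : X → Fin r → K} {S : Set (X × (Fin r → ι → K))}
    (hS : ∀ q ∈ S, q.1 ∈ A ∧ of q.2 *ᵥ v q.1 = w q.1) {p : X × (Fin r → ι → K)} (hp : p ∈ S)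
    (hfin : {x ∈ A | g x = g p.1}.Finite) (hv : v p.1 ≠ 0) {n : ℕ}
    (hn : dim Y + r * Fintype.card ι < n + r) : ¬ DimGE n S := by
  classical
  obtain ⟨j, hj⟩ := Function.ne_iff.1 hv
  have hcard : Fintype.card {j' // j' ≠ j} + 1 = Fintype.card ι := by
    rw [Fintype.card_subtype_compl, Fintype.card_subtype_eq,
      Nat.sub_add_cancel (Fintype.card_pos_iff.2 ⟨j⟩)]
  let f (q : X × (Fin r → ι → K)) : Y × (Fin r → {j' // j' ≠ j} → K) :=
    (g q.1, fun a j' => q.2 a j')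
  intro hdim
  refine not_dimGE_of_fibre_subset_singleton (f := f) (by fun_prop) hp ?_ (hdim.mono ?_)
  · intro T hTS _ hT hpT hTf q hq
    have hgT (x) (hx : x ∈ T) : g x.1 = g p.1 := congrArg Prod.fst (hTf x hx)
    have hfst : q.1 = p.1 := eq_of_isIrreducible_of_mapsTo_finite hT
      (IsMorphism.fst .id).continuous hfin (fun x hx => ⟨(hS x (hTS hx)).1, hgT x hx⟩) hq hpT
    have heq : of q.2 *ᵥ v p.1 = of p.2 *ᵥ v p.1 := by
      rw [(hS p hp).2, ← hfst, (hS q (hTS hq)).2]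
    refine Prod.ext hfst (eq_of_mulVec_eq hj heq fun a j' hj' => ?_)
    exact congrFun₂ (congrArg Prod.snd (hTf q hq)) a ⟨j', hj'⟩
  · rw [← hcard, mul_add_one] at hn
    simp only [dim_prod, dim_pi, dim_base, Fintype.card_fin]
    lia

theorem dimGE_prod_diagonal {S : Set X} (hS : DimGE r S) :
    DimGE (r + dim Y) {p : (X × X) × Y | p.1.1 ∈ S ∧ p.1.1 = p.1.2} := by
  have himage : (fun q : X × Y => ((q.1, q.1), q.2)) '' (S ×ˢ Set.univ) =
      {p | p.1.1 ∈ S ∧ p.1.1 = p.1.2} := by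
    ext ⟨⟨a, b⟩, y⟩
    aesop
  rw [← himage]
  exact (hS.prod dimGE_univ).image_of_leftInverse (π := fun p => (p.1.1, p.2)) (by fun_prop)
    (by fun_prop) fun _ => rfl

variable {T : Set (ι → K)}

/-- The limits `((p, q), l)` of pairs of distinct points `p`, `q` of `T` which a linear map `l` to
an `r`-dimensional space identifies. A point `q` with `((q, q), l)` in this set is to be thought of
as a ramification point of `l` on `T`. -/
def doublePoints (r : ℕ) (T : Set (ι → K)) : Set (((ι → K) × (ι → K)) × (Fin r → ι → K)) :=
  closure {p | p.1.1 ≠ p.1.2 ∧ (p.1.1 ∈ T ∧ p.1.2 ∈ T) ∧ of p.2 *ᵥ (p.1.1 - p.1.2) = 0}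

theorem isClosed_doublePoints : IsClosed (doublePoints r T) := isClosed_closure

/-- `T` is an irreducible cone of dimension `r` on which only the origin is mapped to `0` by the
linear map `l` to `r`-space. Such a map is finite and dominant on `T`. -/
structure IsFiniteProjection (l : Fin r → ι → K) (T : Set (ι → K)) : Prop where
  hasDim : HasDim r T
  smul_mem (c : K) {q : ι → K} : q ∈ T → c • q ∈ T
  eq_zero_of_mulVec_eq_zero {q : ι → K} : q ∈ T → of l *ᵥ q = 0 → q = 0

variable [RefinesZariski K]

@[fun_prop]
theorem IsMorphism.dotProduct {f g : X → ι → K} (hf : IsMorphism f) (hg : IsMorphism g) :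
    IsMorphism fun x => f x ⬝ᵥ g x := by
  simp only [_root_.dotProduct]
  fun_prop

@[fun_prop]
theorem IsMorphism.mulVec {l : X → Fin r → ι → K} {v : X → ι → K} (hl : IsMorphism l)
    (hv : IsMorphism v) : IsMorphism fun x => of (l x) *ᵥ v x :=
  .pi fun a => by simp only [Matrix.mulVec, of_apply]; fun_prop

theorem closure_image_mulVec_eq_zero_ne_univ (hT : HasDim r T)
    (hcone : ∀ c : K, ∀ q ∈ T, c • q ∈ T) (j : ι) :
    closure (Prod.snd '' {p : (ι → K) × (Fin r → ι → K) |
      (p.1 ∈ T ∧ p.1 j = 1) ∧ of p.2 *ᵥ p.1 = 0}) ≠ Set.univ := by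
  intro huniv
  let A : Set (ι → K) := {v | v ∈ T ∧ v j = 1}
  have hA : IsClosed A := hT.isClosed.inter (isClosed_setOf_eq (by fun_prop) (by fun_prop))
  have hAdim (B) (hBA : B ⊆ A) : ¬ DimGE r B := fun hB => by
    obtain ⟨q, hq⟩ := hT.isIrreducible.nonempty
    have hBT : B = T := hT.eq_of_subset hB fun v hv => (hBA hv).1
    have hzero : ((0 : K) • q) j = 1 := (hBA (hBT ▸ hcone 0 q hq)).2
    simp at hzero
  obtain ⟨S, hSsub, hS, hSirr, hSuniv⟩ := exists_isIrreducible_subset_closure_image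
    ((isClosed_setOf_mem hA (.fst .id)).inter (isClosed_setOf_eq (by fun_prop) (by fun_prop)))
    (isIrreducible_univ (X := Fin r → ι → K)) huniv.ge
  have hSdim : DimGE (dim (Fin r → ι → K)) S :=
    .of_closure_image hS hSirr (.snd .id) (Set.univ_subset_iff.1 hSuniv ▸ dimGE_univ)
  obtain ⟨p, hp⟩ := hSirr.nonempty
  obtain ⟨hpA, -⟩ := hSsub hp
  obtain _ | r := r
  · exact hAdim {p.1} (by simpa using hpA) ⟨isClosed_singleton, isIrreducible_singleton⟩
  obtain ⟨g, hg, hgp, hfin⟩ := exists_isMorphism_finite_fibre hA hAdim p.1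
  refine not_dimGE_of_mulVec_eq (A := A) (v := id) (w := 0) hg (fun q hq => hSsub hq) hp
    (hgp.symm ▸ hfin) ?_ ?_ hSdim
  · exact fun h => one_ne_zero (hpA.2.symm.trans (congrFun h j))
  · simp only [dim_pi, dim_base, Fintype.card_fin]
    lia

theorem setOf_forall_mem_doublePoints_ne_univ (hT : HasDim r T) :
    {l : Fin r → ι → K | ∀ q ∈ T, ((q, q), l) ∈ doublePoints r T} ≠ Set.univ := by
  intro huniv
  let N : Set (((ι → K) × (ι → K)) × (Fin r → ι → K)) :=
    {p | (p.1.1 ∈ T ∧ p.1.2 ∈ T) ∧ of p.2 *ᵥ (p.1.1 - p.1.2) = 0}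
  have hN : IsClosed N := ((isClosed_setOf_mem hT.isClosed (by fun_prop)).inter
    (isClosed_setOf_mem hT.isClosed (by fun_prop))).inter
      (isClosed_setOf_eq (by fun_prop) (by fun_prop))
  let Δ : Set (((ι → K) × (ι → K)) × (Fin r → ι → K)) := {p | p.1.1 ∈ T ∧ p.1.1 = p.1.2}
  have hΔ : DimGE (r + dim (Fin r → ι → K)) Δ := dimGE_prod_diagonal hT.1
  have hΔN : Δ ⊆ closure (N \ {p | p.1.1 = p.1.2}) := by
    rintro ⟨⟨q, q'⟩, l⟩ ⟨hq, rfl : q = q'⟩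
    have hmem : ((q, q), l) ∈ doublePoints r T := huniv.symm.subset (Set.mem_univ l) q hq
    exact closure_mono (t := N \ {p | p.1.1 = p.1.2}) (fun p hp => ⟨hp.2, hp.1⟩) hmem
  obtain ⟨A, hAN, hA, hAirr, hΔA, hAne⟩ :=
    exists_isIrreducible_superset_of_subset_closure_diff hN hΔ.isIrreducible hΔN
  obtain ⟨p, hp, hpne⟩ := Set.not_subset.1 hAne
  have hAdim : DimGE (r + dim (Fin r → ι → K) + 1) A :=
    ⟨hA, hAirr, Δ, ⟨hΔA, fun h => hpne (h hp).2⟩, hΔ⟩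
  have hTdim (B) (hB : B ⊆ T) : ¬ DimGE (r + 1) B := fun h =>
    hT.2 (h.mono_set hT.isClosed hT.isIrreducible hB)
  obtain ⟨g, hg, hgp, hgfin⟩ := exists_isMorphism_finite_fibre hT.isClosed hTdim p.1.1
  obtain ⟨g', hg', hgp', hgfin'⟩ := exists_isMorphism_finite_fibre hT.isClosed hTdim p.1.2
  refine not_dimGE_of_mulVec_eq (A := T ×ˢ T) (v := fun a => a.1 - a.2) (w := 0)
    (g := fun a => (g a.1, g' a.2)) (by fun_prop) (fun q hq => hAN hq) hp ?_
    (sub_ne_zero.2 hpne) ?_ hAdim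
  · refine (hgfin.prod hgfin').subset fun a ha => ?_
    obtain ⟨h, h'⟩ : g a.1 = g p.1.1 ∧ g' a.2 = g' p.1.2 := Prod.ext_iff.1 ha.2
    exact ⟨⟨ha.1.1, h.trans hgp⟩, ha.1.2, h'.trans hgp'⟩
  · simp only [dim_prod, dim_pi, dim_base, Fintype.card_fin]
    lia

theorem exists_isFiniteProjection_notMem_doublePoints (hT : HasDim r T)
    (hcone : ∀ c : K, ∀ q ∈ T, c • q ∈ T) :
    ∃ l : Fin r → ι → K, IsFiniteProjection l T ∧ ∃ q ∈ T, ((q, q), l) ∉ doublePoints r T := by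
  let F : Option ι → Set (Fin r → ι → K)
    | none => {l | ∀ q ∈ T, ((q, q), l) ∈ doublePoints r T}
    | some j => closure (Prod.snd '' {p : (ι → K) × (Fin r → ι → K) |
        (p.1 ∈ T ∧ p.1 j = 1) ∧ of p.2 *ᵥ p.1 = 0})
  have hF : ∀ o, IsClosed (F o)
    | none => by
      simp only [F, Set.ofPred_forall]
      exact isClosed_iInter fun q => isClosed_iInter fun _ =>
        isClosed_setOf_mem isClosed_doublePoints (f := fun l => ((q, q), l)) (by fun_prop)
    | some j => isClosed_closure
  have hFne : ∀ o, F o ≠ Set.univ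
    | none => setOf_forall_mem_doublePoints_ne_univ hT
    | some j => closure_image_mulVec_eq_zero_ne_univ hT hcone j
  obtain ⟨l, hl⟩ := exists_forall_notMem hF hFne
  refine ⟨l, ⟨hT, fun c q => hcone c q, fun {v} hv hlv => ?_⟩, ?_⟩
  · by_contra hne
    obtain ⟨j, hj⟩ := Function.ne_iff.1 hne
    refine hl (some j) (subset_closure ⟨((v j)⁻¹ • v, l), ⟨⟨hcone _ _ hv, ?_⟩, ?_⟩, rfl⟩)
    · exact inv_mul_cancel₀ hj
    · simp only [mulVec_smul, hlv, smul_zero]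
  · simpa [F] using hl none

end GenericProjection

section FibreCardinality

theorem exists_injective_of_le_ncard {α : Type*} {A : Set α} (hA : A.Finite) {n : ℕ}
    (h : n ≤ A.ncard) : ∃ w : Fin n → α, Function.Injective w ∧ ∀ c, w c ∈ A := by
  have := hA.fintype
  rw [← Nat.card_coe_set_eq, Nat.card_eq_fintype_card] at h
  obtain ⟨w⟩ := Function.Embedding.nonempty_of_card_le ((Fintype.card_fin n).trans_le h)
  exact ⟨fun c => w c, Subtype.val_injective.comp w.injective, fun c => (w c).2⟩

variable {K : Type u} [HasZariskiGeometry K]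
variable {X Y : Type u} [CartesianPower K X] [CartesianPower K Y]

theorem isClosed_setOf_not_injective {k : ℕ} {f : X → Fin k → Y} (hf : IsMorphism f) :
    IsClosed {x | ¬ Function.Injective (f x)} := by
  have hunion : {x | ¬ Function.Injective (f x)} =
      ⋃ c : {c : Fin k × Fin k // c.1 ≠ c.2}, {x | f x c.1.1 = f x c.1.2} := by
    ext x
    simp [Function.Injective, and_comm]
  rw [hunion]
  exact isClosed_iUnion_of_finite fun c => isClosed_setOf_eq (by fun_prop) (by fun_prop)

variable [Nontrivial K]

theorem exists_isClosed_ncard_fibre_le {ι : Type} [Fintype ι] {T : Set (ι → K)}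
    (hT : HasDim (dim Y) T) {f : (ι → K) → Y} (hf : IsMorphism f) :
    ∃ m, ∃ B : Set Y, IsClosed B ∧ B ≠ Set.univ ∧ ∀ y ∉ B, {q ∈ T | f q = y}.ncard ≤ m := by
  classical
  let H (i : ι) : Set (Y × K) := closure ((fun q => (f q, q i)) '' T)
  let B (i : ι) : Set Y := {y | ∀ b, (y, b) ∈ H i}
  have hB (i) : IsClosed (B i) := by
    simp only [B, Set.ofPred_forall]
    exact isClosed_iInter fun b => isClosed_setOf_mem isClosed_closure (by fun_prop)
  have hBne (i) : B i ≠ Set.univ := fun h => by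
    have hH : H i = Set.univ :=
      Set.eq_univ_of_forall fun y => h.symm.subset (Set.mem_univ y.1) y.2
    have hdim : DimGE (dim (Y × K)) (H i) := hH ▸ dimGE_univ
    exact hT.2 (.of_closure_image hT.isClosed hT.isIrreducible (by fun_prop) hdim)
  choose m hm using fun i => exists_ncard_fibre_le (isClosed_closure : IsClosed (H i))
  obtain ⟨x, hx⟩ := exists_forall_notMem hB hBne
  refine ⟨∏ i, m i, ⋃ i, B i, isClosed_iUnion_of_finite hB,
    (Set.ne_univ_iff_exists_notMem _).2 ⟨x, by simpa using hx⟩, fun y hy => ?_⟩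
  have hfin (i) := (hm i y).resolve_left fun h => hy (Set.mem_iUnion.2 ⟨i, h⟩)
  let F (i : ι) : Finset K := (hfin i).1.toFinset
  have hsub : {q ∈ T | f q = y} ⊆ Fintype.piFinset F := by
    rintro q ⟨hq, rfl⟩
    simp only [Finset.mem_coe, Fintype.mem_piFinset, F, Set.Finite.mem_toFinset]
    exact fun i => subset_closure ⟨q, hq, rfl⟩
  calc {q ∈ T | f q = y}.ncard ≤ (Fintype.piFinset F : Set (ι → K)).ncard :=
        Set.ncard_le_ncard hsub (Finset.finite_toSet _)
    _ = ∏ i, (F i).card := by rw [Set.ncard_coe_finset, Fintype.card_piFinset]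
    _ ≤ ∏ i, m i := Finset.prod_le_prod' fun i _ => by
        rw [← Set.ncard_eq_toFinset_card _ (hfin i).1]
        exact (hfin i).2

theorem exists_isClosed_ncard_fibre_le_ncard_fibre {ι : Type} [Fintype ι] {T : Set (ι → K)}
    (hT : HasDim (dim Y) T) {f : (ι → K) → Y} (hf : IsMorphism f) :
    ∃ x, ∃ B : Set Y, IsClosed B ∧ B ≠ Set.univ ∧
      ∀ y ∉ B, {q ∈ T | f q = y}.ncard ≤ {q ∈ T | f q = x}.ncard := by
  obtain ⟨m, B, hB, hBne, hm⟩ := exists_isClosed_ncard_fibre_le hT hf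
  let counts : Set ℕ := (fun y => {q ∈ T | f q = y}.ncard) '' Bᶜ
  have hbdd : BddAbove counts := ⟨m, by rintro _ ⟨y, hy, rfl⟩; exact hm y hy⟩
  obtain ⟨x, -, hx : {q ∈ T | f q = x}.ncard = sSup counts⟩ :=
    Nat.sSup_mem ((Set.nonempty_compl.2 hBne).image _) hbdd
  exact ⟨x, B, hB, hBne, fun y hy => hx.symm ▸ le_csSup hbdd ⟨y, hy, rfl⟩⟩

end FibreCardinality

section FiniteProjection

open Matrix

variable {K : Type u} [Field K] [HasZariskiGeometry K] {ι : Type} [Fintype ι] {r k n : ℕ}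
  {l : Fin r → ι → K} {T : Set (ι → K)}

/-- The `k`-fold fibred power of `T` over the linear map `l`: `k` points of `T` together with their
common image. -/
def fibredPower (l : Fin r → ι → K) (T : Set (ι → K)) (k : ℕ) :
    Set ((Fin k → ι → K) × (Fin r → K)) :=
  {p | ∀ c, p.1 c ∈ T ∧ of l *ᵥ p.1 c = p.2}

/-- `W` is an irreducible cone in the `k`-fold fibred power of `T` over `l` whose general points
enumerate the whole fibre of `l` on `T`, without repetition. -/
structure IsFibreFamily (l : Fin r → ι → K) (T : Set (ι → K))
    (W : Set ((Fin k → ι → K) × (Fin r → K))) : Prop where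
  dimGE : DimGE r W
  subset_fibredPower : W ⊆ fibredPower l T k
  smul_mem (c : K) {p : (Fin k → ι → K) × (Fin r → K)} : p ∈ W → c • p ∈ W
  exists_isClosed : ∃ B : Set (Fin r → K), IsClosed B ∧ B ≠ Set.univ ∧ ∀ p ∈ W, p.2 ∉ B →
    Function.Injective p.1 ∧ Set.range p.1 = {q ∈ T | of l *ᵥ q = p.2}

/-- `s (t, x)` is the product of the values of `t - d` at the members of any fibre `w` over `x` in
the family `W`; here `t` is the coordinate `none` of the argument of `s`, and `x` consists of the
others. -/
def IsNormForm (W : Set ((Fin k → ι → K) × (Fin r → K))) (d : ι → K)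
    (s : (Option (Fin r) → K) → K) : Prop :=
  ∀ y w, (w, fun i => y (some i)) ∈ W → s y = ∏ c, (y none - d ⬝ᵥ w c)

variable [RefinesZariski K]

theorem isClosed_fibredPower (hT : IsClosed T) : IsClosed (fibredPower l T k) := by
  simp only [fibredPower, Set.ofPred_forall]
  exact isClosed_iInter fun c => (isClosed_setOf_mem hT (by fun_prop)).inter
    (isClosed_setOf_eq (by fun_prop) (by fun_prop))

theorem exists_dimGE_subset_fibredPower (hT : DimGE r T) {p : (Fin k → ι → K) × (Fin r → K)}
    (hp : p ∈ fibredPower l T k) : ∃ S, DimGE r S ∧ p ∈ S ∧ S ⊆ fibredPower l T k := by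
  have hdim : DimGE (r + dim (Fin k → Fin r → K))
      ({w : Fin k → ι → K | ∀ c, w c ∈ T} ×ˢ (Set.univ : Set (Fin r → K))) :=
    ((hT.pi_fin k).prod dimGE_univ).mono <| by
      simp only [dim_pi, dim_base, Fintype.card_fin]; lia
  obtain ⟨S, hS, hpS, hSsub, hSeq⟩ := exists_dimGE_subset_eqOn
    (f := fun q c => of l *ᵥ q.1 c) (g := fun q _ => q.2) (by fun_prop) (by fun_prop) hdim
    (p := p) ⟨fun c => (hp c).1, trivial⟩ (funext fun c => (hp c).2)
  exact ⟨S, hS, hpS, fun q hq c => ⟨(hSsub hq).1 c, congrFun (hSeq hq) c⟩⟩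

theorem DimGE.closure_smul_image {S : Set (ι → K)} (hS : DimGE n S) (hzero : 0 ∉ S) :
    DimGE (n + 1) (closure ((fun q : K × (ι → K) => q.1 • q.2) '' (Set.univ ×ˢ S))) := by
  have hsmul : IsMorphism fun q : K × (ι → K) => q.1 • q.2 := by fun_prop
  obtain ⟨q, hq⟩ := hS.isIrreducible.nonempty
  refine ⟨isClosed_closure, ((isIrreducible_prod isIrreducible_univ hS.isIrreducible).image _
    hsmul.continuous.continuousOn).closure, S, ⟨?_, fun h => hzero (h ?_)⟩, hS⟩
  · exact fun q hq => subset_closure ⟨(1, q), ⟨trivial, hq⟩, one_smul K q⟩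
  · exact subset_closure ⟨(0, q), ⟨trivial, hq⟩, zero_smul K q⟩

namespace IsFiniteProjection

-- A positive-dimensional fibre spans a cone of dimension at least two lying over a single line, so
-- that cutting the cone with a hyperplane leaves a positive-dimensional part of the fibre over `0`.
theorem finite_fibre (hl : IsFiniteProjection l T) (x : Fin r → K) :
    {q ∈ T | of l *ᵥ q = x}.Finite := by
  have hker (S : Set (ι → K)) (hST : S ⊆ T) (hS : ∀ q ∈ S, of l *ᵥ q = 0) : ¬ DimGE 1 S :=
    not_dimGE_one_of_finite <| (Set.finite_singleton 0).subset fun q hq =>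
      hl.eq_zero_of_mulVec_eq_zero (hST hq) (hS q hq)
  refine finite_of_forall_not_dimGE_one
    (hl.hasDim.isClosed.inter (isClosed_setOf_eq (by fun_prop) (by fun_prop))) fun S hS hdim => ?_
  by_cases hx : x = 0
  · exact hker S (fun q hq => (hS hq).1) (fun q hq => (hS hq).2.trans hx) hdim
  obtain ⟨a, ha⟩ := Function.ne_iff.1 hx
  have hzero : 0 ∉ S := fun h => hx ((hS h).2.symm.trans (mulVec_zero _))
  let C : Set (ι → K) := closure ((fun q : K × (ι → K) => q.1 • q.2) '' (Set.univ ×ˢ S))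
  have hCT : C ⊆ T := closure_minimal
    (by rintro _ ⟨q, ⟨-, hq⟩, rfl⟩; exact hl.smul_mem _ (hS hq).1) hl.hasDim.isClosed
  have hCline : C ⊆ {q | (x a) • (of l *ᵥ q) = (of l *ᵥ q) a • x} := by
    refine closure_minimal ?_ (isClosed_setOf_eq (by fun_prop) (by fun_prop))
    rintro _ ⟨⟨c, q⟩, ⟨-, hq⟩, rfl⟩
    simp only [Set.mem_ofPred_eq, mulVec_smul, (hS hq).2, Pi.smul_apply, smul_smul, smul_eq_mul,
      mul_comm]
  obtain ⟨q, hq⟩ := hdim.isIrreducible.nonempty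
  obtain ⟨S', hS', -, hS'C, hS'eq⟩ := exists_dimGE_subset_eqOn_base
    (f := fun q => (of l *ᵥ q) a) (g := fun _ => 0) (by fun_prop) (by fun_prop)
    (hdim.closure_smul_image hzero) (p := 0) (subset_closure ⟨(0, q), ⟨trivial, hq⟩, zero_smul K q⟩)
    (congrFun (mulVec_zero _) a)
  refine hker S' (hS'C.trans hCT) (fun q hq => ?_) hS'
  have hline : x a • (of l *ᵥ q) = (of l *ᵥ q) a • x := hCline (hS'C hq)
  rw [show (of l *ᵥ q) a = 0 from hS'eq hq, zero_smul] at hline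
  exact (smul_eq_zero.1 hline).resolve_left ha

theorem finite_fibredPower_fibre (hl : IsFiniteProjection l T) (x : Fin r → K) :
    {p ∈ fibredPower l T k | p.2 = x}.Finite := by
  refine ((Set.Finite.pi' fun _ : Fin k => hl.finite_fibre x).image (·, x)).subset ?_
  rintro ⟨w, y⟩ ⟨hw, rfl⟩
  exact ⟨w, hw, rfl⟩

variable {S : Set ((Fin k → ι → K) × (Fin r → K))}

theorem dimGE_closure_snd_image (hl : IsFiniteProjection l T) (hS : S ⊆ fibredPower l T k)
    (h : DimGE n S) : DimGE n (closure (Prod.snd '' S)) :=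
  h.closure_image_of_finite_fibres (.snd .id) fun y =>
    (hl.finite_fibredPower_fibre y).subset fun _ hp => ⟨hS hp.1, hp.2⟩

theorem hasDim_of_subset_fibredPower (hl : IsFiniteProjection l T) (hS : S ⊆ fibredPower l T k)
    (h : DimGE r S) : HasDim r S := by
  refine ⟨h, fun h' => not_dimGE_dim_add_one ((hl.dimGE_closure_snd_image hS h').mono ?_)⟩
  simp only [dim_pi, dim_base, Fintype.card_fin]; lia

theorem closure_snd_image_not_injective_ne_univ (hl : IsFiniteProjection l T)
    (hS : S ⊆ fibredPower l T k) (h : DimGE r S) {p : (Fin k → ι → K) × (Fin r → K)} (hp : p ∈ S)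
    (hinj : Function.Injective p.1) :
    closure (Prod.snd '' {q ∈ S | ¬ Function.Injective q.1}) ≠ Set.univ := by
  have hdim : HasDim (dim (Fin r → K)) S := by
    simpa only [dim_pi, dim_base, Fintype.card_fin, mul_one] using
      hl.hasDim_of_subset_fibredPower hS h
  exact closure_image_ne_univ_of_ssubset hdim
    (h.isClosed.inter (isClosed_setOf_not_injective (.fst .id)))
    ⟨Set.sep_subset _ _, fun h' => (h' hp).2 hinj⟩ (.snd .id)

theorem smul_mem_of_isIrredComponentOf_fibredPower (hl : IsFiniteProjection l T)
    (hS : IsIrredComponentOf powerTopology S (fibredPower l T k)) (c : K)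
    {p : (Fin k → ι → K) × (Fin r → K)} (hp : p ∈ S) : c • p ∈ S := by
  refine mem_of_isIrredComponentOf_of_action hS (A := fun c p => c • p) ?_ (c₀ := 1)
    (fun p => one_smul K p) (fun c p hp j => ⟨hl.smul_mem c (hp j).1, ?_⟩) c hp
  · exact (IsMorphism.pi fun j => by simp only [Pi.smul_apply]; fun_prop).prodMk
      (by fun_prop)
  · exact (mulVec_smul _ _ _).trans (congrArg (c • ·) (hp j).2)

theorem exists_isFibreFamily (hl : IsFiniteProjection l T) :
    ∃ (k : ℕ) (W : Set ((Fin k → ι → K) × (Fin r → K))), IsFibreFamily l T W := by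
  have hdim : HasDim (dim (Fin r → K)) T := by
    simpa only [dim_pi, dim_base, Fintype.card_fin, mul_one] using hl.hasDim
  obtain ⟨x, B, hB, hBne, hmax⟩ :=
    exists_isClosed_ncard_fibre_le_ncard_fibre hdim (f := fun q => of l *ᵥ q) (by fun_prop)
  set k := {q ∈ T | of l *ᵥ q = x}.ncard with hk
  obtain ⟨w, hwinj, hw⟩ := exists_injective_of_le_ncard (hl.finite_fibre x) hk.le
  obtain ⟨S, hS, hwS, hSsub⟩ := exists_dimGE_subset_fibredPower hl.hasDim.1 (p := (w, x)) hw
  have hclosed : IsClosed (fibredPower l T k) := isClosed_fibredPower hl.hasDim.isClosed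
  obtain ⟨W, hW, hSW⟩ := exists_isIrredComponentOf_of_subset hclosed hS.isIrreducible hSsub
  have hWdim : DimGE r W := hS.mono_set (isClosed_of_isIrredComponentOf hclosed hW) hW.1.2 hSW
  let D : Set (Fin r → K) := closure (Prod.snd '' {p ∈ W | ¬ Function.Injective p.1})
  have hD : D ≠ Set.univ :=
    hl.closure_snd_image_not_injective_ne_univ hW.1.1 hWdim (hSW hwS) hwinj
  obtain ⟨y, hyB, hyD⟩ := exists_notMem_notMem hB isClosed_closure hBne hD
  refine ⟨k, W, hWdim, hW.1.1, hl.smul_mem_of_isIrredComponentOf_fibredPower hW, B ∪ D,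
    hB.union isClosed_closure, ?_, fun p hp hpB => ?_⟩
  · exact (Set.ne_univ_iff_exists_notMem _).2 ⟨y, fun h => h.elim hyB hyD⟩
  have hinj : Function.Injective p.1 := by
    by_contra h
    exact hpB (.inr (subset_closure ⟨p, ⟨hp, h⟩, rfl⟩))
  refine ⟨hinj, Set.eq_of_subset_of_ncard_le ?_ ?_ (hl.finite_fibre p.2)⟩
  · exact Set.range_subset_iff.2 fun c => hW.1.1 hp c
  · rw [← Set.image_univ, Set.ncard_image_of_injective _ hinj, Set.ncard_univ, Nat.card_fin]
    exact hmax p.2 fun h => hpB (.inl h)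

end IsFiniteProjection

namespace IsFibreFamily

variable {W : Set ((Fin k → ι → K) × (Fin r → K))}

theorem exists_mk_mem (hW : IsFibreFamily l T W) (hl : IsFiniteProjection l T) (x : Fin r → K) :
    ∃ w, (w, x) ∈ W := by
  obtain ⟨p, hp⟩ := hW.dimGE.isIrreducible.nonempty
  have hzero : (0 : (Fin k → ι → K) × (Fin r → K)) ∈ W := zero_smul K p ▸ hW.smul_mem 0 hp
  obtain ⟨S, hS, -, hSsub, hSeq⟩ := exists_dimGE_subset_eqOn (n := 1)
    (f := fun p : ((Fin k → ι → K) × (Fin r → K)) × K => p.1.2) (g := fun p => p.2 • x)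
    (by fun_prop) (by fun_prop) ((hW.dimGE.prod dimGE_univ).mono <| by
      simp only [dim_pi, dim_base, Fintype.card_fin]; lia)
    (p := (0, 0)) ⟨hzero, trivial⟩ (zero_smul K x).symm
  have hne : ¬ S ⊆ {(0, 0)} := fun h => not_dimGE_one_of_finite (Set.toFinite _ |>.subset h) hS
  obtain ⟨⟨⟨w, y⟩, c⟩, hp, hpne⟩ := Set.not_subset.1 hne
  obtain rfl : y = c • x := hSeq hp
  have hc : c ≠ 0 := by
    rintro rfl
    have hw (j) : w j = 0 := hl.eq_zero_of_mulVec_eq_zero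
      (hW.subset_fibredPower (hSsub hp).1 j).1
      ((hW.subset_fibredPower (hSsub hp).1 j).2.trans (zero_smul K x))
    obtain rfl : w = 0 := funext hw
    exact hpne (Set.mem_singleton_iff.2 (by rw [zero_smul, Prod.mk_zero_zero]))
  have hmem : c⁻¹ • (w, c • x) ∈ W := hW.smul_mem c⁻¹ (hSsub hp).1
  rw [Prod.smul_mk, inv_smul_smul₀ hc] at hmem
  exact ⟨_, hmem⟩

theorem prod_eq_prod (hW : IsFibreFamily l T W) (hl : IsFiniteProjection l T) {f : (ι → K) → K}
    (hf : IsMorphism f) {p p' : (Fin k → ι → K) × (Fin r → K)} (hp : p ∈ W) (hp' : p' ∈ W)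
    (h : p.2 = p'.2) : ∏ c, f (p.1 c) = ∏ c, f (p'.1 c) := by
  obtain ⟨B, hB, hBne, hWB⟩ := hW.exists_isClosed
  let π (q : ((Fin k → ι → K) × (Fin r → K)) × ((Fin k → ι → K) × (Fin r → K))) := q.1.2
  obtain ⟨S, hS, hpS, hSsub, hSeq⟩ := exists_dimGE_subset_eqOn (n := r) (f := π)
    (g := fun q => q.2.2) (by fun_prop) (by fun_prop) ((hW.dimGE.prod hW.dimGE).mono <| by
      simp only [dim_pi, dim_base, Fintype.card_fin]; lia) (p := (p, p')) ⟨hp, hp'⟩ h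
  have hSeq' {q} (hq : q ∈ S) : q.1.2 = q.2.2 := hSeq hq
  have hdense : closure (π '' S) = Set.univ := by
    refine DimGE.eq_univ ((hS.closure_image_of_finite_fibres (by fun_prop) fun y => ?_).mono <| by
      simp only [dim_pi, dim_base, Fintype.card_fin]; lia)
    refine ((hl.finite_fibredPower_fibre (k := k) y).prod
      (hl.finite_fibredPower_fibre (k := k) y)).subset ?_
    rintro q ⟨hq, rfl⟩
    exact ⟨⟨hW.subset_fibredPower (hSsub hq).1, rfl⟩,
      hW.subset_fibredPower (hSsub hq).2, (hSeq' hq).symm⟩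
  refine subset_of_isIrreducible_of_forall_notMem hS.isIrreducible (F := {q | π q ∈ B})
    (isClosed_setOf_mem hB (by fun_prop)) (fun hSB => ?_)
    (C := {q | ∏ c, f (q.1.1 c) = ∏ c, f (q.2.1 c)})
    (isClosed_setOf_eq (by fun_prop) (by fun_prop)) (fun q hq hqB => ?_) hpS
  · exact hBne (Set.eq_univ_of_forall (mem_of_closure_image_eq_univ hdense hB hSB))
  obtain ⟨hinj, hrange⟩ := hWB q.1 (hSsub hq).1 hqB
  obtain ⟨hinj', hrange'⟩ := hWB q.2 (hSsub hq).2 (hSeq' hq ▸ hqB)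
  rw [← hSeq' hq, ← hrange] at hrange'
  let σ : Fin k ≃ Fin k := (Equiv.ofInjective _ hinj).trans
    ((Equiv.setCongr hrange'.symm).trans (Equiv.ofInjective _ hinj').symm)
  refine Fintype.prod_equiv σ _ _ fun c => congrArg f ?_
  exact (Equiv.apply_ofInjective_symm hinj' ⟨q.1.1 c, _⟩).symm

theorem exists_isNormForm (hW : IsFibreFamily l T W) (hl : IsFiniteProjection l T) (d : ι → K) :
    ∃ s, IsMorphism s ∧ IsNormForm W d s ∧ ∀ (c : K) y, s (c • y) = c ^ k * s y := by
  choose w₀ hw₀ using hW.exists_mk_mem hl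
  let s (y : Option (Fin r) → K) : K := ∏ c, (y none - d ⬝ᵥ w₀ (fun i => y (some i)) c)
  have hs : IsNormForm W d s := fun y w hw =>
    hW.prod_eq_prod hl (f := fun v => y none - d ⬝ᵥ v) (by fun_prop) (hw₀ _) hw rfl
  refine ⟨s, ?_, hs, fun c y => ?_⟩
  · refine isMorphism_of_comp_eqOn (A := W ×ˢ (Set.univ : Set K)) (l := fun q o => o.elim q.2 q.1.2)
      (E := fun q => ∏ c, (q.2 - d ⬝ᵥ q.1.1 c)) ((hW.dimGE.prod dimGE_univ).mono ?_) (by fun_prop)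
      (fun y _ => ?_) (fun y => ?_) (by fun_prop) ?_
    · simp only [dim_pi, dim_base, Fintype.card_option, Fintype.card_fin]; lia
    · exact ⟨((w₀ fun i => y (some i), fun i => y (some i)), y none), ⟨hw₀ _, trivial⟩,
        funext fun o => by cases o <;> rfl⟩
    · refine ((hl.finite_fibredPower_fibre (k := k) fun i => y (some i)).prod
        (Set.finite_singleton (y none))).subset ?_
      rintro q ⟨hq, rfl⟩
      exact ⟨⟨hW.subset_fibredPower hq.1, rfl⟩, rfl⟩
    · exact fun q hq => hs (fun o => o.elim q.2 q.1.2) q.1.1 hq.1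
  · have hmem : (c • w₀ fun i => y (some i), fun i => (c • y) (some i)) ∈ W :=
      hW.smul_mem c (hw₀ fun i => y (some i))
    simp only [hs _ _ hmem, Pi.smul_apply, smul_eq_mul, dotProduct_smul, ← mul_sub,
      Finset.prod_mul_distrib, Finset.prod_const, Finset.card_univ, Fintype.card_fin, s]

end IsFibreFamily

end FiniteProjection

section LimitDirection

variable {K : Type u} [Field K] [HasZariskiGeometry K] [RefinesZariski K]
variable {X : Type u} [CartesianPower K X] {κ : Type} [Fintype κ]

-- The closure below is the affine cone over the blow-up of `P` along `g = 0`; its dimension exceeds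
-- that of `P`, so that its fibre over `p` has positive dimension.
theorem exists_ne_zero_mk_mem_closure {P : Set X} (hP : IsClosed P) (hPirr : IsIrreducible P)
    {g : X → κ → K} (hg : IsMorphism g) (hgne : ∃ q ∈ P, g q ≠ 0) {p : X} (hp : p ∈ P) :
    ∃ v ≠ 0, (p, v) ∈ closure ((fun q : X × K => (q.1, q.2 • g q.1)) '' (P ×ˢ Set.univ)) := by
  obtain ⟨n, hn⟩ := exists_hasDim hP hPirr
  obtain ⟨q, hq, hgq⟩ := hgne
  set Θ := closure ((fun q : X × K => (q.1, q.2 • g q.1)) '' (P ×ˢ Set.univ))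
  have hsection : (fun q => (q, (0 : κ → K))) '' P ⊂ Θ := by
    refine ⟨?_, fun h => ?_⟩
    · rintro _ ⟨q, hq, rfl⟩
      exact subset_closure ⟨(q, 0), ⟨hq, trivial⟩, congrArg (q, ·) (zero_smul K (g q))⟩
    · obtain ⟨q', -, hq'⟩ := h (subset_closure ⟨(q, 1), ⟨hq, trivial⟩, rfl⟩)
      exact hgq ((one_smul K _).symm.trans (congrArg Prod.snd hq').symm)
  have hdim : DimGE (n + 1) Θ := by
    refine ⟨isClosed_closure, ((isIrreducible_prod hPirr isIrreducible_univ).image _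
      (IsMorphism.continuous (by fun_prop)).continuousOn).closure, _, hsection, ?_⟩
    exact hn.1.image_of_leftInverse (π := fun θ : X × (κ → K) => θ.1) (by fun_prop)
      (by fun_prop) fun _ => rfl
  have hΘP : Θ ⊆ {θ | θ.1 ∈ P} := closure_minimal (by rintro _ ⟨q, hq, rfl⟩; exact hq.1)
    (isClosed_setOf_mem hP (.fst .id))
  obtain ⟨h, hh, hhp, hfin⟩ := exists_isMorphism_finite_fibre hP
    (fun T hTP hT => hn.2 (hT.mono_set hP hPirr hTP)) p
  obtain ⟨S, hS, hpS, hSΘ, hSeq⟩ := exists_dimGE_subset_eqOn (n := 1) (f := fun θ => h θ.1)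
    (g := fun _ => 0) (by fun_prop) (by fun_prop)
    (hdim.mono (by simp only [dim_pi, dim_base, Fintype.card_fin]; lia)) (p := (p, 0))
    (hsection.subset ⟨p, hp, rfl⟩) hhp
  have hfst {θ} (hθ : θ ∈ S) : θ.1 = p := eq_of_isIrreducible_of_mapsTo_finite hS.isIrreducible
    (IsMorphism.continuous (.fst .id)) hfin (fun θ hθ => ⟨hΘP (hSΘ hθ), hSeq hθ⟩) hθ hpS
  obtain ⟨⟨q, v⟩, hθ, hθne⟩ := Set.not_subset.1 fun h : S ⊆ {(p, 0)} =>
    not_dimGE_one_of_finite ((Set.finite_singleton _).subset h) hS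
  obtain rfl : q = p := hfst hθ
  exact ⟨v, fun hv => hθne (congrArg (q, ·) hv), hSΘ hθ⟩

theorem exists_ne_zero_forall_isClosed_mk_mem {P : Set X} (hP : IsClosed P)
    (hPirr : IsIrreducible P) {g : X → κ → K} (hg : IsMorphism g) {i : κ}
    (hgi : ∃ q ∈ P, g q i ≠ 0) {p : X} (hp : p ∈ P) :
    ∃ v ≠ 0, ∀ C : Set (X × (κ → K)), IsClosed C →
      (∀ q ∈ P, g q i ≠ 0 → ∀ α : K, (q, α • g q) ∈ C) → (p, v) ∈ C := by
  obtain ⟨q₀, hq₀, hgq₀⟩ := hgi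
  obtain ⟨v, hv, hmem⟩ := exists_ne_zero_mk_mem_closure hP hPirr hg
    ⟨q₀, hq₀, fun h => hgq₀ (congrFun h i)⟩ hp
  refine ⟨v, hv, fun C hC h => closure_minimal ?_ hC hmem⟩
  rintro _ ⟨⟨q, α⟩, ⟨hq, -⟩, rfl⟩
  exact subset_of_isIrreducible_of_forall_notMem hPirr (F := {q | g q i = 0})
    (isClosed_setOf_eq (by fun_prop) (by fun_prop)) (fun h => hgq₀ (h hq₀))
    (C := {q | (q, α • g q) ∈ C}) (isClosed_setOf_mem hC (by fun_prop))
    (fun q hq hgq => h q hq hgq α) hq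

end LimitDirection

section NormForm

open Matrix

theorem prod_sub_prod_eq_sum {R : Type*} [CommRing R] {k : ℕ} (f g : Fin k → R) :
    ∏ c, f c - ∏ c, g c = ∑ c, (f c - g c) * ((∏ j with j < c, f j) * ∏ j with c < j, g j) := by
  have h := Finset.prod_add_ordered Finset.univ g fun c => f c - g c
  simp only [add_sub_cancel] at h
  simp only [h, add_sub_cancel_left, mul_assoc]

theorem mul_sub_mul_mulVec {R ι κ : Type*} [CommRing R] [Fintype ι] (l : κ → ι → R) (a b : R)
    (e : κ → R) (d v : ι → R) : of (fun i j => a * l i j - b * (e i * d j)) *ᵥ v =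
      a • (of l *ᵥ v) - (b * (d ⬝ᵥ v)) • e := by
  have hmatrix : of (fun i j => a * l i j - b * (e i * d j)) = a • of l - b • vecMulVec e d := rfl
  rw [hmatrix, sub_mulVec, smul_mulVec, smul_mulVec, vecMulVec_mulVec, op_smul_eq_smul, smul_smul]

variable {K : Type u} [Field K] [HasZariskiGeometry K] {ι : Type} [Fintype ι]
  {r k : ℕ} {l : Fin r → ι → K} {T : Set (ι → K)} {W : Set ((Fin k → ι → K) × (Fin r → K))}
  {d : ι → K} {s : (Option (Fin r) → K) → K} {e : Fin r → K}

/-- The pairs of points of `W` whose images in `r`-space differ by a multiple of `e`, together with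
the factor. -/
def translatedPairs (W : Set ((Fin k → ι → K) × (Fin r → K))) (e : Fin r → K) :
    Set ((((Fin k → ι → K) × (Fin r → K)) × ((Fin k → ι → K) × (Fin r → K))) × K) :=
  {q | (q.1.1 ∈ W ∧ q.1.2 ∈ W) ∧ q.1.1.2 = q.1.2.2 + q.2 • e}

variable {q : (((Fin k → ι → K) × (Fin r → K)) × ((Fin k → ι → K) × (Fin r → K))) × K}

theorem mk_mem_doublePoints_of_mem_translatedPairs (hW : IsFibreFamily l T W) (he : e ≠ 0)
    (hq : q ∈ translatedPairs W e) (hδ : q.2 ≠ 0) (d : ι → K) (α : K) (c : Fin k) :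
    ((q.1.1.1 c, q.1.2.1 c), fun i j =>
      α * (d ⬝ᵥ (q.1.1.1 c - q.1.2.1 c)) * l i j - α * q.2 * (e i * d j)) ∈ doublePoints r T := by
  obtain ⟨hT₁, hl₁⟩ := hW.subset_fibredPower hq.1.1 c
  obtain ⟨hT₂, hl₂⟩ := hW.subset_fibredPower hq.1.2 c
  have hdiff : of l *ᵥ (q.1.1.1 c - q.1.2.1 c) = q.2 • e := by
    rw [mulVec_sub, hl₁, hl₂, hq.2, add_sub_cancel_left]
  refine subset_closure ⟨fun h => smul_ne_zero hδ he ?_, ⟨hT₁, hT₂⟩, ?_⟩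
  · rw [← hdiff, sub_eq_zero.2 h, mulVec_zero]
  · rw [mul_sub_mul_mulVec, hdiff, smul_smul, ← sub_smul, smul_eq_zero]
    exact .inl (by ring)

theorem IsNormForm.mk_mem_slopeVariety_of_mem_translatedPairs (hs : IsNormForm W d s)
    (hq : q ∈ translatedPairs W e) (hδ : q.2 ≠ 0) (t α : K) :
    ((fun o => o.elim t q.1.2.2), q.2, α * q.2, -∑ c, α * (d ⬝ᵥ (q.1.1.1 c - q.1.2.1 c)) *
        ((∏ j with j < c, (t - d ⬝ᵥ q.1.1.1 j)) * ∏ j with c < j, (t - d ⬝ᵥ q.1.2.1 j))) ∈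
      slopeVariety s fun o => o.elim 0 e := by
  refine mem_slopeVariety_of_ne_zero hδ ?_
  have htranslate : (fun o => o.elim t q.1.2.2) + q.2 • (fun o : Option (Fin r) => o.elim 0 e) =
      fun o => o.elim t q.1.1.2 := by
    ext (_ | i)
    · simp
    · simp [hq.2]
  rw [htranslate, hs _ q.1.1.1 hq.1.1, hs _ q.1.2.1 hq.1.2, prod_sub_prod_eq_sum,
    ← Finset.sum_neg_distrib, Finset.sum_mul, Finset.mul_sum]
  refine Finset.sum_congr rfl fun c _ => ?_
  simp only [Option.elim, dotProduct_sub]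
  ring

variable [RefinesZariski K]

theorem mem_doublePoints_of_smul_mem {p : (ι → K) × (ι → K)} {c : K} (hc : c ≠ 0)
    (h : (p, c • l) ∈ doublePoints r T) : (p, l) ∈ doublePoints r T := by
  have hclosed : IsClosed {q : ((ι → K) × (ι → K)) × (Fin r → ι → K) |
      (q.1, fun i j => c⁻¹ * q.2 i j) ∈ doublePoints r T} :=
    isClosed_setOf_mem isClosed_doublePoints (by fun_prop)
  have hsub : doublePoints r T ⊆ _ := closure_minimal (fun q hq => ?_) hclosed
  · simpa only [Set.mem_ofPred_eq, Pi.smul_apply, smul_eq_mul, inv_mul_cancel_left₀ hc] using hsub h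
  · refine subset_closure ⟨hq.1, hq.2.1, ?_⟩
    have hmatrix : of (fun i j => c⁻¹ * q.2 i j) = c⁻¹ • of q.2 := rfl
    rw [hmatrix, smul_mulVec, hq.2.2, smul_zero]

theorem exists_isIrreducible_subset_translatedPairs (hW : IsFibreFamily l T W)
    (hl : IsFiniteProjection l T) (e : Fin r → K) {p : (Fin k → ι → K) × (Fin r → K)}
    (hp : p ∈ W) : ∃ P ⊆ translatedPairs W e, IsClosed P ∧ IsIrreducible P ∧ ((p, p), 0) ∈ P ∧
      ∃ q ∈ P, q.2 ≠ 0 := by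
  obtain ⟨P, hP, hpP, hPsub, hPeq⟩ := exists_dimGE_subset_eqOn (n := r + 1)
    (f := fun q : (((Fin k → ι → K) × (Fin r → K)) × ((Fin k → ι → K) × (Fin r → K))) × K =>
      q.1.1.2) (g := fun q => q.1.2.2 + q.2 • e) (by fun_prop) (by fun_prop)
    (((hW.dimGE.prod hW.dimGE).prod dimGE_univ).mono <| by
      simp only [dim_pi, dim_base, Fintype.card_fin]; lia)
    (p := ((p, p), 0)) ⟨⟨hp, hp⟩, trivial⟩ (by simp only [zero_smul, add_zero])
  have hPeq' {q} (hq : q ∈ P) : q.1.1.2 = q.1.2.2 + q.2 • e := hPeq hq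
  refine ⟨P, fun q hq => ⟨(hPsub hq).1, hPeq hq⟩, hP.isClosed, hP.isIrreducible, hpP, ?_⟩
  by_contra! h
  refine not_dimGE_dim_add_one ((hP.closure_image_of_finite_fibres (f := fun q => q.1.1.2)
    (by fun_prop) fun x => ?_).mono (by simp only [dim_pi, dim_base, Fintype.card_fin]; lia))
  refine (((hl.finite_fibredPower_fibre (k := k) x).prod
    (hl.finite_fibredPower_fibre (k := k) x)).prod (Set.finite_singleton 0)).subset ?_
  rintro q ⟨hq, rfl⟩
  refine ⟨⟨⟨hW.subset_fibredPower (hPsub hq).1.1, rfl⟩,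
    ⟨hW.subset_fibredPower (hPsub hq).1.2, ?_⟩⟩, h q hq⟩
  simp only [hPeq' hq, h q hq, zero_smul, add_zero]

theorem IsNormForm.exists_limit_direction (hs : IsNormForm W d s) (hW : IsFibreFamily l T W)
    (hl : IsFiniteProjection l T) (he : e ≠ 0) {y : Option (Fin r) → K} {w : Fin k → ι → K}
    (hw : (w, fun i => y (some i)) ∈ W) :
    ∃ v : Option (Fin k) → K, v ≠ 0 ∧
      (∀ c, ((w c, w c), fun i j => v (some c) * l i j - v none * (e i * d j)) ∈
        doublePoints r T) ∧
      ∃ ν, (y, 0, v none, ν) ∈ slopeVariety s fun o => o.elim 0 e := by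
  obtain ⟨P, hPpairs, hP, hPirr, hpP, hδ⟩ :=
    exists_isIrreducible_subset_translatedPairs hW hl e hw
  obtain ⟨v, hv, hmem⟩ := exists_ne_zero_forall_isClosed_mk_mem hP hPirr (i := none)
    (g := fun q o => o.elim q.2 fun c => d ⬝ᵥ (q.1.1.1 c - q.1.2.1 c)) (by fun_prop) hδ hpP
  have hy : (fun o => o.elim (y none) fun i => y (some i)) = y := by ext (_ | i) <;> rfl
  refine ⟨v, hv, fun c => ?_, -∑ c, v (some c) * ((∏ j with j < c, (y none - d ⬝ᵥ w j)) *
    ∏ j with c < j, (y none - d ⬝ᵥ w j)), ?_⟩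
  · exact hmem {θ | ((θ.1.1.1.1 c, θ.1.1.2.1 c), fun i j =>
        θ.2 (some c) * l i j - θ.2 none * (e i * d j)) ∈ doublePoints r T}
      (isClosed_setOf_mem isClosed_doublePoints (by fun_prop)) fun q hq hδ α =>
        mk_mem_doublePoints_of_mem_translatedPairs hW he (hPpairs hq) hδ d α c
  · have hslope := hmem {θ | ((fun o : Option (Fin r) => o.elim (y none) θ.1.1.2.2), θ.1.2,
        θ.2 none, -∑ c, θ.2 (some c) * ((∏ j with j < c, (y none - d ⬝ᵥ θ.1.1.1.1 j)) *
          ∏ j with c < j, (y none - d ⬝ᵥ θ.1.1.2.1 j))) ∈ slopeVariety s fun o => o.elim 0 e}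
      (isClosed_setOf_mem isClosed_slopeVariety (by fun_prop)) fun q hq hδ α =>
        hs.mk_mem_slopeVariety_of_mem_translatedPairs (hPpairs hq) hδ (y none) α
    rwa [Set.mem_ofPred_eq, hy] at hslope

-- If the limit direction had first coordinate `0`, two points in the fibres over `x` and
-- `x + δ • e` would collide at a point where `l` is ramified.
theorem IsNormForm.exists_mk_one_mem_slopeVariety (hs : IsNormForm W d s)
    (hW : IsFibreFamily l T W) (hl : IsFiniteProjection l T) (he : e ≠ 0) {y : Option (Fin r) → K}
    (hy : ∀ q ∈ T, (of l *ᵥ q = fun i => y (some i)) → ((q, q), l) ∉ doublePoints r T) :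
    ∃ ν, (y, 0, 1, ν) ∈ slopeVariety s fun o => o.elim 0 e := by
  obtain ⟨w, hw⟩ := hW.exists_mk_mem hl fun i => y (some i)
  obtain ⟨v, hv, hdouble, ν, hslope⟩ := hs.exists_limit_direction hW hl he hw
  have hμ : v none ≠ 0 := by
    intro hμ
    obtain ⟨c, hc⟩ : ∃ c, v (some c) ≠ 0 := by
      by_contra! h
      exact hv (funext (Option.rec hμ h))
    refine hy _ (hW.subset_fibredPower hw c).1 (hW.subset_fibredPower hw c).2
      (mem_doublePoints_of_smul_mem hc ?_)
    have h := hdouble c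
    simp only [hμ, zero_mul, sub_zero] at h
    exact h
  have hscaled := smul_mem_slopeVariety (v none)⁻¹ hslope
  rw [inv_mul_cancel₀ hμ] at hscaled
  exact ⟨_, hscaled⟩

theorem IsNormForm.eq_sum_update_none (hs : IsNormForm W d s) (hW : IsFibreFamily l T W)
    (hl : IsFiniteProjection l T) {t : Fin (k + 1) → K} (ht : Function.Injective t)
    (y : Option (Fin r) → K) :
    s y = ∑ j, (Lagrange.basis Finset.univ t j).eval (y none) *
      s (Function.update y none (t j)) := by
  obtain ⟨w, hw⟩ := hW.exists_mk_mem hl fun i => y (some i)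
  let Q : Polynomial K := ∏ c, (Polynomial.X - Polynomial.C (d ⬝ᵥ w c))
  have hQ (a : K) : Q.eval a = s (Function.update y none a) := by
    rw [hs _ w (by simpa using hw)]
    simp [Q, Polynomial.eval_prod]
  have hdegree : Q.degree < (Finset.univ : Finset (Fin (k + 1))).card := by
    simp only [Q, Polynomial.degree_prod, Polynomial.degree_X_sub_C, Finset.sum_const,
      Finset.card_univ, Fintype.card_fin, nsmul_eq_mul, mul_one]
    exact_mod_cast k.lt_succ_self
  have hinterpolate : Q.eval (y none) = _ := congrArg (Polynomial.eval (y none))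
    (Lagrange.eq_interpolate (s := Finset.univ) (v := t) ht.injOn hdegree)
  rw [hQ, Function.update_eq_self, Lagrange.interpolate_apply,
    Polynomial.eval_finsetSum] at hinterpolate
  simpa only [Polynomial.eval_mul, Polynomial.eval_C, hQ, mul_comm] using hinterpolate

theorem closure_image_mulVec_doublePoints_ne_univ (hT : HasDim r T)
    (hl : ∃ q ∈ T, ((q, q), l) ∉ doublePoints r T) :
    closure ((of l *ᵥ ·) '' {q ∈ T | ((q, q), l) ∈ doublePoints r T}) ≠ Set.univ := by
  obtain ⟨q, hqT, hq⟩ := hl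
  have hdouble : IsClosed {q : ι → K | ((q, q), l) ∈ doublePoints r T} :=
    isClosed_setOf_mem isClosed_doublePoints (by fun_prop)
  exact closure_image_ne_univ_of_ssubset
    (by simpa only [dim_pi, dim_base, Fintype.card_fin, mul_one] using hT)
    (hT.isClosed.inter hdouble) ⟨Set.inter_subset_left, fun h => hq (h hqT).2⟩ (by fun_prop)

theorem IsNormForm.exists_isClosed_slope_ne (hs : IsNormForm W d s) (hsm : IsMorphism s)
    (hW : IsFibreFamily l T W) (hl : IsFiniteProjection l T)
    (hram : ∃ q ∈ T, ((q, q), l) ∉ doublePoints r T) (he : e ≠ 0) :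
    ∃ B, IsClosed B ∧ B ≠ Set.univ ∧
      ∀ y ∉ B, (y, 0, 0, 1) ∉ slopeVariety s fun o => o.elim 0 e := by
  let R := closure ((of l *ᵥ ·) '' {q ∈ T | ((q, q), l) ∈ doublePoints r T})
  have hR : IsClosed {y : Option (Fin r) → K | (fun i => y (some i)) ∈ R} :=
    isClosed_setOf_mem isClosed_closure (by fun_prop)
  have hRne : {y : Option (Fin r) → K | (fun i => y (some i)) ∈ R} ≠ Set.univ := by
    obtain ⟨x, hx⟩ := (Set.ne_univ_iff_exists_notMem _).1
      (closure_image_mulVec_doublePoints_ne_univ hl.hasDim hram)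
    exact (Set.ne_univ_iff_exists_notMem _).2 ⟨fun o => o.elim 0 x, hx⟩
  obtain ⟨y₀, hy₀, hy₀R⟩ := exists_notMem_notMem isClosed_indeterminateSlopes hR
    (indeterminateSlopes_ne_univ hsm) hRne
  refine ⟨_, isClosed_indeterminateSlopes.union hR, (Set.ne_univ_iff_exists_notMem _).2
    ⟨y₀, fun h => h.elim hy₀ hy₀R⟩, fun y hy hslope => ?_⟩
  obtain ⟨ν, hν⟩ := hs.exists_mk_one_mem_slopeVariety hW hl he (y := y) fun q hq hqy hqdouble =>
    hy (.inr (subset_closure ⟨q, ⟨hq, hqdouble⟩, hqy⟩))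
  simpa using mul_eq_one_of_mem_slopeVariety hsm (fun h => hy (.inl h)) hslope hν

theorem IsNormForm.exists_eval_eq (hs : IsNormForm W d s) (hsm : IsMorphism s)
    (hom : ∀ (c : K) y, s (c • y) = c ^ k * s y) (hW : IsFibreFamily l T W)
    (hl : IsFiniteProjection l T) (hram : ∃ q ∈ T, ((q, q), l) ∉ doublePoints r T) :
    ∃ P : MvPolynomial (Option (Fin r)) K, ∀ y, MvPolynomial.eval y P = s y := by
  have := infinite_base (K := K)
  let t (i : Fin (k + 1)) : K := Infinite.natEmbedding K i
  have ht : Function.Injective t := (Infinite.natEmbedding K).injective.comp Fin.val_injective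
  refine exists_eval_eq_of_forall_eq_sum (t := t) (B := Lagrange.basis Finset.univ t) ?_
  rintro (_ | i) y
  · exact hs.eq_sum_update_none hW hl ht y
  · obtain ⟨B, hB, hBne, hslope⟩ := hs.exists_isClosed_slope_ne hsm hW hl hram
      (e := Pi.single i 1) (Pi.single_ne_zero_iff.2 one_ne_zero)
    have hline (a : K) : Function.update y (some i) 0 +
        a • (fun o : Option (Fin r) => o.elim 0 (Pi.single i 1 : Fin r → K)) =
        Function.update y (some i) a := by
      ext (_ | j)
      · simp
      · obtain rfl | hj := eq_or_ne j i
        · simp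
        · simp [hj]
    simpa only [hline, Function.update_eq_self] using
      apply_add_smul_eq_sum_basis hsm hom hB hBne hslope ht (Function.update y (some i) 0)
        (y (some i))

end NormForm

section Separation

open Matrix MvPolynomial

variable {K : Type u} [Field K] [HasZariskiGeometry K] {ι : Type} [Fintype ι]

theorem exists_forall_dotProduct_ne_zero {J : Type*} [Finite J] {v : J → ι → K}
    (hv : ∀ i, v i ≠ 0) : ∃ d : ι → K, ∀ i, d ⬝ᵥ v i ≠ 0 := by
  classical
  have := infinite_base (K := K)
  obtain ⟨φ, hφ⟩ := Module.exists_dual_forall_apply_ne_zero (K := K) v hv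
  refine ⟨fun j => φ fun i => if j = i then 1 else 0, fun i => ?_⟩
  have h := hφ i
  rw [LinearMap.pi_apply_eq_sum_univ φ] at h
  simpa only [dotProduct, smul_eq_mul, mul_comm] using h

variable [RefinesZariski K] {T : Set (ι → K)}

theorem IsNormForm.apply_eq_zero_of_mem {r k : ℕ} {l : Fin r → ι → K}
    {W : Set ((Fin k → ι → K) × (Fin r → K))} {d : ι → K} {s : (Option (Fin r) → K) → K}
    (hs : IsNormForm W d s) (hsm : IsMorphism s) (hW : IsFibreFamily l T W)
    (hl : IsFiniteProjection l T) {q : ι → K} (hq : q ∈ T) :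
    s (fun o => o.elim (d ⬝ᵥ q) (of l *ᵥ q)) = 0 := by
  obtain ⟨B, hB, hBne, hWB⟩ := hW.exists_isClosed
  have hdominant : closure ((of l *ᵥ ·) '' T) = Set.univ := DimGE.eq_univ <| by
    simpa only [dim_pi, dim_base, Fintype.card_fin, mul_one] using
      hl.hasDim.1.closure_image_of_finite_fibres (f := (of l *ᵥ ·)) (by fun_prop) hl.finite_fibre
  refine subset_of_isIrreducible_of_forall_notMem hl.hasDim.isIrreducible
    (F := {q : ι → K | of l *ᵥ q ∈ B}) (isClosed_setOf_mem hB (by fun_prop))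
    (fun h => hBne (Set.eq_univ_of_forall (mem_of_closure_image_eq_univ hdominant hB h)))
    (C := {q : ι → K | s (fun o => o.elim (d ⬝ᵥ q) (of l *ᵥ q)) = 0})
    (isClosed_setOf_eq (by fun_prop) (by fun_prop)) (fun q hq hqB => ?_) hq
  obtain ⟨w, hw⟩ := hW.exists_mk_mem hl (of l *ᵥ q)
  obtain ⟨c, rfl⟩ : q ∈ Set.range w := (hWB _ hw hqB).2.symm.subset ⟨hq, rfl⟩
  rw [Set.mem_ofPred_eq, hs _ w hw]
  exact Finset.prod_eq_zero (Finset.mem_univ c) (sub_self _)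

theorem exists_eval_eq_zero_eval_ne_zero_of_smul_mem (hT : IsClosed T) (hTirr : IsIrreducible T)
    (hcone : ∀ c : K, ∀ q ∈ T, c • q ∈ T) {p : ι → K} (hp : p ∉ T) :
    ∃ P : MvPolynomial ι K, (∀ q ∈ T, eval q P = 0) ∧ eval p P ≠ 0 := by
  obtain ⟨r, hr⟩ := exists_hasDim hT hTirr
  obtain ⟨l, hl, hram⟩ := exists_isFiniteProjection_notMem_doublePoints hr hcone
  obtain ⟨k, W, hW⟩ := hl.exists_isFibreFamily
  have := (hl.finite_fibre (of l *ᵥ p)).to_subtype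
  obtain ⟨d, hd⟩ := exists_forall_dotProduct_ne_zero
    (v := fun q : {q ∈ T | of l *ᵥ q = of l *ᵥ p} => p - q.1)
    fun q h => hp (sub_eq_zero.1 h ▸ q.2.1)
  obtain ⟨s, hsm, hs, hom⟩ := hW.exists_isNormForm hl d
  obtain ⟨P, hP⟩ := hs.exists_eval_eq hsm hom hW hl hram
  let f (o : Option (Fin r)) : MvPolynomial ι K :=
    o.elim (∑ j, C (d j) * X j) fun i => ∑ j, C (l i j) * X j
  have hf (q : ι → K) : eval q (bind₁ f P) = s fun o => o.elim (d ⬝ᵥ q) (of l *ᵥ q) := by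
    rw [← hP]
    refine (eval₂Hom_bind₁ _ _ _ _).trans (congrArg (fun y => eval y P) ?_)
    ext (_ | i) <;> simp [f, dotProduct, mulVec]
  refine ⟨bind₁ f P, fun q hq => (hf q).trans (hs.apply_eq_zero_of_mem hsm hW hl hq), ?_⟩
  obtain ⟨w, hw⟩ := hW.exists_mk_mem hl (of l *ᵥ p)
  rw [hf, hs _ w hw]
  refine Finset.prod_ne_zero_iff.2 fun c _ => ?_
  simpa only [dotProduct_sub, Option.elim] using hd ⟨w c, hW.subset_fibredPower hw c⟩

end Separation

section Homogenization

open MvPolynomial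

variable {K : Type u} [Field K] {ι : Type}

/-- The point `t • (1, q)` of the line through `(1, q)`, where `none` indexes the homogenizing
coordinate. -/
def homogenize (q : ι → K) (t : K) : Option ι → K := fun o => o.elim t fun i => t * q i

theorem smul_homogenize (c t : K) (q : ι → K) : c • homogenize q t = homogenize q (c * t) := by
  ext (_ | i)
  · rfl
  · exact (mul_assoc c t (q i)).symm

theorem mul_homogenize_some_of_mul_eq_one {q : ι → K} {t u : K} (h : t * u = 1) :
    (fun i => u * homogenize q t (some i)) = q := by
  ext i
  change u * (t * q i) = q i
  rw [← mul_assoc, mul_comm u, h, one_mul]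

variable [HasZariskiGeometry K] [Fintype ι]

/-- The closed cone over the copy of `T` in the affine hyperplane where the homogenizing coordinate
is `1`. -/
def closedCone (T : Set (ι → K)) : Set (Option ι → K) :=
  closure ((fun q : (ι → K) × K => homogenize q.1 q.2) '' (T ×ˢ Set.univ))

variable {T : Set (ι → K)} {p : ι → K}

theorem homogenize_mem_closedCone {q : ι → K} (hq : q ∈ T) (t : K) :
    homogenize q t ∈ closedCone T :=
  subset_closure ⟨(q, t), ⟨hq, trivial⟩, rfl⟩

variable [RefinesZariski K]

theorem isMorphism_homogenize : IsMorphism fun q : (ι → K) × K => homogenize q.1 q.2 := by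
  unfold homogenize
  fun_prop

theorem isIrreducible_closedCone (hTirr : IsIrreducible T) : IsIrreducible (closedCone T) :=
  ((isIrreducible_prod hTirr isIrreducible_univ).image _
    isMorphism_homogenize.continuous.continuousOn).closure

theorem smul_mem_closedCone (c : K) {v : Option ι → K} (hv : v ∈ closedCone T) :
    c • v ∈ closedCone T := by
  refine closure_minimal (t := {v | c • v ∈ closedCone T}) ?_
    (isClosed_setOf_mem isClosed_closure (by fun_prop)) hv
  rintro _ ⟨⟨q, t⟩, ⟨hq, -⟩, rfl⟩
  rw [Set.mem_ofPred_eq, smul_homogenize]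
  exact homogenize_mem_closedCone hq _

-- Where the homogenizing coordinate is invertible, the cone lies over `T` generically, hence
-- everywhere.
theorem mem_of_homogenize_one_mem_closedCone (hT : IsClosed T) (hTirr : IsIrreducible T)
    (hp : homogenize p 1 ∈ closedCone T) : p ∈ T := by
  obtain ⟨F, hF, hFcone, hFimage⟩ := exists_isClosed_closure_image_diff_subset
    (isClosed_prod hT isClosed_univ) (isIrreducible_prod hTirr isIrreducible_univ).nonempty
    (isMorphism_homogenize (K := K) (ι := ι))
  obtain ⟨n, hn⟩ := exists_hasDim isClosed_closure (isIrreducible_closedCone hTirr)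
  obtain ⟨S, hS, hpS, hScone, hSinv⟩ := exists_dimGE_subset_eqOn_base (n := n)
    (f := fun q : (Option ι → K) × K => q.1 none * q.2) (g := fun _ => 1)
    (by fun_prop) (by fun_prop) (hn.1.prod dimGE_univ_base) (p := (homogenize p 1, 1))
    ⟨hp, trivial⟩ (mul_one _)
  have hinv {q} (hq : q ∈ S) : q.1 none * q.2 = 1 := hSinv hq
  have hinj : Set.InjOn Prod.fst S := fun q hq q' hq' h =>
    Prod.ext h (mul_left_cancel₀ (left_ne_zero_of_mul_eq_one (hinv hq))
      ((hinv hq).trans (by rw [h, hinv hq'])))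
  have hdense : closure (Prod.fst '' S) = closedCone T :=
    hn.eq_of_subset (hS.closure_image_of_injOn (by fun_prop) hinj)
      (closure_minimal (by rintro _ ⟨q, hq, rfl⟩; exact (hScone hq).1) isClosed_closure)
  have hSF : ¬ S ⊆ {q | q.1 ∈ F} := fun h => hFcone <| hdense.symm.subset.trans <|
    closure_minimal (by rintro _ ⟨q, hq, rfl⟩; exact h hq) hF
  have hgeneric := subset_of_isIrreducible_of_forall_notMem hS.isIrreducible
    (isClosed_setOf_mem hF (by fun_prop)) hSF
    (C := {q : (Option ι → K) × K | (fun i => q.2 * q.1 (some i)) ∈ T})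
    (isClosed_setOf_mem hT (by fun_prop)) fun ⟨v, u⟩ hq hqF => by
      obtain ⟨⟨q, t⟩, ⟨hqT, -⟩, rfl⟩ := hFimage _ (hScone hq).1 hqF
      have hqu : (fun i => u * homogenize q t (some i)) = q :=
        mul_homogenize_some_of_mul_eq_one (hinv hq)
      rwa [← hqu] at hqT
  have hpT : (fun i => 1 * homogenize p 1 (some i)) ∈ T := hgeneric hpS
  rwa [mul_homogenize_some_of_mul_eq_one (one_mul 1)] at hpT

theorem exists_eval_eq_zero_eval_ne_zero (hT : IsClosed T) (hTirr : IsIrreducible T)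
    (hp : p ∉ T) : ∃ P : MvPolynomial ι K, (∀ q ∈ T, eval q P = 0) ∧ eval p P ≠ 0 := by
  obtain ⟨P, hPT, hPp⟩ := exists_eval_eq_zero_eval_ne_zero_of_smul_mem (T := closedCone T)
    isClosed_closure (isIrreducible_closedCone hTirr) (fun c v => smul_mem_closedCone c)
    fun h => hp (mem_of_homogenize_one_mem_closedCone hT hTirr h)
  let f (o : Option ι) : MvPolynomial ι K := o.elim 1 X
  have hf (q : ι → K) : eval q (bind₁ f P) = eval (homogenize q 1) P := by
    refine (eval₂Hom_bind₁ _ _ _ _).trans (congrArg (fun y => eval y P) ?_)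
    ext (_ | i) <;> simp [f, homogenize]
  exact ⟨bind₁ f P, fun q hq => (hf q).trans (hPT _ (homogenize_mem_closedCone hq 1)),
    (hf p).symm ▸ hPp⟩

theorem zariskiClosedSet_of_isClosed {n : ℕ} {C : Set (Fin n → K)} (hC : IsClosed C) :
    ZariskiClosedSet K C := by
  refine ⟨{f | ∀ x ∈ C, eval x f = 0}, Set.Subset.antisymm (fun x hx f hf => hf x hx) ?_⟩
  intro p hp
  by_contra hpC
  obtain ⟨S, hSfin, hSclosed, hSirr, rfl⟩ :=
    NoetherianSpace.exists_finite_set_isClosed_irreducible hC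
  have hseparate (T : S) : ∃ P : MvPolynomial (Fin n) K,
      (∀ q ∈ T.1, eval q P = 0) ∧ eval p P ≠ 0 :=
    exists_eval_eq_zero_eval_ne_zero (hSclosed T T.2) (hSirr T T.2) fun h => hpC ⟨T, T.2, h⟩
  choose P hPT hPp using hseparate
  have := hSfin.fintype
  have hprod : eval p (∏ T, P T) = 0 := hp _ <| by
    rintro x ⟨T, hT, hx⟩
    rw [map_prod]
    exact Finset.prod_eq_zero (Finset.mem_univ ⟨T, hT⟩) (hPT ⟨T, hT⟩ x hx)
  rw [map_prod] at hprod
  exact Finset.prod_ne_zero_iff.2 (fun T _ => hPp T) hprod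

end Homogenization

theorem isClosed_of_isClosed_geometry {K : Type u} [HasZariskiGeometry K] {n : ℕ}
    {C : Set (Fin n → K)} (hC : IsClosed[(geometry : ZariskiGeometry K).τ n] C) : IsClosed C := by
  have hpreimage := @IsClosed.preimage _ _ (_) (_) _
    (geometry.Z0_cont (dim (Fin n → K)) n fun i =>
      .inl (finProdFinEquiv (Fintype.equivFin (Fin n) i, (0 : Fin 1)))) C hC
  have hid (x : Fin n → K) :
      (fun i => coord x (finProdFinEquiv (Fintype.equivFin (Fin n) i, (0 : Fin 1)))) = x :=
    funext fun i => coord_pi x i 0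
  exact (@isClosed_induced_iff _ _ (_) C coord).2
    ⟨_, hpreimage, Set.ext fun x => iff_of_eq (congrArg (· ∈ C) (hid x))⟩

theorem τ_eq_zariskiTopology {K : Type u} [Field K] {n : ℕ} (Z : ZariskiGeometry K)
    (h : ∀ C : Set (Fin n → K), IsClosed[Z.τ n] C ↔ ZariskiClosedSet K C) :
    Z.τ n = zariskiTopology K n := by
  refine le_antisymm (le_generateFrom fun U hU => ?_) fun U hU => ?_
  · exact (@isClosed_compl_iff _ (Z.τ n) U).1 ((h _).2 hU)
  · exact isOpen_generateFrom_of_mem ((h _).1 ((@isClosed_compl_iff _ (Z.τ n) U).2 hU))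

end ZariskiGeometry

theorem zariski_geometry_refining_zariski_topology_coincides_general
    {K : Type*} [Field K] (Z : ZariskiGeometry K)
    (hrefine : ∀ (n : ℕ) (C : Set (Fin n → K)), ZariskiClosedSet K C → IsClosed[Z.τ n] C) :
    ∀ (n : ℕ), (∀ C : Set (Fin n → K), IsClosed[Z.τ n] C → ZariskiClosedSet K C) ∧
      Z.τ n = zariskiTopology K n := by
  intro n
  let _ : ZariskiGeometry.HasZariskiGeometry K := ⟨Z⟩
  have : ZariskiGeometry.RefinesZariski K := ⟨hrefine⟩
  have hclosed (C : Set (Fin n → K)) (hC : IsClosed[Z.τ n] C) : ZariskiClosedSet K C :=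
    ZariskiGeometry.zariskiClosedSet_of_isClosed (ZariskiGeometry.isClosed_of_isClosed_geometry hC)
  exact ⟨hclosed, Z.τ_eq_zariskiTopology fun C => ⟨hclosed C, hrefine n C⟩⟩

/-- **Theorem 3** (affine rendering): if `K` is an algebraically closed field and `(τ_n)`
is a Zariski geometry on `K` refining the Zariski topology (every Zariski-closed subset
of `K^n` is `τ_n`-closed), then every `τ_n`-closed set is Zariski-closed; the two
topologies coincide on every power `K^n`. -/
theorem zariski_geometry_refining_zariski_topology_coincides
    {K : Type*} [Field K] [IsAlgClosed K] (Z : ZariskiGeometry K)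
    (hrefine : ∀ (n : ℕ) (C : Set (Fin n → K)), ZariskiClosedSet K C → IsClosed[Z.τ n] C) :
    ∀ (n : ℕ), (∀ C : Set (Fin n → K), IsClosed[Z.τ n] C → ZariskiClosedSet K C) ∧
      Z.τ n = zariskiTopology K n :=
  zariski_geometry_refining_zariski_topology_coincides_general Z hrefine
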